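/- arXiv:2511.19138 — 3 statements merged into one kernel-verified Lean document; each statement's English description precedes it below -/
import Mathlib

section
/- A graph G is a quasi-banana graph if and only if G is gonality-tight and there exists a vertex v ∈ V(G) such that the divisor D = v + Σ_{w∈V(G)} w realises the second gonality of G (i.e. D has rank 2 and degree gon_2(G)). -/
open Finset

variable {V : Type*} [Fintype V] [DecidableEq V]

/-- A finite loopless multigraph on vertex type `V`, given by symmetric edge multiplicities. -/
structure Multigraph (V : Type*) [Fintype V] [DecidableEq V] where
  mult : V → V → ℕ
  symm : ∀ u v, mult u v = mult v u
  loopless : ∀ v, mult v v = 0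

namespace Multigraph

def Adj (G : Multigraph V) (u v : V) : Prop := 0 < G.mult u v

/-- A graph is connected. -/
def Connected (G : Multigraph V) : Prop :=
  Nonempty V ∧ ∀ u v : V, Relation.ReflTransGen G.Adj u v

/-- Valence of a vertex. -/
def valence (G : Multigraph V) (v : V) : ℕ := ∑ u, G.mult v u

/-- The Laplacian applied to an integer-valued function on the vertices. -/
def laplacian (G : Multigraph V) (f : V → ℤ) : V → ℤ :=
  fun w => ∑ u, (G.mult w u : ℤ) * (f w - f u)

/-- Degree of a divisor. -/
def degree (D : V → ℤ) : ℤ := ∑ v, D v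

/-- A divisor is effective if all coefficients are nonnegative. -/
def Effective (D : V → ℤ) : Prop := ∀ v, 0 ≤ D v

/-- Linear equivalence of divisors: they differ by a sequence of chip-firing moves,
equivalently by a Laplacian of an integer function. -/
def LinEquiv (G : Multigraph V) (D D' : V → ℤ) : Prop :=
  ∃ f : V → ℤ, D' = D - G.laplacian f

/-- A divisor is winnable if it is linearly equivalent to an effective divisor. -/
def Winnable (G : Multigraph V) (D : V → ℤ) : Prop :=
  ∃ E : V → ℤ, Effective E ∧ G.LinEquiv D E

/-- The Baker–Norine rank of a divisor: the largest `r` such that `D - E` is winnable for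
every effective divisor `E` of degree `r` (the defining set contains all negative integers,
and its supremum is `-1` precisely when `D` itself is not winnable). -/
noncomputable def rank (G : Multigraph V) (D : V → ℤ) : ℤ :=
  sSup {r : ℤ | ∀ E : V → ℤ, Effective E → degree E = r → G.Winnable (fun w => D w - E w)}

/-- The `k`-th gonality of a graph: the smallest degree of a divisor of rank `k`. -/
noncomputable def gonality (G : Multigraph V) (k : ℤ) : ℤ :=
  sInf {d : ℤ | ∃ D : V → ℤ, G.rank D = k ∧ degree D = d}

/-- A graph is gonality-tight if its second gonality exceeds its first by exactly 1. -/
def GonalityTight (G : Multigraph V) : Prop :=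
  G.gonality 2 = G.gonality 1 + 1

/-- A divisor realises the `k`-th gonality if it has rank `k` and degree `gon_k(G)`. -/
def Realises (G : Multigraph V) (k : ℤ) (D : V → ℤ) : Prop :=
  G.rank D = k ∧ degree D = G.gonality k

/-- A divisor is `v`-reduced: nonnegative away from `v`, and set-firing any nonempty set of
vertices not containing `v` creates a negative coefficient inside the set. -/
def Reduced (G : Multigraph V) (v : V) (D : V → ℤ) : Prop :=
  (∀ w, w ≠ v → 0 ≤ D w) ∧
    ∀ U : Finset V, U.Nonempty → v ∉ U →
      ∃ w ∈ U, D w - ∑ u ∈ Uᶜ, (G.mult w u : ℤ) < 0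

/-- The genus (first Betti number) of a graph: `|E| - |V| + 1`. -/
def genus (G : Multigraph V) : ℤ :=
  ((∑ u, ∑ v, G.mult u v : ℕ) : ℤ) / 2 - Fintype.card V + 1

/-- The canonical divisor of a graph. -/
def canonical (G : Multigraph V) : V → ℤ :=
  fun w => (G.valence w : ℤ) - 2

/-- The subgraph induced on a set `S` of vertices (with all edges among `S`). -/
def induce (G : Multigraph V) (S : Finset V) : Multigraph {x // x ∈ S} where
  mult a b := G.mult a b
  symm a b := G.symm a b
  loopless a := G.loopless a

/-- `G.SeparatedBy u w v` means every path from `w` to `v` passes through `u`. -/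
def SeparatedBy (G : Multigraph V) (u w v : V) : Prop :=
  ¬ Relation.ReflTransGen (fun x y => G.Adj x y ∧ x ≠ u ∧ y ≠ u) w v

end Multigraph

/-- Size of the `i`-th level of a quasi-banana graph: level `0` has a single vertex. -/
def qbSize (q : ℕ → ℕ) (i : ℕ) : ℕ := if i = 0 then 1 else q i

/-- `ℓ` is a quasi-banana labelling of `G` exhibiting `G ≅ QB_m(q_1, …, q_m)`:
`ℓ` is a bijection onto the pairs `(i, j)` with `i ≤ m`, `1 ≤ j ≤ qbSize q i`
(vertex `u_{i,j}` is the vertex labelled `(i,j)`), and the edge multiplicities are: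
one edge between distinct vertices of the same level, `(∑_{k=1}^{i} q_k) + 2` edges
between `u_{i,1}` and each `u_{i+1,j}`, and no other edges. -/
def Multigraph.IsQBLabelling (G : Multigraph V) (m : ℕ) (q : ℕ → ℕ) (ℓ : V → ℕ × ℕ) : Prop :=
  (∀ i, 1 ≤ i → i ≤ m → 0 < q i) ∧
  Function.Injective ℓ ∧
  (∀ v : V, (ℓ v).1 ≤ m ∧ 1 ≤ (ℓ v).2 ∧ (ℓ v).2 ≤ qbSize q (ℓ v).1) ∧
  (∀ i j : ℕ, i ≤ m → 1 ≤ j → j ≤ qbSize q i → ∃ v, ℓ v = (i, j)) ∧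
  (∀ v w : V, v ≠ w → G.mult v w =
    if (ℓ v).1 = (ℓ w).1 then 1
    else if (ℓ v).1 + 1 = (ℓ w).1 ∧ (ℓ v).2 = 1 then (∑ i ∈ Finset.Icc 1 (ℓ v).1, q i) + 2
    else if (ℓ w).1 + 1 = (ℓ v).1 ∧ (ℓ w).2 = 1 then (∑ i ∈ Finset.Icc 1 (ℓ w).1, q i) + 2
    else 0)

/-- A graph is a quasi-banana graph if it is isomorphic to some `QB_m(N)`. -/
def Multigraph.IsQuasiBanana (G : Multigraph V) : Prop :=
  ∃ (m : ℕ) (q : ℕ → ℕ) (ℓ : V → ℕ × ℕ), G.IsQBLabelling m q ℓ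

/-- The graph obtained from `G'` by attaching a complete graph `K_n`: `n` new vertices
pairwise joined by exactly one edge, each joined to `v` by exactly `k+1` edges. -/
def attachComplete (G' : Multigraph V) (v : V) (k n : ℕ) : Multigraph (V ⊕ Fin n) where
  mult x y :=
    match x, y with
    | Sum.inl a, Sum.inl b => G'.mult a b
    | Sum.inl a, Sum.inr _ => if a = v then k + 1 else 0
    | Sum.inr _, Sum.inl b => if b = v then k + 1 else 0
    | Sum.inr i, Sum.inr j => if i = j then 0 else 1
  symm := by
    rintro (a | i) (b | j)
    · exact G'.symm a b
    · rfl
    · rfl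
    · by_cases h : i = j
      · simp [h]
      · simp [h, Ne.symm h]
  loopless := by
    rintro (a | i)
    · exact G'.loopless a
    · simp


set_option linter.unusedSectionVars false

namespace Multigraph

/-- Indicator function of a set. -/
def ind (M : Finset V) : V → ℤ := fun w => if w ∈ M then 1 else 0

theorem lap_neg (G : Multigraph V) (f : V → ℤ) (w : V) :
    G.laplacian (fun x => - f x) w = - G.laplacian f w := by
  simp only [laplacian, ← Finset.sum_neg_distrib]
  exact Finset.sum_congr rfl fun u _ => by ring

theorem lap_add (G : Multigraph V) (f g : V → ℤ) (w : V) :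
    G.laplacian (fun x => f x + g x) w = G.laplacian f w + G.laplacian g w := by
  simp only [laplacian, ← Finset.sum_add_distrib]
  exact Finset.sum_congr rfl fun u _ => by ring

theorem lap_sub (G : Multigraph V) (f g : V → ℤ) (w : V) :
    G.laplacian (fun x => f x - g x) w = G.laplacian f w - G.laplacian g w := by
  simp only [laplacian, ← Finset.sum_sub_distrib]
  exact Finset.sum_congr rfl fun u _ => by ring

theorem lap_zero (G : Multigraph V) (w : V) : G.laplacian (fun _ => 0) w = 0 := by
  simp [laplacian]

theorem lap_sum (G : Multigraph V) (f : V → ℤ) : ∑ w, G.laplacian f w = 0 := by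
  have h : ∑ w, G.laplacian f w = - ∑ w, G.laplacian f w := by
    conv_lhs => simp only [laplacian]
    rw [Finset.sum_comm]
    simp only [laplacian, ← Finset.sum_neg_distrib]
    refine Finset.sum_congr rfl fun u _ => Finset.sum_congr rfl fun w _ => ?_
    rw [G.symm w u]; ring
  linarith

theorem lap_mono (G : Multigraph V) (f g : V → ℤ) (w : V)
    (h : ∀ u, G.mult w u = 0 ∨ f w - f u ≤ g w - g u) :
    G.laplacian f w ≤ G.laplacian g w := by
  simp only [laplacian]
  refine Finset.sum_le_sum fun u _ => ?_
  rcases h u with h | h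
  · simp [h]
  · exact mul_le_mul_of_nonneg_left h (by positivity)

theorem lap_ind_mem (G : Multigraph V) (M : Finset V) (w : V) (hw : w ∈ M) :
    G.laplacian (ind M) w = ∑ u ∈ Mᶜ, (G.mult w u : ℤ) := by
  simp only [laplacian, ind, hw, if_true]
  rw [← Finset.sum_filter_add_sum_filter_not Finset.univ (fun u => u ∈ M)]
  rw [Finset.sum_eq_zero, zero_add]
  · refine Finset.sum_congr (by ext; simp) fun u hu => ?_
    have : u ∉ M := by simpa using hu
    simp [this]
  · intro u hu
    have : u ∈ M := by simpa using hu
    simp [this]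

theorem lap_ind_not_mem (G : Multigraph V) (M : Finset V) (w : V) (hw : w ∉ M) :
    G.laplacian (ind M) w = - ∑ u ∈ M, (G.mult w u : ℤ) := by
  simp only [laplacian, ind, hw, if_false]
  rw [← Finset.sum_filter_add_sum_filter_not Finset.univ (fun u => u ∈ M)]
  rw [add_comm, Finset.sum_eq_zero, zero_add, ← Finset.sum_neg_distrib]
  · refine Finset.sum_congr (by ext; simp) fun u hu => ?_
    simp [hu]
  · intro u hu
    have : u ∉ M := by simpa using hu
    simp [this]

theorem lap_ind_nonpos (G : Multigraph V) (M : Finset V) (w : V) (hw : w ∉ M) :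
    G.laplacian (ind M) w ≤ 0 := by
  rw [lap_ind_not_mem G M w hw]
  have : (0 : ℤ) ≤ ∑ u ∈ M, (G.mult w u : ℤ) := Finset.sum_nonneg fun _ _ => by positivity
  linarith

theorem lap_ind_nonneg (G : Multigraph V) (M : Finset V) (w : V) (hw : w ∈ M) :
    0 ≤ G.laplacian (ind M) w := by
  rw [lap_ind_mem G M w hw]
  exact Finset.sum_nonneg fun _ _ => by positivity

/-- A cut edge contributes to the outdegree. -/
theorem mult_le_lap_ind (G : Multigraph V) (M : Finset V) (w u : V) (hw : w ∈ M) (hu : u ∉ M) :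
    (G.mult w u : ℤ) ≤ G.laplacian (ind M) w := by
  rw [lap_ind_mem G M w hw]
  exact Finset.single_le_sum (f := fun u => (G.mult w u : ℤ)) (fun _ _ => by positivity)
    (by simpa using hu)

theorem lap_ind_le_neg_mult (G : Multigraph V) (M : Finset V) (w u : V) (hw : w ∉ M)
    (hu : u ∈ M) : G.laplacian (ind M) w ≤ - (G.mult w u : ℤ) := by
  rw [lap_ind_not_mem G M w hw]
  have := Finset.single_le_sum (f := fun u => (G.mult w u : ℤ)) (fun _ _ => by positivity) hu
  linarith

theorem lap_ind_le (G : Multigraph V) (M : Finset V) (f : V → ℤ) (w : V) (hw : w ∈ M)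
    (h : ∀ u, G.mult w u = 0 ∨ (u ∈ M ∧ f u ≤ f w) ∨ (u ∉ M ∧ f u < f w)) :
    G.laplacian (ind M) w ≤ G.laplacian f w := by
  apply lap_mono
  intro u
  rcases h u with h | ⟨h, h'⟩ | ⟨h, h'⟩
  · exact Or.inl h
  · right; simp [ind, hw, h]; linarith
  · right; simp [ind, hw, h]; linarith

theorem exists_cut (G : Multigraph V) (hG : G.Connected) (M : Finset V) (hM : M.Nonempty)
    (hM' : M ≠ Finset.univ) : ∃ a ∈ M, ∃ b, b ∉ M ∧ 0 < G.mult a b := by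
  by_contra hcon
  push Not at hcon
  obtain ⟨x, hx⟩ := hM
  apply hM'
  ext y
  simp only [Finset.mem_univ, iff_true]
  induction hG.2 x y with
  | refl => exact hx
  | tail _ hab ih =>
    by_contra hb
    have := hcon _ ih _ hb
    simp only [Adj] at hab
    omega

/-- `E` is an effective divisor equivalent to `D`. -/
def EffEq (G : Multigraph V) (D E : V → ℤ) : Prop :=
  (∀ w, 0 ≤ E w) ∧ ∃ f : V → ℤ, ∀ w, E w = D w - G.laplacian f w

theorem winnable_iff (G : Multigraph V) (D : V → ℤ) :
    G.Winnable D ↔ ∃ f : V → ℤ, ∀ w, 0 ≤ D w - G.laplacian f w := by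
  constructor
  · rintro ⟨E, hE, f, hf⟩
    refine ⟨f, fun w => ?_⟩
    have := hE w
    rw [hf] at this
    simpa using this
  · rintro ⟨f, hf⟩
    exact ⟨D - G.laplacian f, fun w => by simpa using hf w, f, rfl⟩

theorem Winnable.degree_nonneg {G : Multigraph V} {D : V → ℤ} (h : G.Winnable D) :
    0 ≤ degree D := by
  rw [winnable_iff] at h
  obtain ⟨f, hf⟩ := h
  have := Finset.sum_nonneg (s := Finset.univ) fun w _ => hf w
  rw [Finset.sum_sub_distrib, lap_sum] at this
  simpa [degree] using this

theorem Winnable.mono {G : Multigraph V} {D D' : V → ℤ} (h : G.Winnable D)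
    (hD : ∀ w, D w ≤ D' w) : G.Winnable D' := by
  rw [winnable_iff] at *
  obtain ⟨f, hf⟩ := h
  exact ⟨f, fun w => by linarith [hf w, hD w]⟩

theorem winnable_of_effective (G : Multigraph V) {D : V → ℤ} (h : ∀ w, 0 ≤ D w) :
    G.Winnable D := by
  rw [winnable_iff]
  exact ⟨fun _ => 0, fun w => by rw [lap_zero]; linarith [h w]⟩

/-- A single chip. -/
def chip (x : V) : V → ℤ := fun w => if w = x then 1 else 0

theorem chip_nonneg (x w : V) : 0 ≤ chip x w := by
  unfold chip; split_ifs <;> norm_num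

theorem degree_chip (x : V) : degree (chip x) = 1 := by
  simp [degree, chip]

theorem degree_sub (D E : V → ℤ) : degree (fun w => D w - E w) = degree D - degree E := by
  simp [degree, Finset.sum_sub_distrib]

theorem degree_add (D E : V → ℤ) : degree (fun w => D w + E w) = degree D + degree E := by
  simp [degree, Finset.sum_add_distrib]

theorem degree_mul (c : ℤ) (E : V → ℤ) : degree (fun w => c * E w) = c * degree E := by
  simp [degree, Finset.mul_sum]

theorem le_rank_iff (G : Multigraph V) [Nonempty V] (D : V → ℤ) (r : ℤ) :
    r ≤ G.rank D ↔
      ∀ E : V → ℤ, Effective E → degree E = r → G.Winnable (fun w => D w - E w) := by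
  set R := {r : ℤ | ∀ E : V → ℤ, Effective E → degree E = r →
    G.Winnable (fun w => D w - E w)} with hR
  obtain ⟨x⟩ := ‹Nonempty V›
  have hbdd : BddAbove R := by
    refine ⟨max (degree D) 0, fun r hr => ?_⟩
    by_contra hlt
    push Not at hlt
    have h1 : degree D < r := lt_of_le_of_lt (le_max_left _ _) hlt
    have h0 : 0 < r := lt_of_le_of_lt (le_max_right _ _) hlt
    have := (hr (fun w => r * chip x w) (fun w => mul_nonneg h0.le (chip_nonneg _ _))
      (by rw [degree_mul, degree_chip, mul_one])).degree_nonneg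
    rw [degree_sub, degree_mul, degree_chip] at this
    linarith
  have hneg : (-1 : ℤ) ∈ R := by
    intro E hE hd
    have : 0 ≤ degree E := Finset.sum_nonneg fun w _ => hE w
    omega
  have hmem : G.rank D ∈ R := Int.csSup_mem ⟨_, hneg⟩ hbdd
  constructor
  · intro hr E hE hd
    have h := hmem (fun w => E w + (G.rank D - r) * chip x w)
      (fun w => add_nonneg (hE w) (mul_nonneg (by linarith) (chip_nonneg _ _)))
      (by rw [degree_add, degree_mul, degree_chip, hd]; ring)
    refine h.mono fun w => ?_
    have := mul_nonneg (sub_nonneg.2 hr) (chip_nonneg x w)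
    linarith
  · intro h
    exact le_csSup hbdd h

theorem le_rank_sub (G : Multigraph V) [Nonempty V] (D E : V → ℤ) (r : ℤ) (hE : Effective E)
    (h : r ≤ G.rank D) : r - degree E ≤ G.rank (fun w => D w - E w) := by
  rw [le_rank_iff] at *
  intro F hF hd
  have := h (fun w => E w + F w) (fun w => add_nonneg (hE w) (hF w)) (by rw [degree_add]; omega)
  simpa [sub_sub] using this

theorem one_le_rank_iff (G : Multigraph V) [Nonempty V] (D : V → ℤ) :
    1 ≤ G.rank D ↔ ∀ x, G.Winnable (fun w => D w - chip x w) := by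
  rw [le_rank_iff]
  constructor
  · intro h x
    exact h _ (chip_nonneg x) (degree_chip x)
  · intro h E hE hd
    have : ∃ x, 1 ≤ E x := by
      by_contra hcon
      push Not at hcon
      have : degree E = 0 := Finset.sum_eq_zero fun w _ => by
        have := hE w; have := hcon w; omega
      omega
    obtain ⟨x, hx⟩ := this
    have hEx : ∀ w, chip x w ≤ E w := by
      intro w
      unfold chip
      split_ifs with h
      · rw [h]; exact hx
      · exact hE w
    have heq : ∀ w ∈ Finset.univ, E w = chip x w := by
      have := (Finset.sum_eq_sum_iff_of_le (s := Finset.univ) (f := chip x) (g := E)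
        fun w _ => hEx w).1 (by
          have h1 := degree_chip x
          unfold degree at h1 hd
          rw [h1, hd])
      intro w hw
      exact (this w hw).symm
    exact (h x).mono fun w => by rw [heq w (Finset.mem_univ _)]

theorem le_degree_of_le_rank (G : Multigraph V) [Nonempty V] (D : V → ℤ) (k : ℤ) (hk : 0 ≤ k)
    (h : k ≤ G.rank D) : k ≤ degree D := by
  obtain ⟨x⟩ := ‹Nonempty V›
  have : Nonempty V := ⟨x⟩
  rw [le_rank_iff] at h
  have := (h (fun w => k * chip x w) (fun w => mul_nonneg hk (chip_nonneg _ _))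
      (by rw [degree_mul, degree_chip, mul_one])).degree_nonneg
  rw [degree_sub, degree_mul, degree_chip] at this
  linarith

theorem exists_rank_eq (G : Multigraph V) [Nonempty V] (k : ℤ) (hk : 0 ≤ k) (n : ℕ) :
    ∀ D : V → ℤ, k ≤ G.rank D → degree D ≤ n →
      ∃ D' : V → ℤ, G.rank D' = k ∧ degree D' ≤ degree D := by
  obtain ⟨x⟩ := ‹Nonempty V›
  have : Nonempty V := ⟨x⟩
  induction n with
  | zero =>
    intro D hD hd
    refine ⟨D, ?_, le_rfl⟩
    have := le_degree_of_le_rank G D _ (hk.trans hD) le_rfl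
    simp at hd
    omega
  | succ n ih =>
    intro D hD hd
    by_cases hr : G.rank D = k
    · exact ⟨D, hr, le_rfl⟩
    have hlt : k + 1 ≤ G.rank D := by omega
    have h1 := le_rank_sub G D (chip x) (k + 1) (chip_nonneg x) hlt
    rw [degree_chip] at h1
    obtain ⟨D', h2, h3⟩ := ih (fun w => D w - chip x w) (by omega)
      (by rw [degree_sub, degree_chip]; push_cast at hd; omega)
    rw [degree_sub, degree_chip] at h3
    exact ⟨D', h2, by omega⟩

theorem gonality_bdd (G : Multigraph V) [Nonempty V] (k : ℤ) (hk : 0 ≤ k) :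
    BddBelow {d : ℤ | ∃ D : V → ℤ, G.rank D = k ∧ degree D = d} := by
  refine ⟨k, ?_⟩
  rintro d ⟨D, hD, rfl⟩
  exact le_degree_of_le_rank G D k hk hD.ge

theorem gonality_le (G : Multigraph V) [Nonempty V] (D : V → ℤ) (k : ℤ) (hk : 0 ≤ k)
    (h : k ≤ G.rank D) : G.gonality k ≤ degree D := by
  obtain ⟨D', h1, h2⟩ := exists_rank_eq G k hk (degree D).toNat D h (Int.self_le_toNat _)
  exact (csInf_le (gonality_bdd G k hk) ⟨D', h1, rfl⟩).trans h2

theorem gonality_attained (G : Multigraph V) [Nonempty V] (D : V → ℤ) (k : ℤ) (hk : 0 ≤ k)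
    (h : k ≤ G.rank D) : ∃ D' : V → ℤ, G.rank D' = k ∧ degree D' = G.gonality k := by
  obtain ⟨D', h1, h2⟩ := exists_rank_eq G k hk (degree D).toNat D h (Int.self_le_toNat _)
  exact Int.csInf_mem (s := {d : ℤ | ∃ D : V → ℤ, G.rank D = k ∧ degree D = d})
    ⟨_, D', h1, rfl⟩ (gonality_bdd G k hk)

/-- Every divisor of positive rank has degree at least the number of vertices. -/
def BigGon (G : Multigraph V) : Prop :=
  ∀ D : V → ℤ, (∀ x, G.Winnable (fun w => D w - chip x w)) → (Fintype.card V : ℤ) ≤ degree D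

/-- The divisor `v + ∑ w`. -/
def base (v : V) : V → ℤ := fun w => chip v w + 1

theorem degree_base (v : V) : degree (base v) = Fintype.card V + 1 := by
  unfold base
  rw [degree_add, degree_chip]
  simp [degree]; ring

/-- Every vertex can receive two chips. -/
def TwoChips (G : Multigraph V) (v : V) : Prop :=
  ∀ x, G.Winnable (fun w => base v w - 2 * chip x w)

theorem two_le_rank_base (G : Multigraph V) [Nonempty V] (v : V) (h : G.TwoChips v) :
    2 ≤ G.rank (base v) := by
  rw [le_rank_iff]
  intro E hE hd
  by_cases hx : ∃ x, 2 ≤ E x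
  · obtain ⟨x, hx⟩ := hx
    have hEx : ∀ w, 2 * chip x w ≤ E w := by
      intro w
      unfold chip
      split_ifs with h
      · rw [h]; simpa using hx
      · simpa using hE w
    have := (Finset.sum_eq_sum_iff_of_le (s := Finset.univ) (f := fun w => 2 * chip x w) (g := E)
        fun w _ => hEx w).1 (by
          have h1 := degree_mul 2 (chip x)
          rw [degree_chip] at h1
          unfold degree at h1 hd
          rw [h1, hd]; rfl)
    exact (h x).mono fun w => by rw [this w (Finset.mem_univ _)]
  · push Not at hx
    apply winnable_of_effective
    intro w
    have := hx w
    have := chip_nonneg v w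
    simp only [base]
    omega

theorem tight_iff (G : Multigraph V) (hG : G.Connected) :
    (G.GonalityTight ∧ ∃ v : V, G.Realises 2 (fun w => (if w = v then 1 else 0) + 1)) ↔
      G.BigGon ∧ ∃ v, G.TwoChips v := by
  have := hG.1
  constructor
  · rintro ⟨ht, v, hr, hd⟩
    change G.rank (base v) = 2 at hr
    change degree (base v) = _ at hd
    rw [degree_base, ht] at hd
    refine ⟨fun D hD => ?_, v, fun x => ?_⟩
    · rw [← one_le_rank_iff] at hD
      have := gonality_le G D 1 (by norm_num) hD
      omega
    · exact (le_rank_iff G _ 2).1 hr.ge (fun w => 2 * chip x w)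
        (fun w => mul_nonneg (by norm_num) (chip_nonneg _ _))
        (by rw [degree_mul, degree_chip]; norm_num)
  · rintro ⟨hB, v, hv⟩
    have h2 := two_le_rank_base G v hv
    have hbig : ∀ D : V → ℤ, ∀ k, 1 ≤ k → k ≤ G.rank D →
        (Fintype.card V : ℤ) + (k - 1) ≤ degree D := by
      intro D k hk hD
      have h1 := le_rank_sub G D (fun w => (k - 1) * chip v w) k
        (fun w => mul_nonneg (by linarith) (chip_nonneg _ _)) hD
      rw [degree_mul, degree_chip] at h1
      have h3 := hB _ ((one_le_rank_iff G _).1 (by linarith))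
      rw [degree_sub, degree_mul, degree_chip] at h3
      linarith
    have hg2 : G.gonality 2 = Fintype.card V + 1 := by
      apply le_antisymm
      · rw [← degree_base v]
        exact gonality_le G _ 2 (by norm_num) h2
      · obtain ⟨D', h3, h4⟩ := gonality_attained G _ 2 (by norm_num) h2
        have := hbig D' 2 (by norm_num) h3.ge
        omega
    have hone : 1 ≤ G.rank (fun _ : V => (1 : ℤ)) := by
      rw [one_le_rank_iff]
      intro x
      apply winnable_of_effective
      intro w
      unfold chip; split_ifs <;> norm_num
    have hg1 : G.gonality 1 = Fintype.card V := by
      apply le_antisymm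
      · have := gonality_le G _ 1 (by norm_num) hone
        simpa [degree] using this
      · obtain ⟨D', h3, h4⟩ := gonality_attained G _ 1 (by norm_num) hone
        have := hbig D' 1 (by norm_num) h3.ge
        omega
    refine ⟨by unfold GonalityTight; rw [hg1, hg2], v, ?_, ?_⟩
    · change G.rank (base v) = 2
      apply le_antisymm _ h2
      by_contra hlt
      have := hbig (base v) 3 (by norm_num) (by omega)
      rw [degree_base] at this
      omega
    · change degree (base v) = _
      rw [degree_base, hg2]

end Multigraph

namespace Multigraph

/-- The set where `f` is maximal. -/
def top (f : V → ℤ) : Finset V := Finset.univ.filter (fun w => ∀ u, f u ≤ f w)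

theorem mem_top (f : V → ℤ) (w : V) : w ∈ top f ↔ ∀ u, f u ≤ f w := by
  simp [top]

theorem top_nonempty [Nonempty V] (f : V → ℤ) : (top f).Nonempty := by
  obtain ⟨x, hx⟩ := Finite.exists_max f
  exact ⟨x, (mem_top f x).2 hx⟩

theorem lt_of_not_mem_top (f : V → ℤ) {w u : V} (hw : w ∈ top f) (hu : u ∉ top f) :
    f u < f w := by
  rw [mem_top] at hw hu
  by_contra h
  exact hu fun x => (hw x).trans (by linarith)

theorem lap_top_le (G : Multigraph V) (f : V → ℤ) (w : V) (hw : w ∈ top f) :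
    G.laplacian (ind (top f)) w ≤ G.laplacian f w := by
  apply lap_ind_le G _ f w hw
  intro u
  by_cases hu : u ∈ top f
  · exact Or.inr (Or.inl ⟨hu, (mem_top f w).1 hw u⟩)
  · exact Or.inr (Or.inr ⟨hu, lt_of_not_mem_top f hw hu⟩)

theorem lap_inj (G : Multigraph V) (hG : G.Connected) (p : V) (f g : V → ℤ) (hp : f p = g p)
    (h : ∀ w, G.laplacian f w = G.laplacian g w) : f = g := by
  have := hG.1
  have htop : top (fun x => f x - g x) = Finset.univ := by
    by_contra hne
    obtain ⟨a, ha, b, hb, hab⟩ := exists_cut G hG _ (top_nonempty _) hne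
    have h1 := lap_top_le G _ a ha
    have h2 := mult_le_lap_ind G _ a b ha hb
    rw [lap_sub, h a] at h1
    have : (0 : ℤ) < G.mult a b := by exact_mod_cast hab
    linarith
  funext x
  have h1 := (mem_top (fun x => f x - g x) x).1 (by rw [htop]; simp) p
  have h2 := (mem_top (fun x => f x - g x) p).1 (by rw [htop]; simp) x
  linarith

/-- No nonempty set avoiding `p` can be fired. -/
def Red (G : Multigraph V) (p : V) (D : V → ℤ) : Prop :=
  ∀ U : Finset V, U.Nonempty → p ∉ U → ∃ w ∈ U, D w < G.laplacian (ind U) w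

theorem exists_reduced (G : Multigraph V) (hG : G.Connected) (p : V) (D : V → ℤ)
    (hD : ∀ w, 0 ≤ D w) :
    ∃ f : V → ℤ, (∀ w, 0 ≤ D w - G.laplacian f w) ∧ G.Red p (fun w => D w - G.laplacian f w) := by
  set T := {f : V → ℤ | f p = 0 ∧ ∀ w, 0 ≤ D w - G.laplacian f w} with hT
  have hfin : T.Finite := by
    apply Set.Finite.of_finite_image (f := fun f => fun w => D w - G.laplacian f w)
    · apply (Set.finite_Icc (0 : V → ℤ) (fun _ => degree D)).subset
      rintro E ⟨f, ⟨_, hf⟩, rfl⟩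
      refine ⟨hf, fun w => ?_⟩
      have h1 := Finset.single_le_sum (f := fun w => D w - G.laplacian f w)
        (fun w _ => hf w) (Finset.mem_univ w)
      rw [Finset.sum_sub_distrib, lap_sum] at h1
      simpa [degree] using h1
    · intro f hf g hg hfg
      apply lap_inj G hG p f g (hf.1.trans hg.1.symm)
      intro w
      have := congrFun hfg w
      simp only at this
      linarith
  have hne : T.Nonempty := ⟨fun _ => 0, rfl, fun w => by rw [lap_zero]; linarith [hD w]⟩
  obtain ⟨f, hf, hmax⟩ := Set.exists_max_image T (fun f => ∑ w, f w) hfin hne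
  refine ⟨f, hf.2, fun U hU hp => ?_⟩
  by_contra hcon
  push Not at hcon
  have hmem : (fun x => f x + ind U x) ∈ T := by
    refine ⟨by simp [hf.1, ind, hp], fun w => ?_⟩
    rw [lap_add]
    by_cases hw : w ∈ U
    · linarith [hcon w hw]
    · linarith [lap_ind_nonpos G U w hw, hf.2 w]
  have := hmax _ hmem
  simp only [Finset.sum_add_distrib] at this
  have h2 : ∑ w, ind U w = (U.card : ℤ) := by simp [ind]
  have h3 : 0 < U.card := hU.card_pos
  rw [h2] at this
  omega

theorem winnable_shift (G : Multigraph V) (D : V → ℤ) (f : V → ℤ) (E : V → ℤ)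
    (h : G.Winnable (fun w => D w - E w)) :
    G.Winnable (fun w => D w - G.laplacian f w - E w) := by
  rw [winnable_iff] at *
  obtain ⟨g, hg⟩ := h
  refine ⟨fun x => g x - f x, fun w => ?_⟩
  rw [lap_sub]
  linarith [hg w]

theorem Red.mem_top {G : Multigraph V} [Nonempty V] {p : V} {D : V → ℤ} (h : G.Red p D)
    (f : V → ℤ) (hf : ∀ w, 0 ≤ D w - G.laplacian f w) : p ∈ top f := by
  by_contra hp
  obtain ⟨w, hw, hlt⟩ := h _ (top_nonempty f) hp
  linarith [lap_top_le G f w hw, hf w]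

/-- If `H` is attached to the rest only through `p`, firing functions are at most `f p` on `H`. -/
theorem Red.le_on {G : Multigraph V} {p r : V} {D : V → ℤ} (h : G.Red r D)
    (f : V → ℤ) (hf : ∀ w, 0 ≤ D w - G.laplacian f w) (H : Finset V) (hr : r ∉ H) 
    (hH : ∀ w ∈ H, ∀ u, u ∉ H → u ≠ p → G.mult w u = 0) :
    ∀ w ∈ H, f w ≤ f p := by
  by_contra hcon
  push Not at hcon
  obtain ⟨x, hx, hxp⟩ := hcon
  obtain ⟨y, hy, hmax⟩ := Finset.exists_max_image H f ⟨x, hx⟩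
  set U := H.filter (fun w => f w = f y) with hU
  obtain ⟨w, hw, hlt⟩ := h U ⟨y, by simp [hU, hy]⟩ (by simp [hU, hr])
  have hwH : w ∈ H := (Finset.mem_filter.1 hw).1
  have hwy : f w = f y := (Finset.mem_filter.1 hw).2
  have : G.laplacian (ind U) w ≤ G.laplacian f w := by
    apply lap_ind_le G U f w hw
    intro u
    by_cases huU : u ∈ U
    · right; left
      exact ⟨huU, by rw [hwy]; exact hmax u (Finset.mem_filter.1 huU).1⟩
    · by_cases huH : u ∈ H
      · right; right
        refine ⟨huU, lt_of_le_of_ne (by rw [hwy]; exact hmax u huH) fun heq => huU ?_⟩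
        simp [hU, huH, heq, hwy]
      · by_cases hup : u = p
        · right; right
          refine ⟨huU, ?_⟩
          rw [hup, hwy]
          exact hxp.trans_le (hmax x hx)
        · left
          exact hH w hwH u huH hup
  linarith [hf w]

section QB

variable {G : Multigraph V} {m : ℕ} {q : ℕ → ℕ} {ℓ : V → ℕ × ℕ}

theorem card_level (h : G.IsQBLabelling m q ℓ) (i : ℕ) (hi : i ≤ m) :
    (Finset.univ.filter (fun w => (ℓ w).1 = i)).card = qbSize q i := by
  obtain ⟨hq, hinj, hb, hs, hm⟩ := h
  have : (Finset.univ.filter (fun w => (ℓ w).1 = i)).card = (Finset.Icc 1 (qbSize q i)).card := by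
    apply Finset.card_bij (fun w _ => (ℓ w).2)
    · intro w hw
      have hw : (ℓ w).1 = i := by simpa using hw
      have := hb w
      rw [hw] at this
      simp [this.2]
    · intro a ha b hb' hab
      have ha : (ℓ a).1 = i := by simpa using ha
      have hb' : (ℓ b).1 = i := by simpa using hb'
      exact hinj (Prod.ext (ha.trans hb'.symm) hab)
    · intro j hj
      have hj := Finset.mem_Icc.1 hj
      obtain ⟨v, hv⟩ := hs i j hi hj.1 hj.2
      exact ⟨v, by simp [hv], by simp [hv]⟩
  rw [this]; simp

theorem card_le_level (h : G.IsQBLabelling m q ℓ) (i : ℕ) (hi : i ≤ m) :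
    (Finset.univ.filter (fun w => (ℓ w).1 ≤ i)).card = (∑ k ∈ Finset.Icc 1 i, q k) + 1 := by
  induction i with
  | zero =>
    have := card_level h 0 hi
    simpa [qbSize] using this
  | succ i ih =>
    have h1 := ih (by omega)
    have h2 := card_level h (i + 1) hi
    rw [Finset.sum_Icc_succ_top (by omega)]
    have : (Finset.univ.filter (fun w => (ℓ w).1 ≤ i + 1)) =
        (Finset.univ.filter (fun w => (ℓ w).1 ≤ i)) ∪
          (Finset.univ.filter (fun w => (ℓ w).1 = i + 1)) := by
      ext w; simp; omega
    rw [this, Finset.card_union_of_disjoint, h1, h2]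
    · simp [qbSize]; ring
    · rw [Finset.disjoint_filter]; intros; omega

theorem qb_base (h : G.IsQBLabelling m q ℓ) (v : V) (hv : ℓ v = (0, 1)) (i : ℕ) :
    ∀ x, (ℓ x).1 = i → ∃ f : V → ℤ, ∀ w, w ≠ x →
      base v w - G.laplacian f w = if i < (ℓ w).1 then 1 else 0 := by
  have h' := h
  obtain ⟨hq, hinj, hb, hs, hm⟩ := h'
  have hz : ∀ w, (ℓ w).1 = 0 → w = v := by
    intro w hw
    have := hb w
    apply hinj
    rw [hv]
    simp only [hw, qbSize, if_true] at this
    exact Prod.ext hw (by simp; omega)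
  induction i with
  | zero =>
    intro x hx
    refine ⟨fun _ => 0, fun w hw => ?_⟩
    have hxv := hz x hx
    have : (ℓ w).1 ≠ 0 := fun h0 => hw ((hz w h0).trans hxv.symm)
    rw [lap_zero, if_pos (by omega)]
    simp [base, chip, ← hxv, hw]
  | succ i ih =>
    intro x hx
    have hxm := (hb x).1
    obtain ⟨p, hp⟩ := hs i 1 (by omega) le_rfl (by
      unfold qbSize; split_ifs with h0
      · exact le_rfl
      · exact hq i (by omega) (by omega))
    obtain ⟨f, hf⟩ := ih p (by rw [hp])
    -- the number of chips at `p`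
    have hfp : base v p - G.laplacian f p = (∑ k ∈ Finset.Icc 1 i, q k : ℕ) + 2 := by
      have h1 : ∑ w, (base v w - G.laplacian f w) = Fintype.card V + 1 := by
        rw [Finset.sum_sub_distrib, lap_sum, ← degree_base v]; simp [degree]
      rw [← Finset.add_sum_erase _ _ (Finset.mem_univ p)] at h1
      rw [Finset.sum_congr rfl (g := fun w => if i < (ℓ w).1 then (1 : ℤ) else 0)
        (fun w hw => hf w (by simpa using hw))] at h1
      have h2 : ∑ w ∈ Finset.univ.erase p, (if i < (ℓ w).1 then (1 : ℤ) else 0) =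
          ((Finset.univ.filter (fun w => ¬ (ℓ w).1 ≤ i)).card : ℤ) := by
        rw [Finset.sum_erase]
        · simp
        · simp [hp]
      rw [h2] at h1
      have h3 := Finset.card_filter_add_card_filter_not (s := (Finset.univ : Finset V))
        (fun w => (ℓ w).1 ≤ i)
      rw [card_le_level h i (by omega), Finset.card_univ] at h3
      rw [← h3] at h1
      push_cast at h1 ⊢
      linarith
    set M := Finset.univ.filter (fun w => w ≠ x ∧ ((ℓ w).1 ≤ i + 1 ∨ (ℓ x).2 ≠ 1)) with hM
    have hlm : ∀ w ∈ M, G.laplacian (ind M) w = G.mult w x := by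
      intro w hw
      rw [lap_ind_mem G M w hw]
      apply Finset.sum_eq_single_of_mem x (by simp [hM])
      intro u hu hux
      have hw' : w ≠ x ∧ ((ℓ w).1 ≤ i + 1 ∨ (ℓ x).2 ≠ 1) := by simpa [hM] using hw
      have hu' : i + 1 < (ℓ u).1 ∧ (ℓ x).2 = 1 := by
        simp only [hM, Finset.mem_compl, Finset.mem_filter, Finset.mem_univ, true_and] at hu
        push Not at hu
        exact hu hux
      have hwu : w ≠ u := by rintro rfl; omega
      have hwx : ¬ ((ℓ w).1 = i + 1 ∧ (ℓ w).2 = 1) := fun hh => hw'.1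
        (hinj (Prod.ext (hh.1.trans hx.symm) (hh.2.trans hu'.2.symm)))
      rw [hm w u hwu, if_neg (by omega), if_neg (by omega), if_neg (by omega)]
      simp
    have hln : ∀ w, w ∉ M → w ≠ x → G.laplacian (ind M) w = 0 := by
      intro w hw hwx
      rw [lap_ind_not_mem G M w hw, neg_eq_zero]
      apply Finset.sum_eq_zero
      intro u hu
      have hu' : u ≠ x ∧ ((ℓ u).1 ≤ i + 1 ∨ (ℓ x).2 ≠ 1) := by simpa [hM] using hu
      have hw' : i + 1 < (ℓ w).1 ∧ (ℓ x).2 = 1 := by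
        simp only [hM, Finset.mem_filter, Finset.mem_univ, true_and] at hw
        push Not at hw
        exact hw hwx
      have hwu : w ≠ u := by rintro rfl; omega
      have hux : ¬ ((ℓ u).1 = i + 1 ∧ (ℓ u).2 = 1) := fun hh => hu'.1
        (hinj (Prod.ext (hh.1.trans hx.symm) (hh.2.trans hw'.2.symm)))
      rw [hm w u hwu, if_neg (by omega), if_neg (by omega), if_neg (by omega)]
      simp
    refine ⟨fun y => f y + ind M y, fun w hwx => ?_⟩
    rw [lap_add]
    by_cases hwp : w = p
    · subst hwp
      have hwM : w ∈ M := by simp [hM, hwx, hp]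
      rw [hlm w hwM, hm w x hwx, hp, hx]
      simp
      push_cast at hfp
      linarith
    · have h1 := hf w hwp
      by_cases hwM : w ∈ M
      · have hw' : w ≠ x ∧ ((ℓ w).1 ≤ i + 1 ∨ (ℓ x).2 ≠ 1) := by simpa [hM] using hwM
        have hwp' : ¬ ((ℓ w).1 = i ∧ (ℓ w).2 = 1) := fun hh =>
          hwp (hinj (by rw [hp]; exact Prod.ext hh.1 hh.2))
        have h2 : (G.mult w x : ℤ) = if (ℓ w).1 = i + 1 then 1 else 0 := by
          rw [hm w x hwx, hx]
          by_cases hwi : (ℓ w).1 = i + 1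
          · simp [hwi]
          · rw [if_neg hwi, if_neg (by omega), if_neg (by omega), if_neg hwi]; simp
        rw [hlm w hwM, h2]
        have : base v w - (G.laplacian f w + if (ℓ w).1 = i + 1 then 1 else 0) =
          (if i < (ℓ w).1 then 1 else 0) - (if (ℓ w).1 = i + 1 then 1 else 0) := by
            rw [← h1]; ring
        rw [this]
        split_ifs <;> omega
      · have hw' : i + 1 < (ℓ w).1 ∧ (ℓ x).2 = 1 := by
          have hw := hwM
          simp only [hM, Finset.mem_filter, Finset.mem_univ, true_and] at hw
          push Not at hw
          exact hw hwx
        rw [hln w hwM hwx, if_pos hw'.1, add_zero, h1, if_pos (by omega)]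

theorem qb_twoChips (h : G.IsQBLabelling m q ℓ) : ∃ v, G.TwoChips v := by
  obtain ⟨v, hv⟩ := h.2.2.2.1 0 1 (by omega) le_rfl (by simp [qbSize])
  refine ⟨v, fun x => ?_⟩
  obtain ⟨f, hf⟩ := qb_base h v hv _ x rfl
  rw [winnable_iff]
  refine ⟨f, fun w => ?_⟩
  by_cases hw : w = x
  · subst hw
    have h1 : ∑ w, (base v w - G.laplacian f w) = Fintype.card V + 1 := by
      rw [Finset.sum_sub_distrib, lap_sum, ← degree_base v]; simp [degree]
    rw [← Finset.add_sum_erase _ _ (Finset.mem_univ w)] at h1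
    have h2 : ∑ u ∈ Finset.univ.erase w, (base v u - G.laplacian f u) ≤
        ∑ u ∈ Finset.univ.erase w, 1 := by
      apply Finset.sum_le_sum
      intro u hu
      rw [hf u (by simpa using hu)]
      split_ifs <;> norm_num
    have h3 : ((Finset.univ.erase w).card : ℤ) = Fintype.card V - 1 := by
      rw [Finset.card_erase_of_mem (Finset.mem_univ w), Finset.card_univ]
      have : 0 < Fintype.card V := Fintype.card_pos_iff.2 ⟨w⟩
      omega
    simp only [Finset.sum_const, nsmul_eq_mul, mul_one, h3] at h2
    simp only [chip, if_true]
    linarith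
  · have := hf w hw
    simp only [chip, if_neg hw]
    have h2 : (0 : ℤ) ≤ if (ℓ x).1 < (ℓ w).1 then 1 else 0 := by split_ifs <;> norm_num
    linarith

end QB

end Multigraph

namespace Multigraph

set_option maxHeartbeats 1000000 in
theorem qb_bigGon {G : Multigraph V} (hG : G.Connected) {m : ℕ} {q : ℕ → ℕ} {ℓ : V → ℕ × ℕ}
    (h : G.IsQBLabelling m q ℓ) : G.BigGon := by
  have hne := hG.1
  have h' := h
  obtain ⟨hq, hinj, hb, hs, hm⟩ := h'
  intro D hD
  obtain ⟨v, hv⟩ := hs 0 1 (by omega) le_rfl (by simp [qbSize])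
  have hz : ∀ w, (ℓ w).1 = 0 → w = v := by
    intro w hw
    have := hb w
    apply hinj
    rw [hv]
    simp only [hw, qbSize, if_true] at this
    exact Prod.ext hw (by simp; omega)
  -- an effective representative, reduced at `v`
  obtain ⟨f0, hf0⟩ := (winnable_iff G D).1 ((hD v).mono fun w => by linarith [chip_nonneg v w])
  obtain ⟨f1, hf1, hred1⟩ := exists_reduced G hG v _ hf0
  set D1 : V → ℤ := fun w => D w - G.laplacian f0 w - G.laplacian f1 w with hD1
  have hw1 : ∀ x, G.Winnable (fun w => D1 w - chip x w) := fun x =>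
    winnable_shift G _ f1 _ (winnable_shift G _ f0 _ (hD x))
  have hdeg1 : degree D1 = degree D := by
    simp [hD1, degree, Finset.sum_sub_distrib, lap_sum]
  have hv1 : 1 ≤ D1 v := by
    obtain ⟨g, hg⟩ := (winnable_iff G _).1 (hw1 v)
    have htop : v ∈ top g := hred1.mem_top g fun w => by
      have := hg w
      have := chip_nonneg v w
      simp only [hD1] at *
      linarith
    have h1 := lap_top_le G g v htop
    have h2 := lap_ind_nonneg G _ v htop
    have h3 := hg v
    simp only [chip, if_true] at h3
    linarith
  by_cases hall : ∀ w, 1 ≤ D1 w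
  · rw [← hdeg1]
    have : ∑ w : V, (1 : ℤ) ≤ degree D1 := Finset.sum_le_sum fun w _ => hall w
    simpa using this
  push Not at hall
  obtain ⟨y0, hy0⟩ := hall
  obtain ⟨y, hy, hymax⟩ := Finset.exists_max_image (Finset.univ.filter (fun w => D1 w < 1))
    (fun w => (ℓ w).1) ⟨y0, by simpa using hy0⟩
  have hy : D1 y < 1 := by simpa using hy
  have hyv : (ℓ y).1 ≠ 0 := fun h0 => by rw [hz y h0] at hy; linarith
  obtain ⟨i, hi⟩ : ∃ i, (ℓ y).1 = i + 1 := ⟨(ℓ y).1 - 1, by omega⟩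
  have him : i + 1 ≤ m := by rw [← hi]; exact (hb y).1
  have hhigh : ∀ w, i + 1 < (ℓ w).1 → 1 ≤ D1 w := by
    intro w hw
    by_contra hlt
    have := hymax w (by simpa using hlt)
    omega
  obtain ⟨p, hp⟩ := hs i 1 (by omega) le_rfl (by
      unfold qbSize; split_ifs with h0
      · exact le_rfl
      · exact hq i (by omega) (by omega))
  obtain ⟨g, hg, hred2⟩ := exists_reduced G hG p D1 hf1
  set D2 : V → ℤ := fun w => D1 w - G.laplacian g w with hD2
  have hw2 : ∀ x, G.Winnable (fun w => D2 w - chip x w) := fun x =>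
    winnable_shift G _ g _ (hw1 x)
  have hdeg2 : degree D2 = degree D := by
    rw [← hdeg1]
    simp [hD2, degree, Finset.sum_sub_distrib, lap_sum]
  set H := Finset.univ.filter (fun w => i + 1 ≤ (ℓ w).1) with hH
  have hHp : ∀ w ∈ H, ∀ u, u ∉ H → u ≠ p → G.mult w u = 0 := by
    intro w hw u hu hup
    have hw : i + 1 ≤ (ℓ w).1 := by simpa [hH] using hw
    have hu : (ℓ u).1 < i + 1 := by simpa [hH] using hu
    have hup' : ¬ ((ℓ u).1 = i ∧ (ℓ u).2 = 1) := fun hh =>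
      hup (hinj (by rw [hp]; exact Prod.ext hh.1 hh.2))
    rw [hm w u (by rintro rfl; omega), if_neg (by omega), if_neg (by omega), if_neg (by omega)]
  have hg1 : ∀ w ∈ H, g w ≤ g p := hred1.le_on g hg H (by simp [hH, hv]) hHp
  have hg2 : ∀ w ∈ H, -g w ≤ -g p := by
    refine hred2.le_on (fun x => - g x) (fun w => ?_) H (by simp [hH, hp]) hHp
    rw [lap_neg]
    simp only [hD2]
    linarith [hf1 w]
  have hgeq : ∀ w ∈ H, g w = g p := fun w hw => by linarith [hg1 w hw, hg2 w hw]
  have hD12 : ∀ w ∈ H, D2 w = D1 w := by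
    intro w hw
    have : G.laplacian g w = 0 := by
      apply Finset.sum_eq_zero
      intro u _
      by_cases hu : u ∈ H
      · rw [hgeq w hw, hgeq u hu]; simp
      · by_cases hup : u = p
        · rw [hup, hgeq w hw]; simp
        · rw [hHp w hw u hu hup]; simp
    simp [hD2, this]
  -- move a chip to `y`
  obtain ⟨f, hf⟩ := (winnable_iff G _).1 (hw2 y)
  have hpM : p ∈ top f := hred2.mem_top f fun w => by
    have := hf w
    have := chip_nonneg y w
    linarith
  have hyM : y ∉ top f := by
    intro hyM
    have h1 := lap_top_le G f y hyM
    have h2 := lap_ind_nonneg G _ y hyM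
    have h3 := hf y
    rw [hD12 y (by simp [hH, hi])] at h3
    simp only [chip, if_true] at h3
    linarith
  set M := top f with hM
  have hout : ∀ w ∈ M, ∑ u ∈ Mᶜ, (G.mult w u : ℤ) ≤ D2 w := by
    intro w hw
    have h1 := lap_top_le G f w hw
    rw [← hM, lap_ind_mem G M w hw] at h1
    have := hf w
    have := chip_nonneg y w
    linarith
  set C := Finset.univ.filter (fun w => (ℓ w).1 = i + 1) with hC
  set B := C.filter (fun w => w ∉ M) with hB
  set S := C.filter (fun w => w ∈ M) with hS
  set K := Finset.univ.filter (fun w => ¬ (ℓ w).1 ≤ i + 1) with hK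
  have hBsub : B ⊆ Mᶜ := fun w hw => by
    have := (Finset.mem_filter.1 hw).2
    simpa using this
  have hBout : ∀ w, ∑ u ∈ B, (G.mult w u : ℤ) ≤ ∑ u ∈ Mᶜ, (G.mult w u : ℤ) := fun w =>
    Finset.sum_le_sum_of_subset_of_nonneg hBsub fun _ _ _ => by positivity
  have hCB : ∀ u ∈ B, (ℓ u).1 = i + 1 := fun u hu => by
    simpa [hC] using (Finset.mem_filter.1 hu).1
  have hCS : ∀ u ∈ S, (ℓ u).1 = i + 1 := fun u hu => by
    simpa [hC] using (Finset.mem_filter.1 hu).1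
  have hcard := card_le_level h i (by omega)
  set s := ∑ k ∈ Finset.Icc 1 i, q k with hs'
  have hDp : (B.card : ℤ) * (s + 2) ≤ D2 p := by
    refine le_trans ?_ ((hBout p).trans (hout p hpM))
    rw [Finset.sum_congr rfl (g := fun _ => (s + 2 : ℤ))]
    · simp
    · intro u hu
      have hup : p ≠ u := by
        rintro rfl
        have := hCB _ hu
        rw [hp] at this; simp at this
      rw [hm p u hup, hp, hCB u hu]
      simp [hs']
  have hDS : ∀ z ∈ S, (B.card : ℤ) ≤ D2 z := by
    intro z hz
    have hzM : z ∈ M := (Finset.mem_filter.1 hz).2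
    refine le_trans ?_ ((hBout z).trans (hout z hzM))
    rw [Finset.sum_congr rfl (g := fun _ => (1 : ℤ))]
    · simp
    · intro u hu
      have hzu : z ≠ u := by
        rintro rfl
        exact (Finset.mem_filter.1 hu).2 hzM
      rw [hm z u hzu, hCB u hu, hCS z hz]
      simp
  have hDK : ∀ z ∈ K, (1 : ℤ) ≤ D2 z := by
    intro z hz
    have hz : i + 1 < (ℓ z).1 := by simpa [hK] using hz
    rw [hD12 z (by rw [hH, Finset.mem_filter]; exact ⟨Finset.mem_univ _, by omega⟩)]
    exact hhigh z hz
  have hpS : p ∉ S := fun hpS => by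
    have := hCS p hpS
    rw [hp] at this; simp at this
  have hSK : Disjoint S K := by
    rw [Finset.disjoint_left]
    intro w hw hw'
    have := hCS w hw
    have : i + 1 < (ℓ w).1 := by simpa [hK] using hw'
    omega
  have hpSK : p ∉ S ∪ K := by
    simp [hpS, hK, hp]
  have hsum : D2 p + (∑ z ∈ S, D2 z + ∑ z ∈ K, D2 z) ≤ degree D2 := by
    rw [← Finset.sum_union hSK, ← Finset.sum_insert hpSK]
    exact Finset.sum_le_sum_of_subset_of_nonneg (Finset.subset_univ _) fun w _ _ => hg w
  have hS1 : (S.card : ℤ) * B.card ≤ ∑ z ∈ S, D2 z := by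
    have := Finset.sum_le_sum hDS
    simpa using this
  have hK1 : (K.card : ℤ) ≤ ∑ z ∈ K, D2 z := by
    have := Finset.sum_le_sum hDK
    simpa using this
  have hcardC : C.card = S.card + B.card :=
    (Finset.card_filter_add_card_filter_not (s := C) (fun w => w ∈ M)).symm
  have hcardV : Fintype.card V = s + 1 + C.card + K.card := by
    have h3 := Finset.card_filter_add_card_filter_not (s := (Finset.univ : Finset V))
        (fun w => (ℓ w).1 ≤ i + 1)
    rw [Finset.card_univ] at h3
    have : (Finset.univ.filter (fun w => (ℓ w).1 ≤ i + 1)) =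
        (Finset.univ.filter (fun w => (ℓ w).1 ≤ i)) ∪ C := by
      ext w; simp [hC]; omega
    rw [this, Finset.card_union_of_disjoint, hcard] at h3
    · exact h3.symm
    · rw [Finset.disjoint_filter]; intros; omega
  have hBpos : 1 ≤ B.card := Finset.card_pos.2 ⟨y, by simp [hB, hC, hi, hyM]⟩
  rw [← hdeg2, hcardV, hcardC]
  push_cast
  have hBpos' : (1 : ℤ) ≤ B.card := by exact_mod_cast hBpos
  have hS0 : (0 : ℤ) ≤ S.card := by positivity
  have hs0 : (0 : ℤ) ≤ s := by positivity
  nlinarith [mul_nonneg (sub_nonneg.2 hBpos') hS0, mul_nonneg (sub_nonneg.2 hBpos') hs0]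

end Multigraph

namespace Multigraph

/-- If every divisor of positive rank is big, no set can be fired with outdegrees at most one. -/
theorem BigGon.exists_two_le {G : Multigraph V} (hG : G.Connected) (hB : G.BigGon)
    (M : Finset V) (hM : M.Nonempty) (hM' : M ≠ Finset.univ) :
    ∃ w ∈ M, 2 ≤ G.laplacian (ind M) w := by
  by_contra hcon
  push Not at hcon
  obtain ⟨a, ha, b, hb, hab⟩ := exists_cut G hG M hM hM'
  have := hB (fun w => 1 - chip b w) (by
    intro x
    by_cases hx : x = b
    · subst hx
      rw [winnable_iff]
      refine ⟨ind M, fun w => ?_⟩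
      by_cases hw : w ∈ M
      · have h1 := hcon w hw
        have h2 : w ≠ x := fun h => hb (h ▸ hw)
        simp only [chip, if_neg h2]
        linarith
      · by_cases hwx : w = x
        · subst hwx
          have h1 := lap_ind_le_neg_mult G M w a hw ha
          rw [G.symm] at h1
          have : (1 : ℤ) ≤ G.mult a w := by exact_mod_cast hab
          simp only [chip, if_true]
          linarith
        · have h1 := lap_ind_nonpos G M w hw
          simp only [chip, if_neg hwx]
          linarith
    · apply winnable_of_effective
      intro w
      unfold chip
      by_cases h1 : w = b
      · have : w ≠ x := fun h => hx (h ▸ h1)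
        simp [h1, Ne.symm hx]
      · rw [if_neg h1]; split_ifs <;> norm_num)
  rw [degree_sub, degree_chip] at this
  simp [degree] at this

theorem BigGon.no_pair {G : Multigraph V} (hB : G.BigGon) {v a b : V} (hab : a ≠ b)
    {E F : V → ℤ} (hE : G.EffEq (base v) E) (hF : G.EffEq (base v) F)
    (h1 : 2 ≤ E a) (h2 : 1 ≤ E b) (h3 : 2 ≤ F b) (h4 : 1 ≤ F a) : False := by
  have := hB (fun w => base v w - chip a w - chip b w) (by
    intro x
    by_cases hxa : x = a
    · subst hxa
      obtain ⟨hE0, f, hf⟩ := hE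
      rw [winnable_iff]
      refine ⟨f, fun w => ?_⟩
      have h5 := hf w
      have h6 := hE0 w
      by_cases hwa : w = x
      · subst hwa
        simp only [chip, if_true, if_neg hab]
        linarith
      · by_cases hwb : w = b
        · subst hwb
          simp only [chip, if_true, if_neg hwa]
          linarith
        · simp only [chip, if_neg hwa, if_neg hwb]
          linarith
    · by_cases hxb : x = b
      · subst hxb
        obtain ⟨hE0, f, hf⟩ := hF
        rw [winnable_iff]
        refine ⟨f, fun w => ?_⟩
        have h5 := hf w
        have h6 := hE0 w
        by_cases hwa : w = x
        · subst hwa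
          simp only [chip, if_true, if_neg hxa]
          linarith
        · by_cases hwb : w = a
          · subst hwb
            simp only [chip, if_true, if_neg hwa]
            linarith
          · simp only [chip, if_neg hwa, if_neg hwb]
            linarith
      · apply winnable_of_effective
        intro w
        have := chip_nonneg v w
        simp only [base]
        have : chip a w + chip b w + chip x w ≤ 1 := by
          unfold chip
          by_cases hwa : w = a
          · subst hwa; simp [hab, Ne.symm hxa]
          · by_cases hwb : w = b
            · subst hwb; simp [hwa, Ne.symm hxb]
            · simp only [if_neg hwa, if_neg hwb]; split_ifs <;> norm_num
        linarith)
  rw [degree_sub, degree_sub, degree_chip, degree_chip, degree_base] at this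
  linarith

/-- The divisor of a stage: the past is empty except for the current vertex `p`. -/
def stageDiv (A : Finset V) (p : V) : V → ℤ :=
  fun w => if w ∈ A then (if w = p then (A.card : ℤ) + 1 else 0) else 1

theorem stageDiv_p {A : Finset V} {p : V} (hp : p ∈ A) : stageDiv A p p = A.card + 1 := by
  simp [stageDiv, hp]

theorem stageDiv_out {A : Finset V} {p w : V} (hw : w ∉ A) : stageDiv A p w = 1 := by
  simp [stageDiv, hw]

theorem stageDiv_in {A : Finset V} {p w : V} (hw : w ∈ A) (hwp : w ≠ p) :
    stageDiv A p w = 0 := by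
  simp [stageDiv, hw, hwp]

theorem stageDiv_nonneg (A : Finset V) (p w : V) : 0 ≤ stageDiv A p w := by
  unfold stageDiv; split_ifs <;> positivity

/-- Data of a stage. -/
structure Stage (G : Multigraph V) (v : V) (A : Finset V) (p : V) : Prop where
  conn : G.Connected
  big : G.BigGon
  two : G.TwoChips v
  mem : p ∈ A
  out : ∀ a ∈ A, a ≠ p → ∀ b, b ∉ A → G.mult a b = 0
  equiv : ∃ f : V → ℤ, ∀ w, stageDiv A p w = base v w - G.laplacian f w

variable {G : Multigraph V} {v p : V} {A : Finset V}

theorem Stage.effEq (h : G.Stage v A p) (f : V → ℤ)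
    (hf : ∀ w, 0 ≤ stageDiv A p w - G.laplacian f w) :
    G.EffEq (base v) (fun w => stageDiv A p w - G.laplacian f w) := by
  obtain ⟨f0, hf0⟩ := h.equiv
  refine ⟨hf, fun x => f0 x + f x, fun w => ?_⟩
  rw [lap_add]
  linarith [hf0 w]

theorem Stage.effEq' (h : G.Stage v A p) : G.EffEq (base v) (stageDiv A p) := by
  obtain ⟨f0, hf0⟩ := h.equiv
  exact ⟨stageDiv_nonneg A p, f0, hf0⟩

/-- A good firing function bringing two chips to `x`. -/
def Fires (G : Multigraph V) (A : Finset V) (p x : V) (f : V → ℤ) : Prop :=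
  (∀ w, 0 ≤ stageDiv A p w - G.laplacian f w) ∧ 2 ≤ stageDiv A p x - G.laplacian f x ∧
    A ⊆ top f ∧ x ∉ top f

theorem Stage.exists_fires (h : G.Stage v A p) (x : V) (hx : x ∉ A) :
    ∃ f, G.Fires A p x f := by
  have hne := h.conn.1
  obtain ⟨f0, hf0⟩ := h.equiv
  obtain ⟨f1, hf1⟩ := (winnable_iff G _).1 (h.two x)
  obtain ⟨f2, hf2⟩ : ∃ f2 : V → ℤ, ∀ w,
      2 * chip x w ≤ stageDiv A p w - G.laplacian f2 w := by
    refine ⟨fun y => f1 y - f0 y, fun w => ?_⟩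
    rw [lap_sub, hf0]
    linarith [hf1 w]
  have hout : ∀ w ∈ top f2, G.laplacian (ind (top f2)) w ≤ stageDiv A p w := by
    intro w hw
    linarith [lap_top_le G f2 w hw, hf2 w, chip_nonneg x w]
  have hp : p ∈ top f2 := by
    by_contra hp
    by_cases hU : (top f2 ∩ A).Nonempty
    · obtain ⟨a, ha, b, hb, hab⟩ := exists_cut G h.conn _ hU (by
        intro heq
        have : p ∈ top f2 ∩ A := by rw [heq]; simp
        exact hp (Finset.mem_inter.1 this).1)
      obtain ⟨ha1, ha2⟩ := Finset.mem_inter.1 ha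
      have hap : a ≠ p := fun h => hp (h ▸ ha1)
      by_cases hbA : b ∈ A
      · have hbT : b ∉ top f2 := fun hbT => hb (Finset.mem_inter.2 ⟨hbT, hbA⟩)
        have h1 := hout a ha1
        have h2 := mult_le_lap_ind G _ a b ha1 hbT
        rw [stageDiv_in ha2 hap] at h1
        omega
      · have := h.out a ha2 hap b hbA
        omega
    · obtain ⟨w, hw, hw2⟩ := h.big.exists_two_le h.conn (top f2) (top_nonempty f2)
        (fun heq => hp (by rw [heq]; simp))
      have hwA : w ∉ A := fun hwA => hU ⟨w, Finset.mem_inter.2 ⟨hw, hwA⟩⟩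
      have h1 := hout w hw
      rw [stageDiv_out hwA] at h1
      linarith
  have hpt := (mem_top f2 p).1 hp
  set f : V → ℤ := fun w => if w ∈ A then f2 p else f2 w with hf
  have hfA : ∀ w ∈ A, f w = f2 p := fun w hw => by simp [hf, hw]
  have hfn : ∀ w, w ∉ A → f w = f2 w := fun w hw => by simp [hf, hw]
  have hge : ∀ w, 2 * chip x w ≤ stageDiv A p w - G.laplacian f w := by
    intro w
    by_cases hw : w ∈ A
    · have hwx : w ≠ x := fun hh => hx (hh ▸ hw)
      by_cases hwp : w = p
      · subst hwp
        have : G.laplacian f w ≤ G.laplacian f2 w := by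
          apply lap_mono
          intro u
          right
          by_cases hu : u ∈ A
          · rw [hfA w hw, hfA u hu]; linarith [hpt u]
          · rw [hfA w hw, hfn u hu]
        linarith [hf2 w]
      · have : G.laplacian f w ≤ G.laplacian (fun _ => 0) w := by
          apply lap_mono
          intro u
          by_cases hu : u ∈ A
          · right; rw [hfA w hw, hfA u hu]; simp
          · left; exact h.out w hw hwp u hu
        rw [lap_zero] at this
        rw [stageDiv_in hw hwp]
        simp only [chip, if_neg hwx]
        linarith
    · have : G.laplacian f w ≤ G.laplacian f2 w := by
        apply lap_mono
        intro u
        by_cases hu : u ∈ A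
        · by_cases hup : u = p
          · right; rw [hfA u hu, hfn w hw, hup]
          · left; rw [G.symm]; exact h.out u hu hup w hw
        · right; rw [hfn u hu, hfn w hw]
      linarith [hf2 w]
  refine ⟨f, fun w => by linarith [hge w, chip_nonneg x w], ?_, ?_, ?_⟩
  · have := hge x
    simpa [chip] using this
  · intro w hw
    rw [mem_top]
    intro u
    rw [hfA w hw]
    by_cases hu : u ∈ A
    · rw [hfA u hu]
    · rw [hfn u hu]; exact hpt u
  · intro hxt
    have h1 := lap_top_le G f x hxt
    have h2 := lap_ind_nonneg G _ x hxt
    have h3 := hge x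
    rw [stageDiv_out hx] at h3
    simp only [chip, if_true] at h3
    linarith

/-- `M` is a legal set whose only boundary vertex outside is `a`. -/
structure Good (G : Multigraph V) (A : Finset V) (p a : V) (M : Finset V) : Prop where
  sub : A ⊆ M
  nmem : a ∉ M
  cut : ∀ w ∈ M, ∀ u, u ∉ M → u ≠ a → G.mult w u = 0
  pa : G.mult p a = A.card + 1
  le : ∀ w ∈ M, w ∉ A → G.mult w a ≤ 1

theorem Good.lap_mem {a : V} {M : Finset V} (hM : G.Good A p a M) (w : V) (hw : w ∈ M) :
    G.laplacian (ind M) w = G.mult w a := by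
  rw [lap_ind_mem G M w hw]
  apply Finset.sum_eq_single_of_mem a (by simpa using hM.nmem)
  intro u hu hua
  rw [hM.cut w hw u (by simpa using hu) hua]; simp

theorem Good.lap_not_mem {a : V} {M : Finset V} (hM : G.Good A p a M) (w : V) (hw : w ∉ M)
    (hwa : w ≠ a) : G.laplacian (ind M) w = 0 := by
  rw [lap_ind_not_mem G M w hw, neg_eq_zero]
  apply Finset.sum_eq_zero
  intro u hu
  rw [G.symm, hM.cut u hu w hw hwa]; simp

theorem Stage.exists_good (h : G.Stage v A p) (x : V) (f : V → ℤ) (hf : G.Fires A p x f) :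
    ∃ a, G.Good A p a (top f) := by
  have hne := h.conn.1
  obtain ⟨hf0, hf2, hA, hx⟩ := hf
  have hout : ∀ w ∈ top f, G.laplacian (ind (top f)) w ≤ stageDiv A p w := by
    intro w hw
    linarith [lap_top_le G f w hw, hf0 w]
  have hE := h.effEq (ind (top f)) (by
    intro w
    by_cases hw : w ∈ top f
    · linarith [hout w hw]
    · linarith [lap_ind_nonpos G _ w hw, stageDiv_nonneg A p w])
  have htwo : ∀ w ∈ top f, ∀ u, u ∉ top f → 0 < G.mult w u →
      2 ≤ stageDiv A p u - G.laplacian (ind (top f)) u := by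
    intro w hw u hu hwu
    have h1 := lap_ind_le_neg_mult G _ u w hu hw
    rw [stageDiv_out (fun hh => hu (hA hh))]
    rw [G.symm] at h1
    omega
  obtain ⟨a0, ha0, a, ha, haa⟩ := exists_cut G h.conn (top f) (top_nonempty f)
    (fun heq => hx (by rw [heq]; simp))
  have ha2 := htwo a0 ha0 a ha haa
  have hcut : ∀ w ∈ top f, ∀ u, u ∉ top f → u ≠ a → G.mult w u = 0 := by
    intro w hw u hu hua
    by_contra h0
    have hu2 := htwo w hw u hu (by omega)
    exact h.big.no_pair hua hE hE hu2 (by linarith) ha2 (by linarith)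
  have hpT := hA h.mem
  have haA : a ∉ A := fun hh => ha (hA hh)
  have hcp : (1 : ℤ) ≤ A.card := by exact_mod_cast Finset.card_pos.2 ⟨p, h.mem⟩
  have hlp : G.laplacian (ind (top f)) p = G.mult p a := by
    rw [lap_ind_mem G _ p hpT]
    apply Finset.sum_eq_single_of_mem a (by simpa using ha)
    intro u hu hua
    rw [hcut p hpT u (by simpa using hu) hua]; simp
  refine ⟨a, hA, ha, hcut, ?_, ?_⟩
  · by_contra hne'
    have h1 := hout p hpT
    rw [stageDiv_p h.mem, hlp] at h1
    have hpa : p ≠ a := fun hh => ha (hh ▸ hpT)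
    refine h.big.no_pair hpa h.effEq' hE ?_ ?_ ha2 ?_
    · rw [stageDiv_p h.mem]; linarith
    · rw [stageDiv_out haA]
    · rw [stageDiv_p h.mem, hlp]; omega
  · intro w hw hwA
    have h1 := mult_le_lap_ind G _ w a hw ha
    have h2 := hout w hw
    rw [stageDiv_out hwA] at h2
    omega

theorem Good.notMem {a : V} {M : Finset V} (hM : G.Good A p a M) : a ∉ A :=
  fun hh => hM.nmem (hM.sub hh)

theorem Stage.good_effEq (h : G.Stage v A p) {a : V} {M : Finset V} (hM : G.Good A p a M) :
    G.EffEq (base v) (fun w => stageDiv A p w - G.laplacian (ind M) w) := by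
  apply h.effEq
  intro w
  by_cases hw : w ∈ M
  · rw [hM.lap_mem w hw]
    by_cases hwA : w ∈ A
    · by_cases hwp : w = p
      · rw [hwp, stageDiv_p h.mem, hM.pa]; simp
      · rw [stageDiv_in hwA hwp, h.out w hwA hwp a hM.notMem]; simp
    · rw [stageDiv_out hwA]
      have := hM.le w hw hwA
      omega
  · linarith [lap_ind_nonpos G _ w hw, stageDiv_nonneg A p w]

theorem Stage.good_two (h : G.Stage v A p) {a : V} {M : Finset V} (hM : G.Good A p a M) :
    2 ≤ stageDiv A p a - G.laplacian (ind M) a := by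
  have h1 := lap_ind_le_neg_mult G _ a p hM.nmem (hM.sub h.mem)
  rw [G.symm, hM.pa] at h1
  rw [stageDiv_out hM.notMem]
  push_cast at h1
  have : (0 : ℤ) ≤ A.card := by positivity
  linarith

theorem Stage.good_mem (h : G.Stage v A p) {a b : V} {M N : Finset V} (hM : G.Good A p a M)
    (hN : G.Good A p b N) (hab : a ≠ b) : b ∈ M := by
  by_contra hb
  have h1 := hM.cut p (hM.sub h.mem) b hb (Ne.symm hab)
  have h2 := hN.pa
  omega

theorem Stage.good_mult (h : G.Stage v A p) {a b : V} {M N : Finset V} (hM : G.Good A p a M)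
    (hN : G.Good A p b N) (hab : a ≠ b) : G.mult a b = 1 := by
  have hb := h.good_mem hM hN hab
  have ha := h.good_mem hN hM (Ne.symm hab)
  have h1 := hM.le b hb hN.notMem
  rw [G.symm] at h1
  by_contra hne
  have h0 : G.mult a b = 0 := by omega
  refine h.big.no_pair hab (h.good_effEq hM) (h.good_effEq hN) (h.good_two hM) ?_
    (h.good_two hN) ?_
  · rw [hM.lap_mem b hb, stageDiv_out hN.notMem, G.symm, h0]; simp
  · rw [hN.lap_mem a ha, stageDiv_out hM.notMem, h0]; simp

theorem Stage.good_cover (h : G.Stage v A p) {a b : V} {M N : Finset V} (hM : G.Good A p a M)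
    (hN : G.Good A p b N) (hab : a ≠ b) (z : V) (hz : z ∉ M) : z ∈ N := by
  by_contra hzN
  obtain ⟨x, hx, y, hy, hxy⟩ := exists_cut G h.conn (Mᶜ ∩ Nᶜ) ⟨z, by simp [hz, hzN]⟩ (by
    intro heq
    have : p ∈ Mᶜ ∩ Nᶜ := by rw [heq]; simp
    simp [hM.sub h.mem] at this)
  simp only [Finset.mem_inter, Finset.mem_compl] at hx hy
  have hb := h.good_mem hM hN hab
  have ha := h.good_mem hN hM (Ne.symm hab)
  rw [G.symm] at hxy
  by_cases hyM : y ∈ M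
  · have := hM.cut y hyM x hx.1 (fun hh => hx.2 (hh ▸ ha))
    omega
  · have hyN : y ∈ N := by
      by_contra hyN
      exact hy ⟨hyM, hyN⟩
    have := hN.cut y hyN x hx.2 (fun hh => hx.1 (hh ▸ hb))
    omega

theorem Stage.good_unique (h : G.Stage v A p) {a : V} {M N : Finset V} (hM : G.Good A p a M)
    (hN : G.Good A p a N) : M ⊆ N := by
  by_contra hsub
  obtain ⟨z, hzM, hzN⟩ := Finset.not_subset.1 hsub
  obtain ⟨w, hw, hw2⟩ := h.big.exists_two_le h.conn (M \ N) ⟨z, by simp [hzM, hzN]⟩ (by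
    intro heq
    have : p ∈ M \ N := by rw [heq]; simp
    simp [hN.sub h.mem] at this)
  have hw' := Finset.mem_sdiff.1 hw
  have hwa : w ≠ a := fun hh => hM.nmem (hh ▸ hw'.1)
  have h1 : G.laplacian (ind (M \ N)) w = G.mult w a := by
    rw [lap_ind_mem G _ w hw]
    apply Finset.sum_eq_single_of_mem a (by simp [hM.nmem])
    intro u hu hua
    by_cases huM : u ∈ M
    · have huN : u ∈ N := by
        by_contra huN
        exact (Finset.mem_compl.1 hu) (Finset.mem_sdiff.2 ⟨huM, huN⟩)
      rw [G.symm, hN.cut u huN w hw'.2 hwa]; simp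
    · rw [hM.cut w hw'.1 u huM hua]; simp
  have h2 := hM.le w hw'.1 (fun hh => hw'.2 (hN.sub hh))
  omega

theorem Stage.fires_keep (h : G.Stage v A p) {a b y : V} {f : V → ℤ} {N : Finset V}
    (hM : G.Good A p a (top f)) (hN : G.Good A p b N) (hab : a ≠ b)
    (hyA : y ∉ A) (hyb : y ≠ b) (hyN : y ∉ N) :
    y ∈ top f ∧ stageDiv A p y - G.laplacian f y = 1 := by
  have hyM := h.good_cover hN hM (Ne.symm hab) y hyN
  refine ⟨hyM, ?_⟩
  have ha := h.good_mem hN hM (Ne.symm hab)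
  have : G.laplacian f y = 0 := by
    apply Finset.sum_eq_zero
    intro u _
    by_cases hu : u ∈ top f
    · have : f y = f u := le_antisymm ((mem_top f u).1 hu y) ((mem_top f y).1 hyM u)
      rw [this]; simp
    · by_cases hua : u = a
      · rw [hua, G.symm, hN.cut a ha y hyN hyb]; simp
      · rw [hM.cut y hyM u hu hua]; simp
  rw [this, stageDiv_out hyA]; simp

theorem Stage.fires_unique (h : G.Stage v A p) {a b z y : V} {f g : V → ℤ}
    (hf : G.Fires A p z f) (hg : G.Fires A p y g)
    (hM : G.Good A p a (top f)) (hN : G.Good A p b (top g))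
    (hzA : z ∉ A) (hyA : y ∉ A) (hza : z ≠ a) (hyb : y ≠ b) : a = b := by
  by_contra hab
  obtain ⟨h1, h2⟩ := h.fires_keep hM hN hab hyA hyb hg.2.2.2
  obtain ⟨h3, h4⟩ := h.fires_keep hN hM (Ne.symm hab) hzA hza hf.2.2.2
  have hzy : z ≠ y := fun hh => hf.2.2.2 (hh ▸ h1)
  exact h.big.no_pair hzy (h.effEq f hf.1) (h.effEq g hg.1) hf.2.1 h2.ge hg.2.1 h4.ge

theorem Stage.next (h : G.Stage v A p) (hA : A ≠ Finset.univ) :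
    ∃ (S : Finset V) (a : V), Disjoint A S ∧ a ∈ S ∧ (∀ s ∈ S, G.mult p s = A.card + 1) ∧
      (∀ s ∈ S, ∀ t ∈ S, s ≠ t → G.mult s t = 1) ∧ G.Stage v (A ∪ S) a := by
  classical
  set S : Finset V := Finset.univ.filter (fun a => ∃ M, G.Good A p a M) with hS
  have hmemS : ∀ s, s ∈ S ↔ ∃ M, G.Good A p s M := fun s => by simp [hS]
  -- the exit vertex
  obtain ⟨a, M, hM, hz⟩ : ∃ a M, G.Good A p a M ∧ ∀ z, z ∉ A → z ∉ S → z ∉ M := by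
    by_cases hex : ∃ z, z ∉ A ∧ z ∉ S
    · obtain ⟨z, hzA, hzS⟩ := hex
      obtain ⟨f, hf⟩ := h.exists_fires z hzA
      obtain ⟨a, ha⟩ := h.exists_good z f hf
      refine ⟨a, top f, ha, fun y hyA hyS => ?_⟩
      obtain ⟨g, hg⟩ := h.exists_fires y hyA
      obtain ⟨b, hb⟩ := h.exists_good y g hg
      have hab := h.fires_unique hf hg ha hb hzA hyA
        (fun hh => hzS ((hmemS z).2 ⟨_, hh ▸ ha⟩)) (fun hh => hyS ((hmemS y).2 ⟨_, hh ▸ hb⟩))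
      subst hab
      exact fun hy => hg.2.2.2 (h.good_unique ha hb hy)
    · obtain ⟨x, hx⟩ : ∃ x, x ∉ A := by
        by_contra hcon
        push Not at hcon
        exact hA (by ext; simp [hcon])
      obtain ⟨f, hf⟩ := h.exists_fires x hx
      obtain ⟨a, ha⟩ := h.exists_good x f hf
      exact ⟨a, top f, ha, fun z hzA hzS => absurd ⟨z, hzA, hzS⟩ hex⟩
  have haS : a ∈ S := (hmemS a).2 ⟨M, hM⟩
  have hSM : ∀ s ∈ S, s ≠ a → s ∈ M := by
    intro s hs hsa
    obtain ⟨N, hN⟩ := (hmemS s).1 hs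
    exact h.good_mem hM hN (Ne.symm hsa)
  have hSA : ∀ s ∈ S, s ∉ A := by
    intro s hs
    obtain ⟨N, hN⟩ := (hmemS s).1 hs
    exact hN.notMem
  have hpair : ∀ s ∈ S, ∀ t ∈ S, s ≠ t → G.mult s t = 1 := by
    intro s hs t ht hst
    obtain ⟨N, hN⟩ := (hmemS s).1 hs
    obtain ⟨N', hN'⟩ := (hmemS t).1 ht
    exact h.good_mult hN hN' hst
  refine ⟨S, a, ?_, haS, ?_, hpair, ?_⟩
  · rw [Finset.disjoint_right]
    exact hSA
  · intro s hs
    obtain ⟨N, hN⟩ := (hmemS s).1 hs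
    exact hN.pa
  refine ⟨h.conn, h.big, h.two, by simp [haS], ?_, ?_⟩
  · intro x hx hxa b hb
    simp only [Finset.mem_union, not_or] at hb hx
    have hxM : x ∈ M := by
      rcases hx with hx | hx
      · exact hM.sub hx
      · exact hSM x hx hxa
    exact hM.cut x hxM b (hz b hb.1 hb.2) (fun hh => hb.2 (hh ▸ haS))
  · obtain ⟨f0, hf0⟩ := h.equiv
    refine ⟨fun x => f0 x + ind M x, ?_⟩
    have hne : ∀ w, w ≠ a → stageDiv (A ∪ S) a w =
        base v w - G.laplacian (fun x => f0 x + ind M x) w := by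
      intro w hwa
      rw [lap_add, ← sub_sub, ← hf0]
      by_cases hwA : w ∈ A
      · rw [stageDiv_in (by simp [hwA]) hwa, hM.lap_mem w (hM.sub hwA)]
        by_cases hwp : w = p
        · rw [hwp, stageDiv_p h.mem, hM.pa]; simp
        · rw [stageDiv_in hwA hwp, h.out w hwA hwp a hM.notMem]; simp
      · by_cases hwS : w ∈ S
        · rw [stageDiv_in (by simp [hwS]) hwa, hM.lap_mem w (hSM w hwS hwa), stageDiv_out hwA,
            hpair w hwS a haS hwa]
          simp
        · rw [stageDiv_out (by simp [hwA, hwS]), stageDiv_out hwA,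
            hM.lap_not_mem w (hz w hwA hwS) hwa]
          simp
    intro w
    by_cases hwa : w = a
    · subst hwa
      have h1 : ∑ u, (base v u - G.laplacian (fun x => f0 x + ind M x) u)
          = Fintype.card V + 1 := by
        rw [Finset.sum_sub_distrib, lap_sum, ← degree_base v]; simp [degree]
      have h2 : ∑ u, stageDiv (A ∪ S) w u = Fintype.card V + 1 := by
        have hsplit : ∀ u, stageDiv (A ∪ S) w u =
            (((A ∪ S).card : ℤ) + 1) * chip w u + (1 - ind (A ∪ S) u) := by
          intro u
          unfold stageDiv chip ind
          by_cases hu : u ∈ A ∪ S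
          · simp [hu]
          · have : u ≠ w := fun hh => hu (by rw [hh]; simp [haS])
            simp [hu, this]
        rw [Finset.sum_congr rfl fun u _ => hsplit u, Finset.sum_add_distrib,
          Finset.sum_sub_distrib, ← Finset.mul_sum]
        have h3 : ∑ u, chip w u = 1 := degree_chip w
        have h4 : ∑ u, ind (A ∪ S) u = ((A ∪ S).card : ℤ) := by
          simp [ind, -Finset.mem_union]
        rw [h3, h4]
        simp
        ring
      rw [← Finset.add_sum_erase _ _ (Finset.mem_univ w)] at h1 h2
      rw [Finset.sum_congr rfl fun u hu => hne u (by simpa using hu)] at h2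
      linarith
    · exact hne w hwa

end Multigraph

namespace Multigraph

theorem exists_enum (S : Finset V) (a : V) (ha : a ∈ S) :
    ∃ e : V → ℕ, (∀ s ∈ S, 1 ≤ e s ∧ e s ≤ S.card) ∧
      (∀ s ∈ S, ∀ t ∈ S, e s = e t → s = t) ∧
      (∀ j, 1 ≤ j → j ≤ S.card → ∃ s ∈ S, e s = j) ∧ e a = 1 := by
  have hpos : 0 < S.card := Finset.card_pos.2 ⟨a, ha⟩
  let φ : S ≃ Fin S.card :=
    S.equivFin.trans (Equiv.swap (S.equivFin ⟨a, ha⟩) ⟨0, hpos⟩)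
  have hφa : φ ⟨a, ha⟩ = ⟨0, hpos⟩ := by simp [φ]
  refine ⟨fun w => if hw : w ∈ S then (φ ⟨w, hw⟩ : ℕ) + 1 else 0, ?_, ?_, ?_, ?_⟩
  · intro s hs
    have := (φ ⟨s, hs⟩).2
    simp only [hs, dif_pos]
    omega
  · intro s hs t ht hst
    simp only [hs, ht, dif_pos] at hst
    have : φ ⟨s, hs⟩ = φ ⟨t, ht⟩ := Fin.ext (by omega)
    simpa using φ.injective this
  · intro j h1 h2
    refine ⟨(φ.symm ⟨j - 1, by omega⟩).1, (φ.symm ⟨j - 1, by omega⟩).2, ?_⟩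
    simp
    omega
  · simp [ha, hφa]

/-- A quasi-banana labelling of the vertices in `A`, with `p` the last connecting vertex. -/
structure Lab (G : Multigraph V) (A : Finset V) (p : V) (m : ℕ) (q : ℕ → ℕ)
    (ℓ : V → ℕ × ℕ) : Prop where
  pos : ∀ i, 1 ≤ i → i ≤ m → 0 < q i
  inj : ∀ x ∈ A, ∀ y ∈ A, ℓ x = ℓ y → x = y
  bd : ∀ x ∈ A, (ℓ x).1 ≤ m ∧ 1 ≤ (ℓ x).2 ∧ (ℓ x).2 ≤ qbSize q (ℓ x).1
  surj : ∀ i j : ℕ, i ≤ m → 1 ≤ j → j ≤ qbSize q i → ∃ x ∈ A, ℓ x = (i, j)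
  mul : ∀ x ∈ A, ∀ y ∈ A, x ≠ y → G.mult x y =
    if (ℓ x).1 = (ℓ y).1 then 1
    else if (ℓ x).1 + 1 = (ℓ y).1 ∧ (ℓ x).2 = 1 then (∑ i ∈ Finset.Icc 1 (ℓ x).1, q i) + 2
    else if (ℓ y).1 + 1 = (ℓ x).1 ∧ (ℓ y).2 = 1 then (∑ i ∈ Finset.Icc 1 (ℓ y).1, q i) + 2
    else 0
  lp : ℓ p = (m, 1)
  crd : A.card = (∑ i ∈ Finset.Icc 1 m, q i) + 1

theorem Lab.next {G : Multigraph V} {v p : V} {A : Finset V} {m : ℕ} {q : ℕ → ℕ}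
    {ℓ : V → ℕ × ℕ} (h : G.Lab A p m q ℓ) (hst : G.Stage v A p) {S : Finset V} {a : V}
    (hd : Disjoint A S) (ha : a ∈ S) (hpS : ∀ s ∈ S, G.mult p s = A.card + 1)
    (hSS : ∀ s ∈ S, ∀ t ∈ S, s ≠ t → G.mult s t = 1) :
    ∃ qNew labNew, G.Lab (A ∪ S) a (m + 1) qNew labNew := by
  obtain ⟨e, he1, he2, he3, he4⟩ := exists_enum S a ha
  have hAS : ∀ x ∈ A, x ∉ S := fun x hx => Finset.disjoint_left.1 hd hx
  set labNew : V → ℕ × ℕ := fun w => if w ∈ S then (m + 1, e w) else ℓ w with hlabNew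
  set qNew : ℕ → ℕ := Function.update q (m + 1) S.card with hq'
  have hℓA : ∀ x ∈ A, labNew x = ℓ x := fun x hx => by simp [hlabNew, hAS x hx]
  have hℓS : ∀ x ∈ S, labNew x = (m + 1, e x) := fun x hx => by simp [hlabNew, hx]
  have hqm : qNew (m + 1) = S.card := by simp [hq']
  have hqn : ∀ i, i ≤ m → qNew i = q i := fun i hi => by
    rw [hq', Function.update_of_ne (by omega)]
  have hqs : ∀ i, i ≤ m → ∑ k ∈ Finset.Icc 1 i, qNew k = ∑ k ∈ Finset.Icc 1 i, q k := by
    intro i hi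
    refine Finset.sum_congr rfl fun k hk => hqn k ?_
    have := (Finset.mem_Icc.1 hk).2
    omega
  have hqb : ∀ i, i ≤ m → qbSize qNew i = qbSize q i := by
    intro i hi
    unfold qbSize; rw [hqn i hi]
  have hqb' : qbSize qNew (m + 1) = S.card := by simp [qbSize, hqm]
  have hcross : ∀ x ∈ A, ∀ y ∈ S, G.mult x y =
      if m = (ℓ x).1 ∧ (ℓ x).2 = 1 then (∑ k ∈ Finset.Icc 1 (ℓ x).1, q k) + 2 else 0 := by
    intro x hx y hy
    by_cases hxp : x = p
    · rw [hxp, h.lp, hpS y hy, h.crd]; simp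
    · rw [if_neg]
      · exact hst.out x hx hxp y (fun hh => hAS y hh hy)
      · rintro ⟨h1, h2⟩
        exact hxp (h.inj x hx p hst.mem (by rw [h.lp]; exact Prod.ext h1.symm h2))
  refine ⟨qNew, labNew, ?_, ?_, ?_, ?_, ?_, ?_, ?_⟩
  · intro i h1 h2
    by_cases hi : i = m + 1
    · rw [hi, hqm]; exact Finset.card_pos.2 ⟨a, ha⟩
    · rw [hqn i (by omega)]; exact h.pos i h1 (by omega)
  · intro x hx y hy hxy
    rcases Finset.mem_union.1 hx with hx | hx <;> rcases Finset.mem_union.1 hy with hy | hy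
    · rw [hℓA x hx, hℓA y hy] at hxy
      exact h.inj x hx y hy hxy
    · rw [hℓA x hx, hℓS y hy] at hxy
      have := (h.bd x hx).1
      rw [hxy] at this
      simp at this
    · rw [hℓS x hx, hℓA y hy] at hxy
      have := (h.bd y hy).1
      rw [← hxy] at this
      simp at this
    · rw [hℓS x hx, hℓS y hy] at hxy
      exact he2 x hx y hy (by simpa using hxy)
  · intro x hx
    rcases Finset.mem_union.1 hx with hx | hx
    · have := h.bd x hx
      rw [hℓA x hx, hqb _ this.1]
      exact ⟨by omega, this.2⟩
    · rw [hℓS x hx, hqb']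
      exact ⟨le_rfl, he1 x hx⟩
  · intro i j hi h1 h2
    by_cases him : i = m + 1
    · rw [him, hqb'] at h2
      obtain ⟨s, hs, hes⟩ := he3 j h1 h2
      exact ⟨s, by simp [hs], by rw [hℓS s hs, hes, him]⟩
    · rw [hqb i (by omega)] at h2
      obtain ⟨x, hx, hxe⟩ := h.surj i j (by omega) h1 h2
      exact ⟨x, by simp [hx], by rw [hℓA x hx, hxe]⟩
  · intro x hx y hy hxy
    rcases Finset.mem_union.1 hx with hx | hx <;> rcases Finset.mem_union.1 hy with hy | hy
    · rw [hℓA x hx, hℓA y hy, hqs _ (h.bd x hx).1, hqs _ (h.bd y hy).1]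
      exact h.mul x hx y hy hxy
    · have hb := (h.bd x hx).1
      rw [hℓA x hx, hℓS y hy, hqs _ hb, hcross x hx y hy]
      simp only
      rw [if_neg (show ¬ (ℓ x).1 = m + 1 by omega)]
      by_cases hc : m = (ℓ x).1 ∧ (ℓ x).2 = 1
      · rw [if_pos hc, if_pos ⟨by omega, hc.2⟩]
      · rw [if_neg hc, if_neg (by omega), if_neg (by omega)]
    · have hb := (h.bd y hy).1
      rw [hℓA y hy, hℓS x hx, hqs _ hb, G.symm, hcross y hy x hx]
      simp only
      rw [if_neg (show ¬ m + 1 = (ℓ y).1 by omega),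
        if_neg (show ¬ (m + 1 + 1 = (ℓ y).1 ∧ e x = 1) by omega)]
      by_cases hc : m = (ℓ y).1 ∧ (ℓ y).2 = 1
      · rw [if_pos hc, if_pos ⟨by omega, hc.2⟩]
      · rw [if_neg hc, if_neg (by omega)]
    · rw [hℓS x hx, hℓS y hy, hSS x hx y hy hxy]; simp
  · rw [hℓS a ha, he4]
  · rw [Finset.card_union_of_disjoint hd, h.crd, Finset.sum_Icc_succ_top (by omega), hqm,
      hqs m le_rfl]
    ring

theorem isQuasiBanana_of_stage {G : Multigraph V} {v : V} (n : ℕ) :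
    ∀ (p : V) (A : Finset V) (m : ℕ) (q : ℕ → ℕ) (ℓ : V → ℕ × ℕ), G.Lab A p m q ℓ →
      G.Stage v A p → Fintype.card V - A.card ≤ n → G.IsQuasiBanana := by
  induction n with
  | zero =>
    intro p A m q ℓ h hst hn
    have hA : A = Finset.univ := by
      rw [← Finset.card_eq_iff_eq_univ]
      have := Finset.card_le_univ A
      omega
    subst hA
    exact ⟨m, q, ℓ, h.pos, fun x y hxy => h.inj x (by simp) y (by simp) hxy,
      fun x => h.bd x (by simp), fun i j h1 h2 h3 => by
        obtain ⟨x, _, hx⟩ := h.surj i j h1 h2 h3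
        exact ⟨x, hx⟩, fun x y hxy => h.mul x (by simp) y (by simp) hxy⟩
  | succ n ih =>
    intro p A m q ℓ h hst hn
    by_cases hA : A = Finset.univ
    · exact ih p A m q ℓ h hst (by rw [hA, Finset.card_univ]; omega)
    obtain ⟨S, a, hd, ha, h1, h2, h3⟩ := hst.next hA
    obtain ⟨qNew, labNew, h4⟩ := h.next hst hd ha h1 h2
    refine ih a _ _ qNew labNew h4 h3 ?_
    rw [Finset.card_union_of_disjoint hd]
    have : 0 < S.card := Finset.card_pos.2 ⟨a, ha⟩
    omega

theorem isQuasiBanana_of_bigGon {G : Multigraph V} (hG : G.Connected) (hB : G.BigGon) {v : V}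
    (hv : G.TwoChips v) : G.IsQuasiBanana := by
  refine isQuasiBanana_of_stage (v := v) _ v {v} 0 (fun _ => 0) (fun _ => (0, 1)) ?_ ?_ le_rfl
  · refine ⟨fun i h1 h2 => by omega, ?_, ?_, ?_, ?_, rfl, by simp⟩
    · intro x hx y hy _
      rw [Finset.mem_singleton.1 hx, Finset.mem_singleton.1 hy]
    · intro x _
      simp [qbSize]
    · intro i j hi h1 h2
      have hi : i = 0 := by omega
      subst hi
      simp only [qbSize, if_true] at h2
      exact ⟨v, by simp, by simp; omega⟩
    · intro x hx y hy hxy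
      exact absurd ((Finset.mem_singleton.1 hx).trans (Finset.mem_singleton.1 hy).symm) hxy
  · refine ⟨hG, hB, hv, by simp, ?_, fun _ => 0, fun w => ?_⟩
    · intro x hx hxv
      exact absurd (Finset.mem_singleton.1 hx) hxv
    · rw [lap_zero]
      by_cases hw : w = v
      · simp [stageDiv, base, chip, hw]
      · simp [stageDiv, base, chip, hw]

end Multigraph


/-- A graph `G` is a quasi-banana graph if and only if it is gonality-tight
and there exists a vertex `v` such that the divisor `D = v + ∑_{w ∈ V(G)} w` realises the
second gonality of `G`. -/
theorem stmt0 (G : Multigraph V) (hG : G.Connected) :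
    G.IsQuasiBanana ↔
      (G.GonalityTight ∧
        ∃ v : V, G.Realises 2 (fun w => (if w = v then 1 else 0) + 1)) := by
  rw [Multigraph.tight_iff G hG]
  constructor
  · rintro ⟨m, q, ℓ, h⟩
    exact ⟨Multigraph.qb_bigGon hG h, Multigraph.qb_twoChips h⟩
  · rintro ⟨hB, v, hv⟩
    exact Multigraph.isQuasiBanana_of_bigGon hG hB hv
end

section
/- Let G be a quasi-banana graph with first gonality gon_1(G) = k. Then the genus of G is g(G) = |E(G)| - |V(G)| + 1 = k(k-1)/2 = C(k,2). -/
open Finset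

variable {V : Type*} [Fintype V] [DecidableEq V]

namespace Multigraph

/-- Vertex sets built by successively attaching cliques. -/
inductive Tower (G : Multigraph V) : Finset V → Prop
  | base (v : V) : Tower G {v}
  | step (S C : Finset V) (v : V) (hS : Tower G S) (hd : Disjoint S C) (hv : v ∈ S)
      (h1 : ∀ c ∈ C, G.mult c v = S.card + 1)
      (h2 : ∀ c ∈ C, ∀ x ∈ S, x ≠ v → G.mult c x = 0)
      (h3 : ∀ c ∈ C, ∀ d ∈ C, c ≠ d → G.mult c d = 1) : Tower G (S ∪ C)

/-- Antisymmetric double sums vanish. -/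
lemma sum_lap (G : Multigraph V) (A : Finset V) (f : V → ℤ) :
    ∑ w ∈ A, ∑ u ∈ A, (G.mult w u : ℤ) * (f w - f u) = 0 := by
  have h : ∑ w ∈ A, ∑ u ∈ A, (G.mult w u : ℤ) * (f w - f u)
      = - ∑ w ∈ A, ∑ u ∈ A, (G.mult w u : ℤ) * (f w - f u) := by
    conv_lhs => rw [Finset.sum_comm]
    rw [← Finset.sum_neg_distrib]
    refine Finset.sum_congr rfl fun x _ => ?_
    rw [← Finset.sum_neg_distrib]
    refine Finset.sum_congr rfl fun y _ => ?_
    rw [G.symm y x]; ring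
  linarith

lemma key_le (G : Multigraph V) (S C : Finset V) (v : V) (hd : Disjoint S C) (hv : v ∈ S)
    (h1 : ∀ c ∈ C, G.mult c v = S.card + 1)
    (h3 : ∀ c ∈ C, ∀ d ∈ C, c ≠ d → G.mult c d = 1)
    (D D' f : V → ℤ) (hD : ∀ x ∈ S ∪ C, 0 ≤ D x) (hD' : ∀ x ∈ S ∪ C, 0 ≤ D' x)
    (hf : ∀ x ∈ S ∪ C, D' x = D x - ∑ u ∈ S ∪ C, (G.mult x u : ℤ) * (f x - f u))
    (hdeg : ∑ x ∈ S ∪ C, D x < ((S ∪ C).card : ℤ)) (c : V) (hc : c ∈ C) : f c ≤ f v := by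
  by_contra! hlt
  set A := (S ∪ C).filter (fun w => f c ≤ f w) with hA
  set B := (S ∪ C).filter (fun w => ¬ f c ≤ f w) with hB
  set T := C.filter (fun w => f c ≤ f w) with hT
  set T' := C.filter (fun w => ¬ f c ≤ f w) with hT'
  have hvC : v ∉ C := fun h => (Finset.disjoint_left.mp hd hv h)
  have hvT' : v ∉ T' := fun h => hvC (Finset.mem_filter.mp h).1
  have hTA : T ⊆ A := fun x hx => by
    simp only [hT, hA, Finset.mem_filter, Finset.mem_union] at hx ⊢; tauto
  have hTB : insert v T' ⊆ B := fun x hx => by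
    simp only [hT', hB, Finset.mem_filter, Finset.mem_union, Finset.mem_insert] at hx ⊢
    rcases hx with rfl | hx
    · exact ⟨Or.inl hv, not_le.mpr hlt⟩
    · tauto
  have hAS : A ⊆ S ∪ C := Finset.filter_subset _ _
  have e1 : ∑ x ∈ A, D x ≤ ∑ x ∈ S ∪ C, D x :=
    Finset.sum_le_sum_of_subset_of_nonneg hAS (fun x hx _ => hD x hx)
  have e2 : ∑ w ∈ A, ∑ u ∈ S ∪ C, (G.mult w u : ℤ) * (f w - f u) ≤ ∑ x ∈ A, D x := by
    refine Finset.sum_le_sum fun x hx => ?_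
    have := hf x (hAS hx)
    have := hD' x (hAS hx)
    linarith
  have e3 : ∑ w ∈ A, ∑ u ∈ S ∪ C, (G.mult w u : ℤ) * (f w - f u)
      = ∑ w ∈ A, ∑ u ∈ B, (G.mult w u : ℤ) * (f w - f u) := by
    have : ∀ w ∈ A, ∑ u ∈ S ∪ C, (G.mult w u : ℤ) * (f w - f u)
      = ∑ u ∈ A, (G.mult w u : ℤ) * (f w - f u) + ∑ u ∈ B, (G.mult w u : ℤ) * (f w - f u) :=
      fun w _ => (Finset.sum_filter_add_sum_filter_not _ _ _).symm
    rw [Finset.sum_congr rfl this, Finset.sum_add_distrib, sum_lap, zero_add]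
  have e4 : ∑ w ∈ A, ∑ u ∈ B, (G.mult w u : ℤ) ≤
      ∑ w ∈ A, ∑ u ∈ B, (G.mult w u : ℤ) * (f w - f u) := by
    refine Finset.sum_le_sum fun w hw => Finset.sum_le_sum fun u hu => ?_
    have a := (Finset.mem_filter.mp hw).2
    have b := (Finset.mem_filter.mp hu).2
    have : (1 : ℤ) ≤ f w - f u := by omega
    nlinarith [Int.natCast_nonneg (G.mult w u)]
  have e5 : ∑ w ∈ T, ∑ u ∈ insert v T', (G.mult w u : ℤ) ≤ ∑ w ∈ A, ∑ u ∈ B, (G.mult w u : ℤ) := by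
    calc _ ≤ ∑ w ∈ T, ∑ u ∈ B, (G.mult w u : ℤ) :=
          Finset.sum_le_sum fun w _ =>
            Finset.sum_le_sum_of_subset_of_nonneg hTB (fun _ _ _ => Int.natCast_nonneg _)
      _ ≤ _ := Finset.sum_le_sum_of_subset_of_nonneg hTA
          (fun _ _ _ => Finset.sum_nonneg fun _ _ => Int.natCast_nonneg _)
  have e6 : ∑ w ∈ T, ∑ u ∈ insert v T', (G.mult w u : ℤ)
      = T.card * ((S.card : ℤ) + 1 + T'.card) := by
    rw [← nsmul_eq_mul, ← Finset.sum_const]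
    refine Finset.sum_congr rfl fun w hw => ?_
    rw [Finset.sum_insert hvT', h1 w (Finset.mem_filter.mp hw).1]
    have : ∑ u ∈ T', (G.mult w u : ℤ) = ∑ u ∈ T', 1 := by
      refine Finset.sum_congr rfl fun u hu => ?_
      rw [h3 w (Finset.mem_filter.mp hw).1 u (Finset.mem_filter.mp hu).1]
      · rfl
      · rintro rfl
        exact (Finset.mem_filter.mp hu).2 (Finset.mem_filter.mp hw).2
    rw [this]; simp
  have e7 : T.card + T'.card = C.card := Finset.card_filter_add_card_filter_not _
  have e8 : (S ∪ C).card = S.card + C.card := Finset.card_union_of_disjoint hd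
  have e9 : 1 ≤ T.card := Finset.card_pos.mpr ⟨c, by simp [hT, hc]⟩
  have e10 : ((S ∪ C).card : ℤ) ≤ T.card * ((S.card : ℤ) + 1 + T'.card) := by
    rw [e8, ← e7]; push_cast
    have : (1 : ℤ) ≤ T.card := by exact_mod_cast e9
    nlinarith [Int.natCast_nonneg S.card, Int.natCast_nonneg T'.card]
  linarith

lemma key_eq (G : Multigraph V) (S C : Finset V) (v : V) (hd : Disjoint S C) (hv : v ∈ S)
    (h1 : ∀ c ∈ C, G.mult c v = S.card + 1)
    (h3 : ∀ c ∈ C, ∀ d ∈ C, c ≠ d → G.mult c d = 1)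
    (D D' f : V → ℤ) (hD : ∀ x ∈ S ∪ C, 0 ≤ D x) (hD' : ∀ x ∈ S ∪ C, 0 ≤ D' x)
    (hf : ∀ x ∈ S ∪ C, D' x = D x - ∑ u ∈ S ∪ C, (G.mult x u : ℤ) * (f x - f u))
    (hdeg : ∑ x ∈ S ∪ C, D x < ((S ∪ C).card : ℤ)) (c : V) (hc : c ∈ C) : f c = f v := by
  apply le_antisymm
  · exact key_le G S C v hd hv h1 h3 D D' f hD hD' hf hdeg c hc
  · have := key_le G S C v hd hv h1 h3 D' D (fun x => - f x) hD' hD ?_ ?_ c hc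
    · simpa using this
    · intro x hx
      rw [hf x hx, sub_sub, ← Finset.sum_add_distrib, Finset.sum_eq_zero, sub_zero]
      intros; ring
    · rw [Finset.sum_congr rfl hf, Finset.sum_sub_distrib, sum_lap, sub_zero]; exact hdeg

lemma tower_bound (G : Multigraph V) (S : Finset V) (hS : G.Tower S) (D : V → ℤ)
    (hD : ∀ x ∈ S, 0 ≤ D x)
    (h : ∀ w ∈ S, ∃ D' f : V → ℤ, (∀ x ∈ S, 0 ≤ D' x) ∧ 1 ≤ D' w ∧
      ∀ x ∈ S, D' x = D x - ∑ u ∈ S, (G.mult x u : ℤ) * (f x - f u)) :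
    (S.card : ℤ) ≤ ∑ x ∈ S, D x := by
  induction hS with
  | base v =>
    obtain ⟨D', f, _, h1, h2⟩ := h v (by simp)
    have := h2 v (by simp)
    simp at this ⊢
    omega
  | step S C v hS hd hv h1 h2 h3 ih =>
    by_contra! hdeg
    have hC : ∀ c ∈ C, 1 ≤ D c := by
      intro c hc
      obtain ⟨D', f, g1, g2, g3⟩ := h c (Finset.mem_union_right _ hc)
      have hconst := key_eq G S C v hd hv h1 h3 D D' f hD g1 g3 hdeg
      have := g3 c (Finset.mem_union_right _ hc)
      rw [Finset.sum_eq_zero] at this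
      · omega
      · intro u hu
        rcases Finset.mem_union.mp hu with hu | hu
        · by_cases huv : u = v
          · rw [huv, hconst c hc]; simp
          · rw [h2 c hc u hu huv]; simp
        · rw [hconst c hc, hconst u hu]; simp
    have hS' := ih (fun x hx => hD x (Finset.mem_union_left _ hx)) (by
      intro w hw
      obtain ⟨D', f, g1, g2, g3⟩ := h w (Finset.mem_union_left _ hw)
      have hconst := key_eq G S C v hd hv h1 h3 D D' f hD g1 g3 hdeg
      refine ⟨D', f, fun x hx => g1 x (Finset.mem_union_left _ hx), g2, fun x hx => ?_⟩
      rw [g3 x (Finset.mem_union_left _ hx), Finset.sum_union hd,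
        Finset.sum_eq_zero (s := C), add_zero]
      intro u hu
      by_cases hxv : x = v
      · rw [hxv, hconst u hu]; simp
      · rw [G.symm, h2 u hu x hx hxv]; simp)
    rw [Finset.sum_union hd, Finset.card_union_of_disjoint hd] at hdeg
    have : ∑ c ∈ C, (1 : ℤ) ≤ ∑ c ∈ C, D c := Finset.sum_le_sum hC
    simp at this
    push_cast at hdeg
    omega

lemma tower_edges (G : Multigraph V) (S : Finset V) (hS : G.Tower S) :
    ∑ u ∈ S, ∑ w ∈ S, (G.mult u w : ℤ) = ((S.card : ℤ) - 1) * (S.card + 2) := by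
  induction hS with
  | base v => simp [G.loopless]
  | step S C v hS hd hv h1 h2 h3 ih =>
    have a1 : ∀ c ∈ C, ∑ w ∈ S, (G.mult c w : ℤ) = S.card + 1 := by
      intro c hc
      rw [Finset.sum_eq_single_of_mem v hv, h1 c hc]
      · push_cast; rfl
      · intro x hx hxv; rw [h2 c hc x hx hxv]; rfl
    have a2 : ∀ c ∈ C, ∑ w ∈ C, (G.mult c w : ℤ) = C.card - 1 := by
      intro c hc
      rw [← Finset.add_sum_erase _ _ hc, G.loopless,
        Finset.sum_congr rfl (g := fun _ => (1 : ℤ))]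
      · simp [Finset.card_erase_of_mem hc]
        have := Finset.card_pos.mpr ⟨c, hc⟩
        omega
      · intro x hx
        rw [h3 c hc x (Finset.mem_of_mem_erase hx) (Finset.ne_of_mem_erase hx).symm]; rfl
    have a3 : ∑ u ∈ S, ∑ w ∈ C, (G.mult u w : ℤ) = ∑ c ∈ C, ∑ w ∈ S, (G.mult c w : ℤ) := by
      rw [Finset.sum_comm]
      refine Finset.sum_congr rfl fun _ _ => Finset.sum_congr rfl fun _ _ => ?_
      rw [G.symm]
    simp only [Finset.sum_union hd, Finset.sum_add_distrib]
    rw [ih, a3, Finset.sum_congr rfl a1, Finset.sum_congr rfl a2,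
      Finset.card_union_of_disjoint hd]
    simp
    ring

lemma qb_tower (G : Multigraph V) (hQB : G.IsQuasiBanana) : G.Tower Finset.univ := by
  obtain ⟨m, q, ℓ, hq, hinj, hr, hs, hm⟩ := hQB
  have key : ∀ j, j ≤ m → G.Tower (Finset.univ.filter fun v => (ℓ v).1 ≤ j) ∧
      (Finset.univ.filter fun v => (ℓ v).1 ≤ j).card = 1 + ∑ i ∈ Finset.Icc 1 j, q i := by
    intro j
    induction j with
    | zero =>
      intro _
      obtain ⟨v, hv⟩ := hs 0 1 (Nat.zero_le _) le_rfl (by simp [qbSize])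
      have : (Finset.univ.filter fun v => (ℓ v).1 ≤ 0) = {v} := by
        ext x
        simp only [Finset.mem_filter, Finset.mem_univ, true_and, Finset.mem_singleton]
        constructor
        · intro hx
          apply hinj
          obtain ⟨_, h1, h2⟩ := hr x
          have h0 : (ℓ x).1 = 0 := by omega
          rw [h0] at h2
          simp [qbSize] at h2
          rw [hv]
          ext <;> simp <;> omega
        · rintro rfl; simp [hv]
      rw [this]
      exact ⟨Tower.base v, by simp⟩
    | succ j ih =>
      intro hj
      obtain ⟨ihT, ihc⟩ := ih (by omega)
      have hpos : 1 ≤ qbSize q j := by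
        unfold qbSize
        split_ifs with h
        · exact le_rfl
        · exact hq j (by omega) (by omega)
      obtain ⟨v, hv⟩ := hs j 1 (by omega) le_rfl hpos
      have hun : (Finset.univ.filter fun v => (ℓ v).1 ≤ j + 1) =
          (Finset.univ.filter fun v => (ℓ v).1 ≤ j) ∪
          (Finset.univ.filter fun v => (ℓ v).1 = j + 1) := by
        ext x
        simp only [Finset.mem_filter, Finset.mem_univ, true_and, Finset.mem_union]
        omega
      have hd : Disjoint (Finset.univ.filter fun v => (ℓ v).1 ≤ j)
          (Finset.univ.filter fun v => (ℓ v).1 = j + 1) := by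
        rw [Finset.disjoint_left]
        intro x
        simp only [Finset.mem_filter, Finset.mem_univ, true_and]
        omega
      have hcard : (Finset.univ.filter fun v => (ℓ v).1 = j + 1).card = q (j + 1) := by
        have : (Finset.univ.filter fun v => (ℓ v).1 = j + 1).image (fun v => (ℓ v).2)
            = Finset.Icc 1 (q (j + 1)) := by
          ext b
          simp only [Finset.mem_image, Finset.mem_filter, Finset.mem_univ, true_and,
            Finset.mem_Icc]
          constructor
          · rintro ⟨x, hx, rfl⟩
            have := hr x
            rw [hx] at this
            simp [qbSize] at this
            omega
          · rintro ⟨b1, b2⟩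
            obtain ⟨x, hx⟩ := hs (j + 1) b hj b1 (by simpa [qbSize] using b2)
            exact ⟨x, by simp [hx], by simp [hx]⟩
        rw [← Finset.card_image_of_injOn (f := fun v => (ℓ v).2), this]
        · simp
        · intro x hx y hy hxy
          simp at hx hy hxy
          exact hinj (Prod.ext (by omega) hxy)
      rw [hun]
      refine ⟨Tower.step _ _ v ihT hd (by simp [hv]) ?_ ?_ ?_, ?_⟩
      · intro c hc
        simp only [Finset.mem_filter, Finset.mem_univ, true_and] at hc
        rw [hm c v (by rintro rfl; rw [hv] at hc; simp at hc), ihc, hc, hv]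
        rw [if_neg (by simp), if_neg (by simp; omega), if_pos (by simp)]
        ring
      · intro c hc x hx hxv
        simp only [Finset.mem_filter, Finset.mem_univ, true_and] at hc hx
        rw [hm c x (by rintro rfl; omega), hc]
        rw [if_neg (by omega), if_neg (by omega), if_neg]
        rintro ⟨h1, h2⟩
        apply hxv
        apply hinj
        rw [hv]
        ext <;> simp <;> omega
      · intro c hc d hd' hcd
        simp only [Finset.mem_filter, Finset.mem_univ, true_and] at hc hd'
        rw [hm c d hcd, if_pos (by omega)]
      · rw [Finset.card_union_of_disjoint hd, ihc, hcard,
          Finset.sum_Icc_succ_top (by omega)]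
        ring
  have := (key m le_rfl).1
  rwa [Finset.filter_true_of_mem (fun v _ => (hr v).1)] at this

lemma rank_one_bound (G : Multigraph V) (hT : G.Tower Finset.univ) (hne : Nonempty V) (D : V → ℤ)
    (h : ∀ E : V → ℤ, Effective E → degree E = 1 → G.Winnable (fun w => D w - E w)) :
    (Fintype.card V : ℤ) ≤ degree D := by
  have h' : ∀ w : V, ∃ D' f : V → ℤ, (∀ x, 0 ≤ D' x) ∧ 1 ≤ D' w ∧
      ∀ x, D' x = D x - ∑ u, (G.mult x u : ℤ) * (f x - f u) := by
    intro w
    obtain ⟨E, hE, f, hf⟩ := h (Pi.single w 1) (by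
      intro x
      by_cases hx : x = w
      · subst hx; simp
      · simp [hx]) (by simp [degree])
    refine ⟨fun x => E x + Pi.single (M := fun _ => ℤ) w 1 x, f, ?_, ?_, ?_⟩
    · intro x
      have := hE x
      by_cases hx : x = w
      · subst hx; simp; omega
      · simp [hx]; omega
    · have := hE w
      simp; omega
    · intro x
      have := congrFun hf x
      simp only [Pi.sub_apply, laplacian] at this
      change E x + Pi.single (M := fun _ => ℤ) w 1 x = _
      rw [this]; ring
  obtain ⟨v0⟩ := hne
  obtain ⟨D0, f0, a1, a2, a3⟩ := h' v0
  have := tower_bound G Finset.univ hT D0 (fun x _ => a1 x) (by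
    intro w _
    obtain ⟨D', f, b1, b2, b3⟩ := h' w
    refine ⟨D', fun x => f x - f0 x, fun x _ => b1 x, b2, fun x _ => ?_⟩
    rw [b3, a3, sub_sub, ← Finset.sum_add_distrib]
    congr 1
    refine Finset.sum_congr rfl fun _ _ => ?_
    ring)
  rw [Finset.sum_congr rfl (fun x _ => a3 x), Finset.sum_sub_distrib, sum_lap, sub_zero] at this
  simpa [degree] using this

lemma gon_one (G : Multigraph V) (hT : G.Tower Finset.univ) (hne : Nonempty V) :
    G.gonality 1 = (Fintype.card V : ℤ) := by
  refine IsLeast.csInf_eq ⟨⟨fun _ => 1, ?_, by simp [degree]⟩, ?_⟩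
  · refine IsGreatest.csSup_eq ⟨?_, ?_⟩
    · intro E hE hdeg
      refine ⟨fun w => 1 - E w, ?_, 0, ?_⟩
      · intro w
        have : E w ≤ degree E := Finset.single_le_sum (fun x _ => hE x) (Finset.mem_univ w)
        simp only
        omega
      · funext w; simp [laplacian]
    · intro r hr
      by_contra! hlt
      obtain ⟨v0⟩ := hne
      have := rank_one_bound G hT ⟨v0⟩ (fun w => 1 - Pi.single (M := fun _ => ℤ) v0 (r - 1) w) (by
        intro E hE hdeg
        have hw := hr (fun w => Pi.single (M := fun _ => ℤ) v0 (r - 1) w + E w) (by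
          intro x
          have := hE x
          by_cases hx : x = v0
          · subst hx; simp; omega
          · simp [hx]; omega) (by
          simp only [degree] at hdeg ⊢
          rw [Finset.sum_add_distrib, hdeg]; simp)
        simpa only [sub_sub] using hw)
      simp [degree] at this
      omega
  · rintro d ⟨D, hr, rfl⟩
    refine rank_one_bound G hT hne D ?_
    have hr' := hr
    unfold rank at hr
    set s := {r : ℤ | ∀ E : V → ℤ, Effective E → degree E = r →
      G.Winnable (fun w => D w - E w)} with hs
    have hsn : s.Nonempty := by
      by_contra hn
      rw [Set.not_nonempty_iff_eq_empty.mp hn] at hr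
      simp at hr
    have hsb : BddAbove s := by
      by_contra hn
      rw [Int.csSup_of_not_bddAbove hn] at hr
      simp at hr
    have := Int.csSup_mem hsn hsb
    rw [hr] at this
    exact this

end Multigraph

/-- If `G` is a quasi-banana graph with first gonality `k`, then the genus
of `G` equals `C(k,2)`. -/
theorem stmt1 (G : Multigraph V) (hG : G.Connected) (hQB : G.IsQuasiBanana)
    (k : ℕ) (hk : G.gonality 1 = (k : ℤ)) :
    G.genus = (Nat.choose k 2 : ℤ) := by
  have hT := G.qb_tower hQB
  have hg := G.gon_one hT hG.1
  have he := G.tower_edges _ hT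
  rw [hg] at hk
  have hk' : Fintype.card V = k := by exact_mod_cast hk
  unfold Multigraph.genus
  push_cast
  rw [he, Finset.card_univ, hk']
  have hpos : 1 ≤ k := by rw [← hk']; haveI := hG.1; exact Fintype.card_pos
  obtain ⟨n, rfl⟩ : ∃ n, k = n + 1 := ⟨k - 1, by omega⟩
  have h2 : (n + 1) * n = 2 * (n + 1).choose 2 := by
    have := Nat.triangle_succ n
    have h := Nat.choose_two_right (n + 1)
    have hev : 2 ∣ (n + 1) * n := by
      rw [mul_comm]; exact (Nat.even_mul_succ_self n).two_dvd
    simp at h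
    omega
  have h3 : (((n + 1 : ℕ) : ℤ) - 1) * ((n + 1 : ℕ) + 2) = 2 * (((n + 1).choose 2 : ℤ) + n) := by
    have : ((n : ℤ) + 1) * n = 2 * ((n + 1).choose 2 : ℤ) := by exact_mod_cast h2
    push_cast
    linarith
  rw [h3, Int.mul_ediv_cancel_left _ (by norm_num)]
  push_cast
  ring
end

section
/- Let G be a quasi-banana graph with first gonality gon_1(G) = k and genus g = C(k,2). Then for every integer r ≥ 1: if r < g then gon_r(G) = l(k+1) - h, where 1 ≤ l ≤ k-2 and 0 ≤ h ≤ l are the uniquely determined integers such that r = l(l+3)/2 - h; and if r ≥ g then gon_r(G) = g + r. -/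
open Finset

variable {V : Type*} [Fintype V] [DecidableEq V]

def qpos (k : ℕ) (l : ℤ) : ℤ := ∑ i ∈ range k, max (l - i) 0
def qneg (k : ℕ) (l : ℤ) : ℤ := ∑ i ∈ range k, max (i - l) 0

lemma qpos_succ (k : ℕ) (l : ℤ) : qpos (k+1) l = qpos k l + max (l - k) 0 := by
  simp [qpos, sum_range_succ]
lemma qneg_succ (k : ℕ) (l : ℤ) : qneg (k+1) l = qneg k l + max (k - l) 0 := by
  simp [qneg, sum_range_succ]

lemma qpos_sub_qneg (k : ℕ) (l : ℤ) : 2 * (qpos k l - qneg k l) = 2 * l * k - k * (k - 1) := by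
  induction k with
  | zero => simp [qpos, qneg]
  | succ k ih =>
    rw [qpos_succ, qneg_succ]
    have : max (l - k) 0 - max ((k:ℤ) - l) 0 = l - k := by
      rcases le_total l k with h | h
      · rw [max_eq_right (by omega), max_eq_left (by omega)]; ring
      · rw [max_eq_left (by omega), max_eq_right (by omega)]; ring
    push_cast
    linarith

lemma qpos_nonneg (k : ℕ) (l : ℤ) : 0 ≤ qpos k l := sum_nonneg fun _ _ => le_max_right _ _
lemma qneg_nonneg (k : ℕ) (l : ℤ) : 0 ≤ qneg k l := sum_nonneg fun _ _ => le_max_right _ _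

lemma qpos_of_le (k : ℕ) (l : ℤ) (h0 : 0 ≤ l) (h : l ≤ k) : 2 * qpos k l = l * (l + 1) := by
  induction k with
  | zero =>
    have : l = 0 := by push_cast at h; omega
    subst this; simp [qpos]
  | succ k ih =>
    rw [qpos_succ]
    rcases le_or_gt l k with h1 | h1
    · rw [max_eq_right (by omega), add_zero, ih h1]
    · have h2 : l = k + 1 := by push_cast at h; omega
      have h3 := qpos_sub_qneg k l
      have h4 : qneg k l = 0 := by
        apply sum_eq_zero
        intro i hi
        have := mem_range.1 hi
        rw [max_eq_right]; omega
      rw [max_eq_left (by omega)]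
      rw [h4] at h3
      have h5 : (k : ℤ) = l - 1 := by omega
      rw [h5] at h3 ⊢
      linarith

lemma qpos_of_ge (k : ℕ) (l : ℤ) (h : (k:ℤ) - 1 ≤ l) : 2 * qpos k l = 2 * l * k - k * (k - 1) := by
  have h3 := qpos_sub_qneg k l
  have h4 : qneg k l = 0 := by
    apply sum_eq_zero
    intro i hi
    have := mem_range.1 hi
    rw [max_eq_right]; omega
  rw [h4] at h3; linarith

lemma qneg_of_le (k : ℕ) (l : ℤ) (h0 : 0 ≤ l) (h : l ≤ k) : 2 * qneg k l = (k - l) * (k - l - 1) := by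
  have h3 := qpos_sub_qneg k l
  have h4 := qpos_of_le k l h0 h
  linarith

lemma qpos_mono (k : ℕ) {a b : ℤ} (h : a ≤ b) : qpos k a ≤ qpos k b :=
  sum_le_sum fun i _ => max_le_max (by omega) le_rfl
lemma qneg_anti (k : ℕ) {a b : ℤ} (h : a ≤ b) : qneg k b ≤ qneg k a :=
  sum_le_sum fun i _ => max_le_max (by omega) le_rfl

/-- Contiguous families of positive integers have small sum. -/
lemma contig_sum {ι : Type*} [DecidableEq ι] (a : ι → ℤ) : ∀ (n : ℕ) (s : Finset ι), s.card = n →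
    (∀ i ∈ s, 1 ≤ a i) → (∀ i ∈ s, 2 ≤ a i → ∃ j ∈ s, a j = a i - 1) →
    2 * ∑ i ∈ s, a i ≤ n * (n + 1) ∧ ∀ i ∈ s, a i ≤ n := by
  intro n
  induction n with
  | zero =>
    intro s hs _ _
    rw [card_eq_zero] at hs
    subst hs; simp
  | succ n ih =>
    intro s hs h1 h2
    have hne : s.Nonempty := by rw [← card_pos]; omega
    obtain ⟨m, hm, hmax⟩ := exists_max_image s a hne
    obtain ⟨ih1, ih2⟩ := ih (s.erase m) (by rw [card_erase_of_mem hm]; omega)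
      (fun i hi => h1 i (mem_of_mem_erase hi))
      (by
        intro i hi hai
        obtain ⟨j, hj, hja⟩ := h2 i (mem_of_mem_erase hi) hai
        refine ⟨j, mem_erase.2 ⟨?_, hj⟩, hja⟩
        rintro rfl
        have := hmax i (mem_of_mem_erase hi)
        omega)
    have hmn : a m ≤ n + 1 := by
      rcases lt_or_ge (a m) 2 with h | h
      · omega
      · obtain ⟨j, hj, hja⟩ := h2 m hm h
        have := ih2 j (mem_erase.2 ⟨by rintro rfl; omega, hj⟩)
        omega
    constructor
    · rw [← add_sum_erase s a hm]
      push_cast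
      nlinarith
    · intro i hi
      have := hmax i hi
      push_cast
      omega

/-- Distinct nonnegative integers have large sum. -/
lemma distinct_sum : ∀ (n : ℕ) (s : Finset ℤ), s.card = n → (∀ i ∈ s, 0 ≤ i) →
    (n : ℤ) * (n - 1) ≤ 2 * ∑ i ∈ s, i := by
  intro n
  induction n with
  | zero => intro s hs _; rw [card_eq_zero] at hs; subst hs; simp
  | succ n ih =>
    intro s hs h0
    have hne : s.Nonempty := by rw [← card_pos]; omega
    obtain ⟨m, hm, hmax⟩ := exists_max_image s id hne
    have ih1 := ih (s.erase m) (by rw [card_erase_of_mem hm]; omega)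
      (fun i hi => h0 i (mem_of_mem_erase hi))
    have hsub : s ⊆ Icc 0 m := fun i hi => mem_Icc.2 ⟨h0 i hi, hmax i hi⟩
    have hc := card_le_card hsub
    have := h0 m hm
    rw [Int.card_Icc, hs] at hc
    have : (n : ℤ) ≤ m := by omega
    rw [← add_sum_erase s _ hm]
    push_cast
    linarith

lemma distinct_pos (n : ℕ) (a : ℤ) (s : Finset ℤ) (hs : s.card = n)
    (hsum : 2 * ∑ z ∈ s, z = 2 * a * n - n * (n - 1)) : qpos n a ≤ ∑ z ∈ s, max z 0 := by
  rcases lt_or_ge a 0 with h | h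
  · have : qpos n a = 0 := by
      apply sum_eq_zero
      intro i _
      rw [max_eq_right]; omega
    rw [this]
    exact sum_nonneg fun _ _ => le_max_right _ _
  rcases lt_or_ge (n : ℤ) a with h' | h'
  · have h1 := qpos_of_ge n a (by omega)
    have : ∑ z ∈ s, z ≤ ∑ z ∈ s, max z 0 := sum_le_sum fun _ _ => le_max_left _ _
    linarith
  have h1 := qpos_of_le n a h h'
  set p := (s.filter (fun z => 0 < z)).card with hp
  have hsplit := card_filter_add_card_filter_not (s := s) (fun z => 0 < z)
  have e1 : ∑ z ∈ s, max z 0 = ∑ z ∈ s.filter (fun z => 0 < z), z := by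
    rw [sum_filter]
    apply sum_congr rfl
    intro z _
    split_ifs with hz
    · exact max_eq_left hz.le
    · exact max_eq_right (by omega)
  rcases le_or_gt a p with h2 | h2
  · have := distinct_sum p ((s.filter (fun z => 0 < z)).image (fun z => z - 1))
      (by rw [card_image_of_injective _ (fun x y h => by simpa using h)])
      (by intro i hi; simp only [mem_image, mem_filter] at hi; obtain ⟨z, hz, rfl⟩ := hi; omega)
    rw [sum_image (fun x _ y _ h => by simpa using h), sum_sub_distrib, sum_const, ← hp] at this
    rw [e1]
    simp only [nsmul_eq_mul, mul_one] at this
    nlinarith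
  · have hd := distinct_sum (n - p) ((s.filter (fun z => ¬ 0 < z)).image (fun z => -z))
      (by rw [card_image_of_injective _ (fun x y h => by simpa using h)]; omega)
      (by intro i hi; simp only [mem_image, mem_filter] at hi; obtain ⟨z, hz, rfl⟩ := hi; omega)
    rw [sum_image (fun x _ y _ h => by simpa using h), sum_neg_distrib] at hd
    have e2 := sum_filter_add_sum_filter_not s (fun z : ℤ => 0 < z) (fun z => z)
    rw [e1]
    have hcast : ((n - p : ℕ) : ℤ) = n - p := by omega
    rw [hcast] at hd
    have h3 : (n - a) * (n - a - 1) ≤ ((n:ℤ) - p) * (n - p - 1) := by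
      have : (n:ℤ) - a + 1 ≤ n - p := by omega
      nlinarith
    nlinarith


/-- `p` numbers the elements of `C` by `0, …, #C - 1`. -/
def Numb {V : Type*} (C : Finset V) (p : V → ℤ) : Prop :=
  (∀ w ∈ C, 0 ≤ p w ∧ p w < #C) ∧ ∀ u ∈ C, ∀ v ∈ C, p u = p v → u = v

lemma Numb.image {V : Type*} [DecidableEq V] {C : Finset V} {p : V → ℤ} (h : Numb C p) :
    C.image p = Ico (0 : ℤ) #C := by
  apply eq_of_subset_of_card_le
  · intro i hi
    obtain ⟨w, hw, rfl⟩ := mem_image.1 hi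
    exact mem_Ico.2 (h.1 w hw)
  · rw [card_image_of_injOn (fun u hu v hv e => h.2 u hu v hv e)]
    simp

lemma Numb.sum {V : Type*} [DecidableEq V] {C : Finset V} {p : V → ℤ} (h : Numb C p) (F : ℤ → ℤ) :
    ∑ w ∈ C, F (p w) = ∑ i ∈ Ico (0 : ℤ) #C, F i := by
  rw [← h.image, sum_image (fun u hu v hv e => h.2 u hu v hv e)]

lemma Numb.surj {V : Type*} [DecidableEq V] {C : Finset V} {p : V → ℤ} (h : Numb C p) (i : ℤ)
    (h0 : 0 ≤ i) (h1 : i < #C) : ∃ w ∈ C, p w = i := by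
  have : i ∈ C.image p := by rw [h.image]; exact mem_Ico.2 ⟨h0, h1⟩
  simpa using this

lemma exists_sort {V : Type*} [DecidableEq V] (g : V → ℤ) : ∀ (n : ℕ) (s : Finset V), s.card = n →
    ∃ b : V → ℤ, Numb s b ∧ ∀ u ∈ s, ∀ v ∈ s, b u ≤ b v → g u ≤ g v := by
  intro n
  induction n with
  | zero =>
    intro s hs
    rw [card_eq_zero] at hs
    subst hs; exact ⟨fun _ => 0, by simp [Numb], by simp⟩
  | succ n ih =>
    intro s hs
    have hne : s.Nonempty := by rw [← card_pos]; omega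
    obtain ⟨m, hm, hmax⟩ := exists_max_image s g hne
    have hc : (s.erase m).card = n := by rw [card_erase_of_mem hm]; omega
    obtain ⟨b, ⟨hb1, hb2⟩, hb3⟩ := ih (s.erase m) hc
    rw [hc] at hb1
    refine ⟨fun v => if v = m then n else b v, ⟨?_, ?_⟩, ?_⟩
    · intro w hw
      rw [hs]
      by_cases e : w = m
      · simp [e]
      · have := hb1 w (mem_erase.2 ⟨e, hw⟩)
        simp only [e, if_false]; push_cast; omega
    · intro u hu v hv
      by_cases eu : u = m <;> by_cases ev : v = m
      · simp [eu, ev]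
      · have := hb1 v (mem_erase.2 ⟨ev, hv⟩)
        simp only [eu, ev, if_true, if_false]; omega
      · have := hb1 u (mem_erase.2 ⟨eu, hu⟩)
        simp only [eu, ev, if_true, if_false]; omega
      · simp only [eu, ev, if_false]
        exact hb2 u (mem_erase.2 ⟨eu, hu⟩) v (mem_erase.2 ⟨ev, hv⟩)
    · intro u hu v hv
      by_cases eu : u = m <;> by_cases ev : v = m
      · simp [eu, ev]
      · have := hb1 v (mem_erase.2 ⟨ev, hv⟩)
        simp only [eu, ev, if_true, if_false]; omega
      · intro _; rw [ev]; exact hmax u hu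
      · simp only [eu, ev, if_false]
        exact hb3 u (mem_erase.2 ⟨eu, hu⟩) v (mem_erase.2 ⟨ev, hv⟩)

/-- The rotation lemma. -/
lemma rot_lemma {V : Type*} [DecidableEq V] (C : Finset V) (hC : C.Nonempty) (κ : ℕ) (hκ : 1 ≤ κ)
    (x : V → ℤ) : ∃ γ : ℤ → ℤ, (∀ j, γ j - 1 ≤ γ (j + 1)) ∧ (∀ j, γ (j + #C) = γ j + κ) ∧
      ∀ T : ℤ, ∃ (f p : V → ℤ), Numb C p ∧
        ∀ w ∈ C, x w - ((κ : ℤ) + #C) * f w + ∑ u ∈ C, f u = γ (T + p w) + (κ - 1) + p w := by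
  set q : ℤ := (#C : ℤ) with hq
  have hq0 : 0 < q := by have := hC.card_pos; omega
  set N : ℤ := κ + q with hN
  have hN0 : 0 < N := by omega
  obtain ⟨b, hb, hbm⟩ := exists_sort (fun v => x v % N) _ C rfl
  have hinv : ∀ j : ℤ, ∃ w, w ∈ C ∧ b w = j % q := by
    intro j
    obtain ⟨w, hw, e⟩ := hb.surj (j % q) (Int.emod_nonneg _ hq0.ne') (Int.emod_lt_of_pos _ hq0)
    exact ⟨w, hw, e⟩
  choose inv hinv1 hinv2 using hinv
  let h : ℤ → ℤ := fun j => x (inv j) % N + N * (j / q)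
  have hh : ∀ j, ∀ w ∈ C, b w = j % q → h j = x w % N + N * (j / q) := by
    intro j w hw e
    have : inv j = w := hb.2 _ (hinv1 j) _ hw (by rw [hinv2, e])
    simp only [h, this]
  have hmono : ∀ j, h j ≤ h (j + 1) := by
    intro j
    have d1 := Int.emod_add_mul_ediv j q
    have d2 := Int.emod_add_mul_ediv (j+1) q
    have a1 := Int.emod_nonneg j hq0.ne'
    have a2 := Int.emod_lt_of_pos j hq0
    have a3 := Int.emod_nonneg (j+1) hq0.ne'
    have a4 := Int.emod_lt_of_pos (j+1) hq0
    have c1 := Int.emod_nonneg (x (inv j)) hN0.ne'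
    have c2 := Int.emod_lt_of_pos (x (inv j)) hN0
    have c3 := Int.emod_nonneg (x (inv (j+1))) hN0.ne'
    have hle : j / q ≤ (j+1) / q := Int.ediv_le_ediv hq0 (by omega)
    rcases hle.eq_or_lt with e | e
    · have : b (inv j) ≤ b (inv (j+1)) := by
        rw [hinv2, hinv2]
        rw [← e] at d2; omega
      have := hbm _ (hinv1 j) _ (hinv1 (j+1)) this
      simp only [h, ← e]
      linarith
    · have : N * (j / q) + N ≤ N * ((j+1)/q) := by nlinarith
      simp only [h]; linarith
  set F0 := ∑ u ∈ C, x u / N with hF0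
  refine ⟨fun j => h j - j + F0 - (κ - 1), ?_, ?_, ?_⟩
  · intro j; have := hmono j; simp only; linarith
  · intro j
    have e1 : (j + q) / q = j / q + 1 := by rw [Int.add_ediv_of_dvd_right (dvd_refl q), Int.ediv_self hq0.ne']
    have : h (j + q) = h j + N := by
      rw [hh (j + q) (inv j) (hinv1 j) (by rw [hinv2]; simp), hh j (inv j) (hinv1 j) (hinv2 j), e1]
      ring
    simp only [this]; linarith
  · intro T
    have hp0 : ∀ w, 0 ≤ (b w - T) % q := fun w => Int.emod_nonneg _ hq0.ne'
    have hp1 : ∀ w, (b w - T) % q < q := fun w => Int.emod_lt_of_pos _ hq0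
    have hmod : ∀ w ∈ C, (T + (b w - T) % q) % q = b w := by
      intro w hw
      have := hb.1 w hw
      rw [Int.add_emod_emod, add_sub_cancel]
      exact Int.emod_eq_of_lt this.1 this.2
    have hnum : Numb C (fun w => (b w - T) % q) := by
      refine ⟨fun w _ => ⟨hp0 w, hp1 w⟩, ?_⟩
      intro u hu v hv e
      apply hb.2 u hu v hv
      rw [← hmod u hu, ← hmod v hv]
      simp only at e
      rw [e]
    refine ⟨fun w => x w / N - (T + (b w - T) % q) / q, fun w => (b w - T) % q, hnum, ?_⟩
    have hsum : ∑ w ∈ C, (T + (b w - T) % q) / q = T := by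
      have e1 : ∑ w ∈ C, (b w - T) % q = ∑ w ∈ C, b w := by
        rw [hnum.sum (fun i => i), hb.sum (fun i => i)]
      have e2 : ∑ w ∈ C, (T + (b w - T) % q) = ∑ w ∈ C, (b w + q * ((T + (b w - T) % q) / q)) := by
        apply sum_congr rfl
        intro w hw
        have := Int.emod_add_mul_ediv (T + (b w - T) % q) q
        rw [hmod w hw] at this
        exact this.symm
      rw [sum_add_distrib, sum_add_distrib, ← mul_sum, e1, sum_const, nsmul_eq_mul, ← hq] at e2
      have : q * T = q * ∑ w ∈ C, (T + (b w - T) % q) / q := by linarith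
      exact (mul_left_cancel₀ hq0.ne' this).symm
    intro w hw
    simp only [sum_sub_distrib, hsum]
    rw [hh (T + (b w - T) % q) w hw (hmod w hw).symm, ← hF0]
    have := Int.emod_add_mul_ediv (x w) N
    linarith

/-- The burning-type lemma. -/
lemma dhar {V : Type*} [DecidableEq V] (C : Finset V) (κ : ℕ) (y p φ : V → ℤ)
    (hp : Numb C p) (hy : ∀ w ∈ C, y w ≤ κ - 1 + p w)
    (h : ∀ w ∈ C, 0 ≤ y w - ((κ : ℤ) + #C) * φ w + ∑ u ∈ C, φ u) : ∑ u ∈ C, φ u ≤ 0 := by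
  by_contra hcon
  push Not at hcon
  have hne : C.Nonempty := by
    rw [nonempty_iff_ne_empty]; rintro rfl; simp at hcon
  obtain ⟨m, hm, hmax⟩ := exists_max_image C φ hne
  set a := φ m with ha
  have ha1 : 1 ≤ a := by
    by_contra h'
    have : ∑ u ∈ C, φ u ≤ 0 := sum_nonpos fun i hi => by have := hmax i hi; omega
    omega
  set M := C.filter (fun w => φ w = a) with hM
  have hMpos : 1 ≤ #M := card_pos.2 ⟨m, mem_filter.2 ⟨hm, rfl⟩⟩
  have hΦ : ∑ u ∈ C, φ u ≤ #C * a - (#C - #M) := by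
    have e : ∀ u ∈ C, φ u ≤ a - 1 + if φ u = a then 1 else 0 := by
      intro u hu
      have := hmax u hu
      split_ifs <;> omega
    have := sum_le_sum e
    rw [sum_add_distrib, sum_const, ← sum_filter, sum_const] at this
    simp only [nsmul_eq_mul, mul_one] at this
    linarith
  have hex : ∃ w ∈ M, p w ≤ #C - #M := by
    by_contra hno
    push Not at hno
    have hsub : M.image p ⊆ Ico ((#C : ℤ) - #M + 1) #C := by
      intro i hi
      obtain ⟨w, hw, rfl⟩ := mem_image.1 hi
      have h1 := hno w hw
      have h2 := hp.1 w (mem_filter.1 hw).1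
      rw [mem_Ico]; omega
    have := card_le_card hsub
    rw [card_image_of_injOn (fun u hu v hv e => hp.2 u (mem_filter.1 hu).1 v (mem_filter.1 hv).1 e)] at this
    rw [Int.card_Ico] at this; rw [← hM] at this
    omega
  obtain ⟨w, hw, hpw⟩ := hex
  obtain ⟨hwC, hwa⟩ := mem_filter.1 hw
  have h1 := h w hwC
  have h2 := hy w hwC
  rw [hwa] at h1
  nlinarith


/-- The sum of `φ` over the multiset attached to a state. -/
def psum (γ : ℤ → ℤ) (q k' : ℕ) (φ : ℤ → ℤ) (T a : ℤ) : ℤ :=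
  ∑ i ∈ range q, φ (γ (T + i)) + ∑ i ∈ range k', φ (a + 1 + i)

lemma sum_shift (g : ℤ → ℤ) (n : ℕ) (a : ℤ) :
    ∑ i ∈ range n, g (a + 1 + i) = ∑ i ∈ range n, g (a + i) - g a + g (a + n) := by
  induction n with
  | zero => simp
  | succ n ih =>
    rw [sum_range_succ, sum_range_succ, ih]
    push_cast
    have : a + 1 + (n : ℤ) = a + (n + 1) := by ring
    rw [this]; ring

lemma psum_B (γ : ℤ → ℤ) (q k' : ℕ) (φ : ℤ → ℤ) (T a : ℤ) :
    psum γ q k' φ T (a + 1) = psum γ q k' φ T a - φ (a + 1) + φ (a + 1 + k') := by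
  unfold psum
  rw [sum_shift φ k' (a+1)]; ring

lemma psum_A (γ : ℤ → ℤ) (q k' : ℕ) (hper : ∀ j, γ (j + q) = γ j + (k' + 1)) (φ : ℤ → ℤ) (T a : ℤ)
    (h : γ T = a) :
    psum γ q k' φ (T + 1) a = psum γ q k' φ T (a + 1) - φ a + φ (a + 1) := by
  have := psum_B γ q k' φ T a
  have e := sum_shift (fun j => φ (γ j)) q T
  simp only [hper, h] at e
  unfold psum at this ⊢
  rw [e]
  have e2 : a + 1 + (k' : ℤ) = a + (k' + 1) := by ring
  rw [e2] at this
  linarith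

lemma psum_succ (γ : ℤ → ℤ) (q k' : ℕ) (hper : ∀ j, γ (j + q) = γ j + (k' + 1)) (φ : ℤ → ℤ)
    (T a : ℤ) (n : ℕ) (h : ∀ i : ℕ, i < n → γ (T + i) = a - i) :
    psum γ q k' φ (T + n) (a + 1 - n) =
      psum γ q k' φ T a - φ (a + 1 - n) + φ (a + 1 + k') := by
  induction n with
  | zero => simpa using psum_B γ q k' φ T a
  | succ n ih =>
    have h1 := ih (fun i hi => h i (by omega))
    have h2 := psum_A γ q k' hper φ (T + n) (a - n) (h n (by omega))
    have e1 : a - (n : ℤ) + 1 = a + 1 - n := by ring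
    have e2 : a + 1 - ((n + 1 : ℕ) : ℤ) = a - n := by push_cast; ring
    have e3 : T + ((n + 1 : ℕ) : ℤ) = T + n + 1 := by push_cast; ring
    rw [e1, h1] at h2
    rw [e2, e3, h2]; ring

lemma per_mul (γ : ℤ → ℤ) (q κ : ℤ) (hper : ∀ j, γ (j + q) = γ j + κ) (s : ℤ) :
    ∀ j, γ (j + q * s) = γ j + κ * s := by
  induction s using Int.induction_on with
  | zero => simp
  | succ i ih =>
    intro j
    have := hper (j + q * i)
    rw [ih] at this
    have e : j + q * ((i:ℤ) + 1) = j + q * i + q := by ring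
    rw [e, this]; ring
  | pred i ih =>
    intro j
    have := hper (j + q * (-i - 1))
    have e : j + q * (-(i:ℤ) - 1) + q = j + q * (-i) := by ring
    rw [e, ih] at this
    linarith

lemma dec_nat (γ : ℤ → ℤ) (hdec : ∀ j, γ j - 1 ≤ γ (j + 1)) (j : ℤ) (n : ℕ) :
    γ j - n ≤ γ (j + n) := by
  induction n with
  | zero => simp
  | succ n ih =>
    have := hdec (j + n)
    push_cast
    rw [← add_assoc]; linarith

lemma desc (γ : ℤ → ℤ) (hdec : ∀ j, γ j - 1 ≤ γ (j + 1)) (v : ℤ) (T : ℤ) : ∀ (d i : ℕ),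
    v ≤ γ (T + i) → γ (T + (i + d : ℕ)) ≤ v → ∃ j : ℕ, i ≤ j ∧ j ≤ i + d ∧ γ (T + j) = v := by
  intro d
  induction d with
  | zero => intro i h1 h2; exact ⟨i, le_rfl, le_rfl, le_antisymm (by simpa using h2) h1⟩
  | succ d ih =>
    intro i h1 h2
    rcases h1.eq_or_lt with e | e
    · exact ⟨i, le_rfl, by omega, e.symm⟩
    · have h3 := hdec (T + i)
      have e1 : T + (i : ℤ) + 1 = T + ((i + 1 : ℕ) : ℤ) := by push_cast; ring
      rw [e1] at h3
      obtain ⟨j, a1, a2, a3⟩ := ih (i + 1) (by omega)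
        (by rw [show i + 1 + d = i + (d + 1) by ring]; exact h2)
      exact ⟨j, by omega, by omega, a3⟩

lemma desc2 (γ : ℤ → ℤ) (hdec : ∀ j, γ j - 1 ≤ γ (j + 1)) (v : ℤ) (T : ℤ) (i i2 : ℕ)
    (hi : i ≤ i2) (h1 : v ≤ γ (T + i)) (h2 : γ (T + i2) ≤ v) :
    ∃ j : ℕ, j ≤ i2 ∧ γ (T + j) = v := by
  obtain ⟨j, _, a2, a3⟩ := desc γ hdec v T (i2 - i) i h1
    (by rw [show i + (i2 - i) = i2 by omega]; exact h2)
  exact ⟨j, by omega, a3⟩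

/-- Membership in the multiset attached to a state. -/
def smem (γ : ℤ → ℤ) (q k' : ℕ) (T a v : ℤ) : Prop :=
  (∃ i : ℕ, i < q ∧ γ (T + i) = v) ∨ (a + 1 ≤ v ∧ v ≤ a + k')

lemma contig_up (γ : ℤ → ℤ) (hdec : ∀ j, γ j - 1 ≤ γ (j + 1)) (q k' : ℕ) (hq : 1 ≤ q) (T a : ℤ)
    (h1 : a ≤ γ T) (h2 : γ (T + (q - 1 : ℕ)) ≤ a + k' + 1) (h0 : smem γ q k' T a 0) (v : ℤ) (hv : 1 ≤ v)
    (h : smem γ q k' T a v) : smem γ q k' T a (v - 1) := by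
  have key : v - 1 ≤ a → smem γ q k' T a (v - 1) := by
    intro hva
    rcases h0 with ⟨j, hj, e⟩ | h0
    · obtain ⟨i, hi, ei⟩ := desc2 γ hdec (v - 1) T 0 j (by omega) (by simp; omega) (by omega)
      exact Or.inl ⟨i, by omega, ei⟩
    · omega
  rcases h with ⟨i, hi, e⟩ | h
  · rcases le_or_gt (γ (T + (q - 1 : ℕ))) (v - 1) with h3 | h3
    · obtain ⟨j, hj, ej⟩ := desc2 γ hdec (v - 1) T i (q - 1) (by omega) (by omega) h3
      exact Or.inl ⟨j, by omega, ej⟩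
    · rcases le_or_gt (v - 1) a with h4 | h4
      · exact key h4
      · exact Or.inr ⟨by omega, by omega⟩
  · rcases le_or_gt (v - 1) a with h4 | h4
    · exact key h4
    · exact Or.inr ⟨by omega, by omega⟩

lemma contig_down (γ : ℤ → ℤ) (hdec : ∀ j, γ j - 1 ≤ γ (j + 1)) (q k' : ℕ) (hq : 1 ≤ q) (T a : ℤ)
    (h1 : a ≤ γ T) (h2 : γ (T + (q - 1 : ℕ)) ≤ a + k' + 1) (h0 : smem γ q k' T a 0) (v : ℤ) (hv : v ≤ -1)
    (h : smem γ q k' T a v) : smem γ q k' T a (v + 1) := by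
  have key : a + k' < v + 1 → smem γ q k' T a (v + 1) := by
    intro hva
    rcases h0 with ⟨j, hj, e⟩ | h0
    · obtain ⟨i, hi, ei⟩ := desc2 γ hdec (v + 1) T j (q - 1) (by omega) (by omega) (by omega)
      exact Or.inl ⟨i, by omega, ei⟩
    · omega
  rcases h with ⟨i, hi, e⟩ | h
  · rcases le_or_gt (v + 1) (γ T) with h3 | h3
    · obtain ⟨j, hj, ej⟩ := desc2 γ hdec (v + 1) T 0 i (by omega) (by simpa using h3) (by omega)
      exact Or.inl ⟨j, by omega, ej⟩
    · rcases le_or_gt (v + 1) (a + k') with h4 | h4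
      · exact Or.inr ⟨by omega, by omega⟩
      · exact key h4
  · rcases le_or_gt (v + 1) (a + k') with h4 | h4
    · exact Or.inr ⟨by omega, by omega⟩
    · exact key h4

/-- Index set and values of the multiset attached to a state. -/
def sidx (q k' : ℕ) : Finset (ℕ ⊕ ℕ) := (range q).disjSum (range k')
def sval (γ : ℤ → ℤ) (T a : ℤ) : ℕ ⊕ ℕ → ℤ := Sum.elim (fun i => γ (T + i)) (fun i => a + 1 + i)

lemma psum_eq (γ : ℤ → ℤ) (q k' : ℕ) (φ : ℤ → ℤ) (T a : ℤ) :
    psum γ q k' φ T a = ∑ x ∈ sidx q k', φ (sval γ T a x) := by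
  simp [psum, sidx, sval, sum_disjSum]

lemma smem_iff (γ : ℤ → ℤ) (q k' : ℕ) (T a v : ℤ) :
    smem γ q k' T a v ↔ ∃ x ∈ sidx q k', sval γ T a x = v := by
  constructor
  · rintro (⟨i, hi, e⟩ | h)
    · exact ⟨Sum.inl i, by simp [sidx, hi], by simpa [sval] using e⟩
    · refine ⟨Sum.inr (v - a - 1).toNat, ?_, ?_⟩
      · simp only [sidx, inr_mem_disjSum, mem_range]; omega
      · simp only [sval, Sum.elim_inr]; omega
  · rintro ⟨x | x, hx, e⟩
    · exact Or.inl ⟨x, by simpa [sidx] using hx, by simpa [sval] using e⟩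
    · simp only [sidx, inr_mem_disjSum, mem_range] at hx
      simp only [sval, Sum.elim_inr] at e
      exact Or.inr ⟨by omega, by omega⟩

/-- The counting function. -/
def ge (t : ℤ) : ℤ → ℤ := fun v => if t ≤ v then 1 else 0

lemma psum_ge (γ : ℤ → ℤ) (q k' : ℕ) (t : ℤ) (T a : ℤ) :
    psum γ q k' (ge t) T a = #((sidx q k').filter (fun x => t ≤ sval γ T a x)) := by
  rw [psum_eq]; simp [ge]

lemma sidx_card (q k' : ℕ) : #(sidx q k') = q + k' := by simp [sidx, card_disjSum]

lemma c0_c1 (γ : ℤ → ℤ) (q k' : ℕ) (T a : ℤ) : psum γ q k' (ge 1) T a ≤ psum γ q k' (ge 0) T a := by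
  rw [psum_eq, psum_eq]
  apply sum_le_sum; intro x _; unfold ge; split_ifs <;> omega

lemma c0_c1' (γ : ℤ → ℤ) (q k' : ℕ) (T a : ℤ) (h : smem γ q k' T a 0) :
    psum γ q k' (ge 1) T a + 1 ≤ psum γ q k' (ge 0) T a := by
  obtain ⟨x, hx, e⟩ := (smem_iff _ _ _ _ _ _).1 h
  rw [psum_eq, psum_eq, Int.add_one_le_iff]
  apply sum_lt_sum
  · intro x _; unfold ge; split_ifs <;> omega
  · exact ⟨x, hx, by simp [e, ge]⟩

lemma zero_of_lt (γ : ℤ → ℤ) (q k' : ℕ) (T a : ℤ)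
    (h : psum γ q k' (ge 1) T a < psum γ q k' (ge 0) T a) : smem γ q k' T a 0 := by
  by_contra hno
  rw [smem_iff] at hno
  push Not at hno
  apply h.ne
  rw [psum_eq, psum_eq]
  apply sum_congr rfl
  intro x hx
  have := hno x hx
  unfold ge; split_ifs <;> omega

/-- From a good state with the right counts to the desired inequalities. -/
lemma good_final (γ : ℤ → ℤ) (hdec : ∀ j, γ j - 1 ≤ γ (j + 1)) (q k' : ℕ) (hq : 1 ≤ q) (T a : ℤ)
    (h1 : a ≤ γ T) (h2 : γ (T + (q - 1 : ℕ)) ≤ a + k' + 1) (l : ℤ) (hl0 : 0 ≤ l)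
    (hl : l < k' + q) (hc1 : psum γ q k' (ge 1) T a ≤ l) (hc0 : l < psum γ q k' (ge 0) T a) :
    psum γ q k' (fun v => max v 0) T a ≤ qpos (k' + q) l ∧
    psum γ q k' (fun v => max (-v) 0) T a ≤ qneg (k' + q) l := by
  have hz := zero_of_lt γ q k' T a (by omega)
  have hup := contig_up γ hdec q k' hq T a h1 h2 hz
  have hdn := contig_down γ hdec q k' hq T a h1 h2 hz
  simp only [smem_iff] at hup hdn
  constructor
  · have key := (contig_sum (sval γ T a) _ ((sidx q k').filter (fun x => 1 ≤ sval γ T a x)) rfl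
      (fun i hi => (mem_filter.1 hi).2)
      (by
        intro i hi h2
        obtain ⟨j, hj, e⟩ := hup _ (mem_filter.1 hi).2 ⟨i, (mem_filter.1 hi).1, rfl⟩
        exact ⟨j, mem_filter.2 ⟨hj, by omega⟩, e⟩)).1
    rw [psum_ge] at hc1
    set n := #((sidx q k').filter (fun x => 1 ≤ sval γ T a x))
    rw [psum_eq]
    have e : ∑ x ∈ sidx q k', max (sval γ T a x) 0
        = ∑ x ∈ (sidx q k').filter (fun x => 1 ≤ sval γ T a x), sval γ T a x := by
      rw [sum_filter]; apply sum_congr rfl; intro x _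
      split_ifs with h
      · exact max_eq_left (by omega)
      · exact max_eq_right (by omega)
    rw [e]
    have := qpos_of_le (k' + q) l hl0 (by push_cast; omega)
    have : (n:ℤ) * (n + 1) ≤ l * (l + 1) := by nlinarith
    linarith
  · have key := (contig_sum (fun x => - sval γ T a x) _ ((sidx q k').filter (fun x => ¬ 0 ≤ sval γ T a x)) rfl
      (fun i hi => by have := (mem_filter.1 hi).2; omega)
      (by
        intro i hi h2
        obtain ⟨j, hj, e⟩ := hdn _ (by omega) ⟨i, (mem_filter.1 hi).1, rfl⟩
        exact ⟨j, mem_filter.2 ⟨hj, by omega⟩, by omega⟩)).1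
    rw [psum_ge] at hc0
    have hsp := card_filter_add_card_filter_not (s := sidx q k') (fun x => 0 ≤ sval γ T a x)
    rw [sidx_card] at hsp
    set n := #((sidx q k').filter (fun x => ¬ 0 ≤ sval γ T a x))
    rw [psum_eq]
    have e : ∑ x ∈ sidx q k', max (- sval γ T a x) 0
        = ∑ x ∈ (sidx q k').filter (fun x => ¬ 0 ≤ sval γ T a x), - sval γ T a x := by
      rw [sum_filter]; apply sum_congr rfl; intro x _
      split_ifs with h
      · exact max_eq_right (by omega)
      · exact max_eq_left (by omega)
    rw [e]
    have := qneg_of_le (k' + q) l hl0 (by push_cast; omega)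
    push_cast at this
    have hn : (n : ℤ) ≤ k' + q - l - 1 := by omega
    have : (n:ℤ) * (n + 1) ≤ (k' + q - l - 1) * (k' + q - l) := by
      have : 0 ≤ (n:ℤ) := by omega
      nlinarith
    linarith

lemma good_succ (γ : ℤ → ℤ) (hdec : ∀ j, γ j - 1 ≤ γ (j + 1)) (q k' : ℕ)
    (hper : ∀ j, γ (j + q) = γ j + (k' + 1)) (T a : ℤ) (h1 : a ≤ γ T) (h2 : γ (T - 1) ≤ a) :
    ∃ T' a' : ℤ, a' ≤ γ T' ∧ γ (T' - 1) ≤ a' ∧ T' + a' = T + a + 1 ∧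
      psum γ q k' (ge 1) T' a' ≤ psum γ q k' (ge 0) T a := by
  have hex : ∃ n : ℕ, a + 1 - n ≤ γ (T + n) := ⟨q, by rw [hper]; omega⟩
  classical
  obtain ⟨n, hn, hmin⟩ : ∃ n : ℕ, a + 1 - n ≤ γ (T + n) ∧ n ≤ q ∧ ∀ m < n, ¬ (a + 1 - m ≤ γ (T + m)) :=
    ⟨Nat.find hex, Nat.find_spec hex, Nat.find_min' hex (by rw [hper]; omega), fun m hm => Nat.find_min hex hm⟩
  obtain ⟨hnq, hmin⟩ := hmin
  have heq : ∀ i : ℕ, i < n → γ (T + i) = a - i := by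
    intro i hi
    have := hmin i hi
    have := dec_nat γ hdec T i
    omega
  refine ⟨T + n, a + 1 - n, hn, ?_, by ring, ?_⟩
  · rcases n with _ | n
    · simp; omega
    · have := heq n (by omega)
      have e : T + ((n + 1 : ℕ) : ℤ) - 1 = T + n := by push_cast; ring
      rw [e, this]; push_cast; omega
  · rw [psum_succ γ q k' hper (ge 1) T a n heq]
    have hc := c0_c1 γ q k' T a
    by_cases hz : smem γ q k' T a 0
    · have := c0_c1' γ q k' T a hz
      have : ge 1 (a + 1 + k') ≤ 1 := by unfold ge; split_ifs <;> omega
      have : 0 ≤ ge 1 (a + 1 - n) := by unfold ge; split_ifs <;> omega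
      omega
    · have : ge 1 (a + 1 + k') ≤ ge 1 (a + 1 - n) := by
        unfold ge
        split_ifs with c1 c2 <;> try omega
        exfalso; apply hz
        rcases lt_or_ge a 0 with h | h
        · exact Or.inr ⟨by omega, by omega⟩
        · refine Or.inl ⟨a.toNat, by omega, ?_⟩
          rw [heq _ (by omega)]; omega
      omega

lemma comb_core (γ : ℤ → ℤ) (hdec : ∀ j, γ j - 1 ≤ γ (j + 1)) (q k' : ℕ) (hq : 1 ≤ q)
    (hper : ∀ j, γ (j + q) = γ j + (k' + 1)) (l : ℤ) (hl0 : 0 ≤ l) (hl : l < k' + q) :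
    ∃ T a : ℤ, psum γ q k' (fun v => max v 0) T a ≤ qpos (k' + q) l ∧
      psum γ q k' (fun v => max (-v) 0) T a ≤ qneg (k' + q) l := by
  by_contra hno
  have hgood : ∀ T a : ℤ, a ≤ γ T → γ (T - 1) ≤ a → psum γ q k' (ge 1) T a ≤ l →
      psum γ q k' (ge 0) T a ≤ l := by
    intro T a h1 h2 h3
    by_contra h4
    apply hno
    refine ⟨T, a, good_final γ hdec q k' hq T a h1 ?_ l hl0 hl h3 (by omega)⟩
    have := hper (T - 1)
    have e : T + ((q - 1 : ℕ) : ℤ) = T - 1 + q := by omega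
    rw [e, this]; omega
  -- start
  obtain ⟨j, hj⟩ : ∃ j, γ j ≤ γ (j + 1) := by
    by_contra hn
    push Not at hn
    have : ∀ n : ℕ, γ (0 + n) ≤ γ 0 := by
      intro n
      induction n with
      | zero => simp
      | succ n ih =>
        have := hn (0 + n)
        push_cast; rw [← add_assoc]; omega
    have h2 := hper 0
    have := this q
    omega
  have hperm := per_mul γ q (k' + 1) hper
  have hbd : ∀ i : ℕ, i < q → γ (j + 1 + i) ≤ γ (j + 1) + k' + 1 + q := by
    intro i hi
    have := dec_nat γ hdec (j + 1 + i) (q - i)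
    have e : j + 1 + (i:ℤ) + ((q - i : ℕ) : ℤ) = j + 1 + q := by omega
    rw [e, hper] at this
    omega
  obtain ⟨s, hs1, hs2⟩ : ∃ s : ℕ, γ (j + 1) + k' + 1 + q ≤ s ∧ γ j + k' ≤ s :=
    ⟨(max (γ (j + 1) + k' + 1 + q) (γ j + k')).toNat, by omega, by omega⟩
  have hks : (s : ℤ) ≤ (k' + 1) * s := by nlinarith
  have hstart : ∃ T a : ℤ, a ≤ γ T ∧ γ (T - 1) ≤ a ∧ psum γ q k' (ge 1) T a ≤ l := by
    refine ⟨j + 1 + q * (-s), γ j + (k' + 1) * (-s), ?_, ?_, ?_⟩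
    · rw [hperm]; omega
    · have e : j + 1 + (q:ℤ) * (-s) - 1 = j + q * (-s) := by ring
      rw [e, hperm]
    · have : psum γ q k' (ge 1) (j + 1 + q * (-s)) (γ j + (k' + 1) * (-s)) = 0 := by
        unfold psum
        rw [sum_eq_zero, sum_eq_zero, add_zero]
        · intro i hi
          have := mem_range.1 hi
          unfold ge; rw [if_neg]; nlinarith
        · intro i hi
          have h1 := hbd i (mem_range.1 hi)
          have e : j + 1 + (q:ℤ) * (-s) + i = j + 1 + i + q * (-s) := by ring
          rw [e, hperm]
          unfold ge; rw [if_neg]; nlinarith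
      omega
  obtain ⟨T0, a0, g1, g2, g3⟩ := hstart
  have hall : ∀ n : ℕ, ∃ T a : ℤ, a ≤ γ T ∧ γ (T - 1) ≤ a ∧ psum γ q k' (ge 1) T a ≤ l ∧
      T + a = T0 + a0 + n := by
    intro n
    induction n with
    | zero => exact ⟨T0, a0, g1, g2, g3, by simp⟩
    | succ n ih =>
      obtain ⟨T, a, h1, h2, h3, h4⟩ := ih
      obtain ⟨T', a', e1, e2, e3, e4⟩ := good_succ γ hdec q k' hper T a h1 h2
      exact ⟨T', a', e1, e2, e4.trans (hgood T a h1 h2 h3), by push_cast; omega⟩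
  -- boundedness
  have hbound : ∀ T a : ℤ, a ≤ γ T → γ (T - 1) ≤ a → psum γ q k' (ge 1) T a ≤ l →
      T + a ≤ q * (2 * q + |γ 0| + 1) + 1 + q := by
    intro T a h1 h2 h3
    have haq : a ≤ q - 1 := by
      by_contra hc
      have : psum γ q k' (ge 1) T a = q + k' := by
        unfold psum
        rw [sum_congr rfl (g := fun _ => (1:ℤ)), sum_congr rfl (s₁ := range k') (g := fun _ => (1:ℤ))]
        · simp
        · intro i hi
          unfold ge; rw [if_pos]; omega
        · intro i hi
          have := mem_range.1 hi
          have := dec_nat γ hdec T i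
          unfold ge; rw [if_pos]; omega
      omega
    set t := T - 1 with ht
    have d1 := Int.emod_add_mul_ediv t q
    have a1 := Int.emod_nonneg t (b := (q:ℤ)) (by omega)
    have a2 := Int.emod_lt_of_pos t (b := (q:ℤ)) (by omega)
    have h5 := hperm (t / q) (t % q)
    rw [d1] at h5
    have h6 := dec_nat γ hdec 0 (t % q).toNat
    have e : (0:ℤ) + ((t % q).toNat : ℤ) = t % q := by omega
    rw [e] at h6
    have h7 : -|γ 0| ≤ γ 0 := neg_abs_le _
    have h8 : ((k':ℤ) + 1) * (t / q) ≤ 2 * q + |γ 0| := by omega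
    have h9 : t / q ≤ 2 * q + |γ 0| := by
      rcases le_or_gt (t / q) 0 with h | h
      · have := abs_nonneg (γ 0); omega
      · nlinarith
    have : (q:ℤ) * (t / q) ≤ q * (2 * q + |γ 0|) := by nlinarith
    nlinarith
  obtain ⟨T, a, h1, h2, h3, h4⟩ := hall (q * (2 * q + |γ 0| + 1) + 1 + q - (T0 + a0) + 1).toNat
  have := hbound T a h1 h2 h3
  omega

lemma comb (γ : ℤ → ℤ) (hdec : ∀ j, γ j - 1 ≤ γ (j + 1)) (q k' : ℕ) (hq : 1 ≤ q)
    (hper : ∀ j, γ (j + q) = γ j + (k' + 1)) (l : ℤ) :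
    ∃ T l' : ℤ, ∑ i ∈ Ico (0:ℤ) q, max (γ (T + i)) 0 + qpos k' l' ≤ qpos (k' + q) l ∧
      ∑ i ∈ Ico (0:ℤ) q, max (-γ (T + i)) 0 + qneg k' l' ≤ qneg (k' + q) l := by
  have conv : ∀ (φ : ℤ → ℤ) (T a : ℤ), psum γ q k' φ T a =
      ∑ i ∈ Ico (0:ℤ) q, φ (γ (T + i)) + ∑ i ∈ range k', φ (a + k' - i) := by
    intro φ T a
    unfold psum
    congr 1
    · have : Ico (0:ℤ) q = (range q).image (fun i : ℕ => (i : ℤ)) := by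
        ext x; simp only [mem_Ico, mem_image, mem_range]
        constructor
        · intro h; exact ⟨x.toNat, by omega, by omega⟩
        · rintro ⟨i, hi, rfl⟩; omega
      rw [this, sum_image (fun x _ y _ h => by simpa using h)]
    · rw [← sum_range_reflect]
      apply sum_congr rfl
      intro i hi
      have := mem_range.1 hi
      congr 1; omega
  have core : ∀ l : ℤ, 0 ≤ l → l < k' + q → ∃ T l' : ℤ,
      ∑ i ∈ Ico (0:ℤ) q, max (γ (T + i)) 0 + qpos k' l' ≤ qpos (k' + q) l ∧
      ∑ i ∈ Ico (0:ℤ) q, max (-γ (T + i)) 0 + qneg k' l' ≤ qneg (k' + q) l := by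
    intro l h0 h1
    obtain ⟨T, a, p1, p2⟩ := comb_core γ hdec q k' hq hper l h0 h1
    rw [conv] at p1 p2
    refine ⟨T, a + k', p1, ?_⟩
    have : qneg k' (a + k') = ∑ i ∈ range k', max (-(a + k' - (i:ℤ))) 0 :=
      sum_congr rfl fun i _ => by congr 1; ring
    rw [this]; exact p2
  rcases lt_or_ge l 0 with h | h
  · obtain ⟨T, l', p1, p2⟩ := core 0 le_rfl (by omega)
    have z := qpos_of_le (k' + q) 0 le_rfl (by omega)
    have := qpos_nonneg (k' + q) l
    have := qneg_anti (k' + q) h.le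
    exact ⟨T, l', by omega, by omega⟩
  rcases lt_or_ge l (k' + q) with h' | h'
  · exact core l h h'
  · obtain ⟨T, l', p1, p2⟩ := core (k' + q - 1) (by omega) (by omega)
    have z := qneg_of_le (k' + q) (k' + q - 1) (by omega) (by push_cast; omega)
    have z2 : qneg (k' + q) (k' + q - 1) = 0 := by
      have : ((k' + q : ℕ) : ℤ) - (k' + q - 1) - 1 = 0 := by push_cast; ring
      rw [this] at z; omega
    have := qneg_nonneg (k' + q) l
    have := qpos_mono (k' + q) (a := k' + q - 1) (b := l) (by omega)
    exact ⟨T, l', by omega, by omega⟩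


/-- Inductive description of quasi-banana graphs inside an ambient multiplicity function. -/
inductive QB {V : Type*} [DecidableEq V] (M : V → V → ℕ) : Finset V → V → Prop
  | base (v : V) : QB M {v} v
  | step (S : Finset V) (ρ : V) (C : Finset V) (ρ' : V) : QB M S ρ → Disjoint S C → ρ' ∈ C →
      (∀ w ∈ C, ∀ u ∈ C, u ≠ w → M w u = 1) → (∀ w ∈ C, M w ρ = #S + 1) →
      (∀ w ∈ C, ∀ u ∈ S, u ≠ ρ → M w u = 0) → QB M (S ∪ C) ρ'

lemma QB.mem {V : Type*} [DecidableEq V] {M : V → V → ℕ} {S : Finset V} {ρ : V} (h : QB M S ρ) :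
    ρ ∈ S := by
  cases h with
  | base v => simp
  | step S ρ C ρ' _ _ h => exact mem_union_right _ h

def Win {V : Type*} (M : V → V → ℕ) (S : Finset V) (D : V → ℤ) : Prop :=
  ∃ f : V → ℤ, ∀ w ∈ S, 0 ≤ D w - ∑ u ∈ S, (M w u : ℤ) * (f w - f u)

lemma Win.mono {V : Type*} {M : V → V → ℕ} {S : Finset V} {D D' : V → ℤ} (h : Win M S D)
    (hD : ∀ v ∈ S, D v ≤ D' v) : Win M S D' := by
  obtain ⟨f, hf⟩ := h
  exact ⟨f, fun w hw => by have := hf w hw; have := hD w hw; linarith⟩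

lemma sumC {V : Type*} [DecidableEq V] {M : V → V → ℕ} {S C : Finset V} {ρ : V} (hρ : ρ ∈ S)
    (h1 : ∀ w ∈ C, ∀ u ∈ C, u ≠ w → M w u = 1) (h2 : ∀ w ∈ C, M w ρ = #S + 1)
    (h3 : ∀ w ∈ C, ∀ u ∈ S, u ≠ ρ → M w u = 0) (hdis : Disjoint S C) (f : V → ℤ) (w : V) (hw : w ∈ C) :
    ∑ u ∈ S ∪ C, (M w u : ℤ) * (f w - f u) =
      ((#S + 1 : ℕ) + #C) * (f w - f ρ) - ∑ u ∈ C, (f u - f ρ) := by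
  rw [sum_union hdis, sum_eq_single ρ, h2 w hw]
  · have : ∑ u ∈ C, (M w u : ℤ) * (f w - f u) = ∑ u ∈ C, (f w - f ρ - (f u - f ρ)) := by
      apply sum_congr rfl
      intro u hu
      by_cases e : u = w
      · subst e; simp
      · rw [h1 w hw u hu e]; push_cast; ring
    rw [this, sum_sub_distrib, sum_const, nsmul_eq_mul]
    ring
  · intro u hu hne; rw [h3 w hw u hu hne]; simp
  · intro h; exact absurd hρ h

lemma sumS {V : Type*} [DecidableEq V] {M : V → V → ℕ} (hsymm : ∀ u v, M u v = M v u)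
    {S C : Finset V} {ρ : V} (h2 : ∀ w ∈ C, M w ρ = #S + 1)
    (h3 : ∀ w ∈ C, ∀ u ∈ S, u ≠ ρ → M w u = 0) (hdis : Disjoint S C) (f : V → ℤ) (w : V) (hw : w ∈ S) :
    ∑ u ∈ S ∪ C, (M w u : ℤ) * (f w - f u) =
      ∑ u ∈ S, (M w u : ℤ) * (f w - f u) - if w = ρ then (#S + 1 : ℕ) * ∑ u ∈ C, (f u - f ρ) else 0 := by
  rw [sum_union hdis]
  split_ifs with e
  · subst e
    rw [sub_eq_add_neg]; congr 1
    rw [mul_sum, ← sum_neg_distrib]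
    apply sum_congr rfl
    intro u hu
    rw [hsymm, h2 u hu]; ring
  · rw [sub_zero, add_eq_left]
    apply sum_eq_zero
    intro u hu
    rw [hsymm, h3 u hu w hw e]; simp

lemma winStep {V : Type*} [DecidableEq V] {M : V → V → ℕ} (hsymm : ∀ u v, M u v = M v u)
    {S C : Finset V} {ρ : V} (hρ : ρ ∈ S)
    (h1 : ∀ w ∈ C, ∀ u ∈ C, u ≠ w → M w u = 1) (h2 : ∀ w ∈ C, M w ρ = #S + 1)
    (h3 : ∀ w ∈ C, ∀ u ∈ S, u ≠ ρ → M w u = 0) (hdis : Disjoint S C) (D : V → ℤ) :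
    Win M (S ∪ C) D ↔ ∃ φ : V → ℤ, (∀ w ∈ C, 0 ≤ D w - ((#S + 1 : ℕ) + #C) * φ w + ∑ u ∈ C, φ u) ∧
      Win M S (fun v => D v + if v = ρ then (#S + 1 : ℕ) * ∑ u ∈ C, φ u else 0) := by
  constructor
  · rintro ⟨f, hf⟩
    refine ⟨fun w => f w - f ρ, ?_, f, ?_⟩
    · intro w hw
      have := hf w (mem_union_right _ hw)
      rw [sumC hρ h1 h2 h3 hdis f w hw] at this
      linarith
    · intro w hw
      have := hf w (mem_union_left _ hw)
      rw [sumS hsymm h2 h3 hdis f w hw] at this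
      simp only; linarith
  · rintro ⟨φ, hφ, g, hg⟩
    set f : V → ℤ := fun w => if w ∈ S then g w else g ρ + φ w with hf
    have hfS : ∀ w ∈ S, f w = g w := fun w hw => by simp [hf, hw]
    have hfC : ∀ w ∈ C, f w - f ρ = φ w := fun w hw => by
      have : w ∉ S := disjoint_right.1 hdis hw
      simp [hf, this, hρ]
    have hsum : ∑ u ∈ C, (f u - f ρ) = ∑ u ∈ C, φ u := sum_congr rfl hfC
    refine ⟨f, ?_⟩
    intro w hw
    rcases mem_union.1 hw with h | h
    · rw [sumS hsymm h2 h3 hdis f w h, hsum]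
      have e : ∑ u ∈ S, (M w u : ℤ) * (f w - f u) = ∑ u ∈ S, (M w u : ℤ) * (g w - g u) :=
        sum_congr rfl fun u hu => by rw [hfS w h, hfS u hu]
      have := hg w h
      rw [e]; simp only at this; linarith
    · rw [sumC hρ h1 h2 h3 hdis f w h, hsum, hfC w h]
      have := hφ w h
      linarith

lemma sum_Ico_id (q : ℕ) : 2 * ∑ i ∈ Ico (0:ℤ) q, i = q * (q - 1) := by
  have : Ico (0:ℤ) q = (range q).image (fun i : ℕ => (i : ℤ)) := by
    ext x; simp only [mem_Ico, mem_image, mem_range]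
    constructor
    · intro h; exact ⟨x.toNat, by omega, by omega⟩
    · rintro ⟨i, hi, rfl⟩; omega
  rw [this, sum_image (fun x _ y _ h => by simpa using h)]
  clear this
  induction q with
  | zero => simp
  | succ q ih => rw [sum_range_succ, mul_add, ih]; push_cast; ring

/-- Upper bound on ranks. -/
theorem rank_upper {V : Type*} [DecidableEq V] {M : V → V → ℕ} (hsymm : ∀ u v, M u v = M v u)
    {S : Finset V} {ρ : V} (h : QB M S ρ) : ∀ (l : ℤ) (D : V → ℤ), ∃ E : V → ℤ, (∀ v, 0 ≤ E v) ∧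
      ∑ v ∈ S, E v ≤ qpos (#S) l + max 0 (∑ v ∈ S, D v + 1 - l * #S) ∧
      ¬ Win M S (fun v => D v - E v) := by
  induction h with
  | base v =>
    intro l D
    refine ⟨fun _ => max (D v + 1) 0, fun _ => le_max_right _ _, ?_, ?_⟩
    · simp only [sum_singleton, card_singleton, qpos, sum_range_one]
      push_cast; omega
    · rintro ⟨f, hf⟩
      have := hf v (mem_singleton_self v)
      simp at this
  | step S ρ C ρ' hQ hdis hρ' h1 h2 h3 ih =>
    intro l D
    have hρ := hQ.mem
    have hq : 1 ≤ #C := card_pos.2 ⟨_, hρ'⟩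
    obtain ⟨γ, hdec, hper, hrot⟩ := rot_lemma C ⟨_, hρ'⟩ (#S + 1) (by omega) D
    obtain ⟨T, l', p1, p2⟩ := comb γ hdec (#C) (#S) hq (by intro j; rw [hper]; push_cast; ring) l
    obtain ⟨f, p, hp, hfp⟩ := hrot T
    obtain ⟨E', hE'0, hE'1, hE'2⟩ := ih l' (fun v => D v + if v = ρ then (#S + 1 : ℕ) * ∑ u ∈ C, f u else 0)
    have hsumD' : ∑ v ∈ S, (D v + if v = ρ then ((#S + 1 : ℕ) : ℤ) * ∑ u ∈ C, f u else 0) =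
        ∑ v ∈ S, D v + (#S + 1) * ∑ u ∈ C, f u := by
      rw [sum_add_distrib, sum_ite_eq' S ρ, if_pos hρ]; push_cast; ring
    rw [hsumD'] at hE'1
    set E : V → ℤ := fun v => if v ∈ S then E' v else max (γ (T + p v)) 0 with hE
    have hES : ∀ v ∈ S, E v = E' v := fun v hv => by simp [hE, hv]
    have hEC : ∀ v ∈ C, E v = max (γ (T + p v)) 0 := fun v hv => by
      have : v ∉ S := disjoint_right.1 hdis hv
      simp [hE, this]
    refine ⟨E, ?_, ?_, ?_⟩
    · intro v; simp only [hE]; split_ifs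
      · exact hE'0 v
      · exact le_max_right _ _
    · rw [sum_union hdis, sum_union hdis, sum_congr rfl hES, sum_congr rfl hEC,
        hp.sum (fun i => max (γ (T + i)) 0), card_union_of_disjoint hdis]
      have e1 : ∑ i ∈ Ico (0:ℤ) (#C), max (γ (T + i)) 0 - ∑ i ∈ Ico (0:ℤ) (#C), max (-γ (T + i)) 0
          = ∑ w ∈ C, D w - (#S + 1) * ∑ u ∈ C, f u - #C * #S - ∑ i ∈ Ico (0:ℤ) (#C), i := by
        rw [← sum_sub_distrib, ← hp.sum (fun i => i),
          ← hp.sum (fun i => max (γ (T + i)) 0 - max (-γ (T + i)) 0)]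
        have : ∀ w ∈ C, max (γ (T + p w)) 0 - max (-γ (T + p w)) 0 =
            D w - ((#S:ℤ) + 1 + #C) * f w + (∑ u ∈ C, f u - #S) - p w := by
          intro w hw
          have e := hfp w hw
          push_cast at e
          have : max (γ (T + p w)) 0 - max (-γ (T + p w)) 0 = γ (T + p w) := by omega
          rw [this]; linarith
        rw [sum_congr rfl this, sum_sub_distrib, sum_add_distrib, sum_sub_distrib, sum_const,
          ← mul_sum, nsmul_eq_mul]
        ring
      have e2 := sum_Ico_id #C
      have e3 := qpos_sub_qneg #S l'
      have e4 := qpos_sub_qneg (#S + #C) l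
      push_cast at e4
      push_cast
      rcases le_total 0 (∑ v ∈ S, D v + (#S + 1) * ∑ u ∈ C, f u + 1 - l' * #S) with hm | hm
      · rw [max_eq_right hm] at hE'1
        have hm2 := le_max_right 0 (∑ v ∈ S, D v + ∑ v ∈ C, D v + 1 - l * ((#S:ℤ) + #C))
        nlinarith
      · rw [max_eq_left hm] at hE'1
        have hm2 := le_max_left 0 (∑ v ∈ S, D v + ∑ v ∈ C, D v + 1 - l * ((#S:ℤ) + #C))
        linarith
    · intro hW
      rw [winStep hsymm hρ h1 h2 h3 hdis] at hW
      obtain ⟨φ, hφ, hWS⟩ := hW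
      have hd := dhar C (#S + 1) (fun w => D w - (((#S + 1 : ℕ) : ℤ) + #C) * f w + ∑ u ∈ C, f u - E w) p
        (fun w => φ w - f w) hp
        (by
          intro w hw
          rw [hfp w hw, hEC w hw]
          have := le_max_left (γ (T + p w)) 0
          linarith)
        (by
          intro w hw
          have := hφ w hw
          simp only [sum_sub_distrib] at this ⊢
          linarith)
      rw [sum_sub_distrib] at hd
      apply hE'2
      apply hWS.mono
      intro v hv
      rw [hES v hv]
      split_ifs
      · have : ((#S + 1 : ℕ) : ℤ) * ∑ u ∈ C, φ u ≤ ((#S + 1 : ℕ) : ℤ) * ∑ u ∈ C, f u :=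
          mul_le_mul_of_nonneg_left (by linarith) (by positivity)
        linarith
      · linarith

lemma exists_T (γ : ℤ → ℤ) (hdec : ∀ j, γ j - 1 ≤ γ (j + 1)) (q k' : ℕ) (hq : 1 ≤ q)
    (hper : ∀ j, γ (j + q) = γ j + (k' + 1)) :
    ∃ T : ℤ, ∀ i : ℤ, 0 ≤ i → i < q → γ (T + i) ≤ 0 ∧ 0 ≤ γ (T + i) + k' + i := by
  have hperm := per_mul γ q (k' + 1) hper
  obtain ⟨T, hT, hmin⟩ : ∃ T, -(k':ℤ) ≤ γ T ∧ ∀ j, -(k':ℤ) ≤ γ j → T ≤ j := by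
    apply Int.exists_least_of_bdd
    · refine ⟨-(q * (k' + |γ 0| + (k' + 1) + q)), ?_⟩
      intro t ht
      have d1 := Int.emod_add_mul_ediv t q
      have a1 := Int.emod_nonneg t (b := (q:ℤ)) (by omega)
      have a2 := Int.emod_lt_of_pos t (b := (q:ℤ)) (by omega)
      have h5 := hperm (t / q) (t % q)
      rw [d1] at h5
      have h6 := dec_nat γ hdec (t % q) (q - t % q).toNat
      have e : t % q + ((q - t % q).toNat : ℤ) = 0 + q := by omega
      rw [e, hper] at h6
      have h7 : γ 0 ≤ |γ 0| := le_abs_self _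
      have h8 : -(k' + |γ 0| + (k' + 1) + q) ≤ ((k':ℤ) + 1) * (t / q) := by omega
      have h9 : -(k' + |γ 0| + (k' + 1) + q) ≤ (t / q) := by
        rcases le_or_gt 0 (t / q) with h | h
        · have := abs_nonneg (γ 0); omega
        · nlinarith
      have : (q:ℤ) * -(k' + |γ 0| + (k' + 1) + q) ≤ q * (t / q) := by nlinarith
      linarith
    · refine ⟨0 + q * |γ 0|, ?_⟩
      rw [hperm]
      have h7 : -|γ 0| ≤ γ 0 := neg_abs_le _
      have := abs_nonneg (γ 0)
      nlinarith
  refine ⟨T, fun i h0 h1 => ⟨?_, ?_⟩⟩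
  · by_contra hc
    have := hper (T + i - q)
    rw [sub_add_cancel] at this
    have := hmin (T + i - q) (by omega)
    omega
  · have := dec_nat γ hdec T i.toNat
    have e : ((i.toNat : ℕ) : ℤ) = i := by omega
    rw [e] at this; omega

/-- Lower bound on ranks. -/
theorem rank_lower {V : Type*} [DecidableEq V] {M : V → V → ℕ} (hsymm : ∀ u v, M u v = M v u)
    {S : Finset V} {ρ : V} (h : QB M S ρ) : ∀ (l : ℤ) (E : V → ℤ), (∀ v, 0 ≤ E v) →
      ∑ v ∈ S, E v < qpos (#S + 1) (l + 1) →
      Win M S (fun v => (if v = ρ then l * (#S + 1) else 0) - E v) := by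
  induction h with
  | base v =>
    intro l E hE hlt
    simp only [sum_singleton, card_singleton, qpos, sum_range_succ, sum_range_zero] at hlt
    have := hE v
    refine ⟨fun _ => 0, ?_⟩
    intro w hw
    rw [mem_singleton] at hw
    subst hw
    simp only [if_true, card_singleton, sub_self, mul_zero, sum_const_zero]
    push_cast at *
    omega
  | step S ρ C ρ' hQ hdis hρ' h1 h2 h3 ih =>
    intro l E hE hlt
    have hρ := hQ.mem
    have hρ'S : ρ' ∉ S := disjoint_right.1 hdis hρ'
    have hq : 1 ≤ #C := card_pos.2 ⟨_, hρ'⟩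
    have hcard := card_union_of_disjoint hdis
    obtain ⟨γ, hdec, hper, hrot⟩ := rot_lemma C ⟨_, hρ'⟩ (#S + 1) (by omega) (fun w => l - E w)
    obtain ⟨T, hT⟩ := exists_T γ hdec (#C) (#S) hq (by intro j; rw [hper]; push_cast; ring)
    obtain ⟨f, p, hp, hfp⟩ := hrot T
    have hsumφ : ∑ u ∈ C, ((if u = ρ' then l else 0) + f u) = l + ∑ u ∈ C, f u := by
      rw [sum_add_distrib, sum_ite_eq' C ρ', if_pos hρ']
    rw [winStep hsymm hρ h1 h2 h3 hdis]
    refine ⟨fun w => (if w = ρ' then l else 0) + f w, ?_, ?_⟩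
    · intro w hw
      have e := hfp w hw
      have := (hT (p w) (hp.1 w hw).1 (hp.1 w hw).2).2
      rw [hsumφ, hcard]
      push_cast at e ⊢
      split_ifs <;> linarith
    · rw [hsumφ]
      have hlt' : ∑ v ∈ S, E v < qpos (#S + 1) (l + ∑ u ∈ C, f u + 1) := by
        rw [sum_union hdis, hcard] at hlt
        set l' := l + ∑ u ∈ C, f u with hl'
        set N : ℤ := (#S : ℤ) + 1 + #C with hN
        let z : V → ℤ := fun w => l' - N * f w - #S - p w
        have hz : ∀ w ∈ C, max (z w) 0 ≤ E w := by
          intro w hw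
          have e := hfp w hw
          have := (hT (p w) (hp.1 w hw).1 (hp.1 w hw).2).1
          apply max_le _ (hE w)
          simp only [z]
          push_cast at e
          rw [← hN] at e
          linarith
        have hinj : Set.InjOn z C := by
          intro u hu v hv e
          have a1 := hp.1 u hu
          have a2 := hp.1 v hv
          simp only [z] at e
          have e2 : N * (f u - f v) = p v - p u := by linarith
          have e3 : f u - f v = 0 := by
            by_contra hne
            rcases lt_or_gt_of_ne hne with h | h
            · have : N * (f u - f v) ≤ N * (-1) := mul_le_mul_of_nonneg_left (by omega) (by omega)
              omega
            · have : N * 1 ≤ N * (f u - f v) := mul_le_mul_of_nonneg_left (by omega) (by omega)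
              omega
          rw [e3, mul_zero] at e2
          exact hp.2 u hu v hv (by omega)
        let b : ℕ → ℤ := fun j => l' + 1 - j
        have hinjb : Set.InjOn b (range (#S + 1)) := by
          intro i _ j _ e
          simp only [b] at e; omega
        have hdisj : Disjoint (C.image z) ((range (#S + 1)).image b) := by
          rw [disjoint_left]
          intro x hx hx'
          obtain ⟨w, hw, rfl⟩ := mem_image.1 hx
          obtain ⟨j, hj, e⟩ := mem_image.1 hx'
          have hj := mem_range.1 hj
          have a1 := hp.1 w hw
          simp only [z, b] at e
          have e2 : N * f w = j - #S - 1 - p w := by linarith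
          rcases lt_or_ge (f w) 0 with h | h
          · have : N * (f w) ≤ N * (-1) := mul_le_mul_of_nonneg_left (by omega) (by omega)
            omega
          · have : 0 ≤ N * (f w) := mul_nonneg (by omega) h
            omega
        have hkey := distinct_pos (#S + #C + 1) (l + 1) (C.image z ∪ (range (#S + 1)).image b)
          (by
            rw [card_union_of_disjoint hdisj, card_image_of_injOn hinj, card_image_of_injOn hinjb, card_range]
            ring)
          (by
            rw [sum_union hdisj, sum_image hinj, sum_image hinjb]
            simp only [z, b, sum_sub_distrib, sum_const, ← mul_sum, nsmul_eq_mul, card_range]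
            have e1 := hp.sum (fun i => i)
            have e2 := sum_Ico_id #C
            have e3 : 2 * ∑ i ∈ range (#S + 1), (i:ℤ) = (#S + 1) * #S := by
              have := qneg_of_le (#S + 1) 0 le_rfl (by positivity)
              simp only [qneg] at this
              have e : ∑ i ∈ range (#S + 1), max ((i:ℤ) - 0) 0 = ∑ i ∈ range (#S + 1), (i:ℤ) :=
                sum_congr rfl fun i _ => by rw [sub_zero]; exact max_eq_left (by positivity)
              rw [e] at this
              push_cast at this
              linarith
            rw [e1]
            push_cast
            rw [hl', hN]
            linarith)
        rw [sum_union hdisj, sum_image hinj, sum_image hinjb] at hkey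
        have hle := sum_le_sum hz
        have : ∑ x ∈ range (#S + 1), max (b x) 0 = qpos (#S + 1) (l' + 1) := rfl
        rw [this] at hkey
        linarith
      apply (ih (l + ∑ u ∈ C, f u) E hE hlt').mono
      intro v hv
      have : v ≠ ρ' := fun e => hρ'S (e ▸ hv)
      simp only [this, if_false]
      push_cast
      split_ifs <;> linarith

theorem edge_count {V : Type*} [DecidableEq V] {M : V → V → ℕ} (hsymm : ∀ u v, M u v = M v u)
    (hloop : ∀ v, M v v = 0)
    {S : Finset V} {ρ : V} (h : QB M S ρ) :
    ∑ u ∈ S, ∑ v ∈ S, (M u v : ℤ) = #S * (#S - 1) + 2 * (#S - 1) := by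
  induction h with
  | base v => simp [hloop]
  | step S ρ C ρ' hQ hdis hρ' h1 h2 h3 ih =>
    have hρ := hQ.mem
    have a1 : ∀ w ∈ C, ∑ u ∈ S, (M w u : ℤ) = #S + 1 := by
      intro w hw
      rw [sum_eq_single ρ, h2 w hw]
      · push_cast; rfl
      · intro u hu hne; rw [h3 w hw u hu hne]; rfl
      · intro h; exact absurd hρ h
    have a2 : ∀ w ∈ C, ∑ u ∈ C, (M w u : ℤ) = #C - 1 := by
      intro w hw
      have : ∀ u ∈ C, (M w u : ℤ) = 1 - if u = w then 1 else 0 := by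
        intro u hu
        split_ifs with e
        · subst e; simp [hloop]
        · rw [h1 w hw u hu e]; rfl
      rw [sum_congr rfl this, sum_sub_distrib, sum_ite_eq' C w, if_pos hw]
      simp
    have a3 : ∑ u ∈ S, ∑ v ∈ C, (M u v : ℤ) = #C * (#S + 1) := by
      rw [sum_comm]
      have : ∀ w ∈ C, ∑ u ∈ S, (M u w : ℤ) = #S + 1 := by
        intro w hw; rw [← a1 w hw]; exact sum_congr rfl fun u _ => by rw [hsymm]
      rw [sum_congr rfl this]; simp
    rw [sum_union hdis, card_union_of_disjoint hdis]
    simp only [sum_union hdis, sum_add_distrib]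
    rw [ih, a3, sum_congr rfl a1, sum_congr rfl a2]
    simp only [sum_const, nsmul_eq_mul]
    push_cast; ring


lemma winnable_iff (G : Multigraph V) (D : V → ℤ) : G.Winnable D ↔ Win G.mult univ D := by
  constructor
  · rintro ⟨E, hE, f, rfl⟩
    exact ⟨f, fun w _ => hE w⟩
  · rintro ⟨f, hf⟩
    exact ⟨D - G.laplacian f, fun w => hf w (mem_univ w), f, rfl⟩

lemma level_card (q : ℕ → ℕ) (ℓ : V → ℕ × ℕ) (m : ℕ) (hinj : Function.Injective ℓ)
    (h1 : ∀ v : V, (ℓ v).1 ≤ m ∧ 1 ≤ (ℓ v).2 ∧ (ℓ v).2 ≤ qbSize q (ℓ v).1)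
    (h2 : ∀ i j : ℕ, i ≤ m → 1 ≤ j → j ≤ qbSize q i → ∃ v, ℓ v = (i, j)) (i : ℕ) (hi : i ≤ m) :
    #(univ.filter (fun v => (ℓ v).1 = i)) = qbSize q i := by
  have : (univ.filter (fun v => (ℓ v).1 = i)).image (fun v => (ℓ v).2) = Icc 1 (qbSize q i) := by
    ext x
    simp only [mem_image, mem_filter, mem_univ, true_and, mem_Icc]
    constructor
    · rintro ⟨v, rfl, rfl⟩; exact (h1 v).2
    · rintro ⟨a, b⟩
      obtain ⟨v, hv⟩ := h2 i x hi a b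
      exact ⟨v, by rw [hv], by rw [hv]⟩
  have hc := congrArg Finset.card this
  rw [card_image_of_injOn] at hc
  · simpa using hc
  · intro u hu v hv e
    simp only [coe_filter, mem_univ, true_and, Set.mem_setOf_eq] at hu hv
    exact hinj (Prod.ext (by rw [hu, hv]) e)

lemma qb_of_labelling (G : Multigraph V) (m : ℕ) (q : ℕ → ℕ) (ℓ : V → ℕ × ℕ)
    (h : G.IsQBLabelling m q ℓ) : ∃ ρ, QB G.mult univ ρ := by
  obtain ⟨hq, hinj, h1, h2, h3⟩ := h
  have key : ∀ i, i ≤ m → ∃ ρ, ℓ ρ = (i, 1) ∧ QB G.mult (univ.filter (fun v => (ℓ v).1 ≤ i)) ρ ∧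
      #(univ.filter (fun v => (ℓ v).1 ≤ i)) = ∑ j ∈ Icc 1 i, q j + 1 := by
    intro i
    induction i with
    | zero =>
      intro _
      obtain ⟨ρ, hρ⟩ := h2 0 1 (by omega) le_rfl (by simp [qbSize])
      have e : univ.filter (fun v => (ℓ v).1 ≤ 0) = {ρ} := by
        ext v
        simp only [mem_filter, mem_univ, true_and, mem_singleton]
        constructor
        · intro hv
          have hv0 : (ℓ v).1 = 0 := by omega
          have := (h1 v).2
          rw [hv0] at this
          simp only [qbSize, if_true] at this
          apply hinj
          rw [hρ]
          exact Prod.ext hv0 (by simp only; omega)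
        · rintro rfl; rw [hρ]
      refine ⟨ρ, hρ, ?_, ?_⟩
      · rw [e]; exact QB.base ρ
      · rw [e]; simp
    | succ i ih =>
      intro hi
      obtain ⟨ρ, hρ, hQ, hcard⟩ := ih (by omega)
      have hs : qbSize q (i + 1) = q (i + 1) := by simp [qbSize]
      obtain ⟨ρ', hρ'⟩ := h2 (i + 1) 1 hi le_rfl (by rw [hs]; exact hq (i + 1) (by omega) hi)
      have e : univ.filter (fun v => (ℓ v).1 ≤ i + 1) =
          univ.filter (fun v => (ℓ v).1 ≤ i) ∪ univ.filter (fun v => (ℓ v).1 = i + 1) := by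
        ext v; simp only [mem_union, mem_filter, mem_univ, true_and]; omega
      have hdis : Disjoint (univ.filter (fun v => (ℓ v).1 ≤ i)) (univ.filter (fun v => (ℓ v).1 = i + 1)) := by
        rw [disjoint_left]
        intro v; simp only [mem_filter, mem_univ, true_and]; omega
      refine ⟨ρ', hρ', ?_, ?_⟩
      · rw [e]
        refine QB.step _ ρ _ ρ' hQ hdis (by simp [hρ']) ?_ ?_ ?_
        · intro w hw u hu hne
          simp only [mem_filter, mem_univ, true_and] at hw hu
          rw [h3 w u hne.symm, if_pos (by omega)]
        · intro w hw
          simp only [mem_filter, mem_univ, true_and] at hw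
          have hne : w ≠ ρ := by rintro rfl; rw [hρ] at hw; simp at hw
          rw [h3 w ρ hne, hw, hρ, hcard]
          simp only
          rw [if_neg (by omega), if_neg (by omega), if_pos (by simp)]
        · intro w hw u hu hne
          simp only [mem_filter, mem_univ, true_and] at hw hu
          have hne' : w ≠ u := by rintro rfl; omega
          have : ¬ ((ℓ u).1 = i ∧ (ℓ u).2 = 1) := by
            rintro ⟨a, b⟩
            apply hne; apply hinj; rw [hρ]; exact Prod.ext a b
          rw [h3 w u hne', if_neg (by omega), if_neg (by omega), if_neg (by omega)]
      · rw [e, card_union_of_disjoint hdis, hcard, level_card q ℓ m hinj h1 h2 (i + 1) hi, hs,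
          sum_Icc_succ_top (by omega)]
        ring
  obtain ⟨ρ, _, hQ, _⟩ := key m le_rfl
  have e : univ.filter (fun v => (ℓ v).1 ≤ m) = univ := by
    ext v; simp [(h1 v).1]
  rw [e] at hQ
  exact ⟨ρ, hQ⟩

lemma rank_mem_lt (G : Multigraph V) (v0 : V) (D E : V → ℤ) (hE : ∀ v, 0 ≤ E v)
    (hW : ¬ Win G.mult univ (fun v => D v - E v)) (s : ℤ)
    (hs : ∀ E : V → ℤ, Multigraph.Effective E → Multigraph.degree E = s →
      G.Winnable (fun w => D w - E w)) : s < ∑ v, E v := by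
  by_contra hle
  push Not at hle
  have := hs (fun v => E v + if v = v0 then s - ∑ u, E u else 0)
    (by intro v; have := hE v; simp only; split_ifs <;> omega)
    (by simp only [Multigraph.degree]; rw [sum_add_distrib, sum_ite_eq' univ v0]; simp)
  rw [winnable_iff] at this
  apply hW
  apply this.mono
  intro v _
  split_ifs <;> omega

lemma rank_eq_of (G : Multigraph V) (v0 : V) (D E : V → ℤ) (hE : ∀ v, 0 ≤ E v) (r : ℤ)
    (hW : ¬ Win G.mult univ (fun v => D v - E v)) (hr : ∑ v, E v ≤ r + 1)
    (hs : ∀ E : V → ℤ, Multigraph.Effective E → Multigraph.degree E = r →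
      G.Winnable (fun w => D w - E w)) : G.rank D = r := by
  unfold Multigraph.rank
  apply IsGreatest.csSup_eq
  refine ⟨hs, ?_⟩
  intro s hs'
  have := rank_mem_lt G v0 D E hE hW s hs'
  omega

lemma lt_of_rank_eq (G : Multigraph V) (v0 : V) (D E : V → ℤ) (hE : ∀ v, 0 ≤ E v) (r : ℤ)
    (hW : ¬ Win G.mult univ (fun v => D v - E v)) (hr : G.rank D = r) : r < ∑ v, E v := by
  apply rank_mem_lt G v0 D E hE hW
  have hmem : G.rank D ∈ {r : ℤ | ∀ E : V → ℤ, Multigraph.Effective E → Multigraph.degree E = r →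
      G.Winnable (fun w => D w - E w)} := by
    unfold Multigraph.rank
    apply Int.csSup_mem
    · refine ⟨-1, ?_⟩
      intro E' hE' hd
      have : 0 ≤ Multigraph.degree E' := sum_nonneg fun v _ => hE' v
      omega
    · exact ⟨∑ v, E v, fun s hs => (rank_mem_lt G v0 D E hE hW s hs).le⟩
  rw [hr] at hmem
  exact hmem

lemma gon_eq (G : Multigraph V) (ρ : V) (hQ : QB G.mult univ ρ) (r d l L c : ℤ)
    (hc : 0 ≤ c) (hd : d = L * (Fintype.card V + 1) - c)
    (h1 : r + c < qpos (Fintype.card V + 1) (L + 1))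
    (h2 : qpos (Fintype.card V) l ≤ r) (h3 : qpos (Fintype.card V) l + d - l * Fintype.card V ≤ r) :
    G.gonality r = d := by
  have hup : ∀ D : V → ℤ, ∃ E : V → ℤ, (∀ v, 0 ≤ E v) ∧
      ∑ v, E v ≤ qpos (Fintype.card V) l + max 0 (∑ v, D v + 1 - l * Fintype.card V) ∧
      ¬ Win G.mult univ (fun v => D v - E v) := fun D => rank_upper G.symm hQ l D
  unfold Multigraph.gonality
  apply IsLeast.csInf_eq
  constructor
  · have hsum : ∑ v, (if v = ρ then d else 0) = d := by simp
    refine ⟨fun v => if v = ρ then d else 0, ?_, hsum⟩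
    obtain ⟨E, hE, hE1, hE2⟩ := hup (fun v => if v = ρ then d else 0)
    rw [hsum] at hE1
    refine rank_eq_of G ρ _ E hE r hE2 (by omega) ?_
    intro E' hE' hdeg
    rw [winnable_iff]
    have hlow := rank_lower G.symm hQ L (fun v => E' v + if v = ρ then c else 0)
      (by intro v; have := hE' v; split_ifs <;> omega)
      (by
        rw [sum_add_distrib, sum_ite_eq' univ ρ, if_pos (mem_univ _)]
        have : ∑ v, E' v = r := hdeg
        rw [this]; exact h1)
    apply hlow.mono
    intro v _
    simp only [card_univ]
    split_ifs <;> linarith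
  · rintro d' ⟨D, hD, rfl⟩
    obtain ⟨E, hE, hE1, hE2⟩ := hup D
    have := lt_of_rank_eq G ρ D E hE r hE2 hD
    have hdd : Multigraph.degree D = ∑ v, D v := rfl
    rw [hdd]
    omega

lemma two_genus (G : Multigraph V) (ρ : V) (hQ : QB G.mult univ ρ) :
    2 * G.genus = Fintype.card V * (Fintype.card V - 1) := by
  have h := edge_count G.symm G.loopless hQ
  rw [card_univ] at h
  unfold Multigraph.genus
  push_cast
  rw [h]
  obtain ⟨t, ht⟩ := Int.even_mul_pred_self (Fintype.card V : ℤ)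
  rw [ht]
  omega

/-- The gonality sequence of a quasi-banana graph with first gonality `k`
and genus `g = C(k,2)`: for `1 ≤ r < g`, `gon_r(G) = l(k+1) - h` where `1 ≤ l ≤ k-2` and
`0 ≤ h ≤ l` are determined by `r = l(l+3)/2 - h`; for `r ≥ g`, `gon_r(G) = g + r`. -/
theorem stmt2 (G : Multigraph V) (hG : G.Connected) (hQB : G.IsQuasiBanana)
    (k : ℕ) (hk : G.gonality 1 = (k : ℤ)) (hg : G.genus = (Nat.choose k 2 : ℤ))
    (r : ℤ) (hr : 1 ≤ r) :
    (r < G.genus →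
      ∀ l h : ℤ, 1 ≤ l → l ≤ (k : ℤ) - 2 → 0 ≤ h → h ≤ l →
        2 * r = l * (l + 3) - 2 * h →
        G.gonality r = l * ((k : ℤ) + 1) - h) ∧
    (G.genus ≤ r → G.gonality r = G.genus + r) := by
  obtain ⟨m, q, ℓ, hL⟩ := hQB
  obtain ⟨ρ, hQ⟩ := qb_of_labelling G m q ℓ hL
  have hgen := two_genus G ρ hQ
  set n := Fintype.card V with hn
  have hn1 : 1 ≤ n := Fintype.card_pos_iff.2 ⟨ρ⟩
  constructor
  · intro _ l h hl1 hlk hh0 hhl hrl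
    have hk3 : 3 ≤ k := by omega
    have hchoose : 2 * (Nat.choose k 2 : ℤ) = k * (k - 1) := by
      have h1 := Nat.choose_two_right k
      have h2 := Nat.div_mul_cancel (Nat.even_mul_pred_self k).two_dvd
      rw [← h1] at h2
      have h3 : ((k - 1 : ℕ) : ℤ) = k - 1 := by omega
      rw [← h3]
      exact_mod_cast (by linarith : 2 * Nat.choose k 2 = k * (k - 1))
    have hkn : (k : ℤ) = n := by
      rw [hg] at hgen
      have e : ((k : ℤ) - n) * (k + n - 1) = 0 := by linarith
      rcases mul_eq_zero.1 e with h | h <;> omega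
    rw [hkn] at hlk ⊢
    have a1 := qpos_of_le n l (by omega) (by omega)
    have a2 := qpos_of_le (n + 1) (l + 1) (by omega) (by push_cast; omega)
    refine gon_eq G ρ hQ r _ l l h hh0 rfl ?_ ?_ ?_
    · linarith
    · linarith
    · linarith
  · intro hgr
    have hg0 : 0 ≤ G.genus := by
      rw [hg]; positivity
    have a1 := qpos_of_ge n (n - 1) le_rfl
    have a2 := qpos_of_ge (n + 1) (G.genus + r + n + 1) (by push_cast; omega)
    push_cast at a2
    refine gon_eq G ρ hQ r _ (n - 1) (G.genus + r + n)
      ((G.genus + r + n) * (n + 1) - (G.genus + r)) ?_ (by ring) ?_ ?_ ?_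
    · nlinarith
    · linarith
    · linarith
    · linarith
end
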